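/- Let K be a number field, B ⊆ K an order, S ⊆ B a multiplicative submonoid with 0 ∉ S, and R = BS⁻¹ the localization of B at S. Assume the group of units Rˣ is infinite. Let τ : SL₂(R) → ℂ be an extremal normalized character. Then either (1) τ factors through a finite quotient of SL₂(R), or (2) τ(g) = 0 for every g ∈ SL₂(R) not in the center of SL₂(R) (i.e. τ is induced from the center). -/

import Mathlib

/-!
The ring `R` is a localization of an order (`OrderLoc`) and has a unit `ω` of infinite order. A
character `τ` is the vector state of a GNS representation (`TRep`): a Hilbert space with commuting
left and right unitary actions `π`, `ρ` of `SL₂(R)` and a cyclic trace vector `ξ`. Let `pA e12` be the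
projection onto the closure of the union of the spaces of vectors fixed by `e12 (n! R)`, the
congruence subgroups of the upper unipotent group. The proof distinguishes whether `pA e12 ξ`
vanishes.

If `pA e12 ξ = 0`, then `τ` vanishes off the center (`TRep.tr_eq_zero`). First, `τ` vanishes on upper
triangular matrices acting on the unipotent group by a unit different from `1` (`tr_upper`). For `g`
with nonzero lower left entry, let `t` be upper triangular with the first column of `g` as an
eigenvector. Then `g⁻¹ t^m g t^(-m)` is upper triangular, and `τ` vanishes there for `m ≠ 0`. So the
vectors `π(t^i g t^(-i)) ξ` are pairwise orthogonal and have the same inner product `τ(g)` with `ξ`,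
and Bessel's inequality gives `τ(g) = 0`.

If `pA e12 ξ ≠ 0`, then `τ` factors through a finite quotient (`TRep.factors`). By Bessel's inequality,
some opposite unipotent group `vy y`, a conjugate of the upper one by `e21 y`, has a projection not
orthogonal to `pA e12` (`exists_pA_vy_ne`). The two projections commute (`pA_comm_pA`), and
Kaplansky's inequality for projections (`kaplansky`) yields a nonzero vector fixed by congruence
subgroups of both groups (`exists_fixed`). By `conj_El_le` it is fixed by a normal subgroup `N` which
contains some `El R j`, the group generated by elementary matrices with entries in `jR`. Extremality
makes `N` act trivially (`normal_trivial`). Modulo `N` the congruence subgroup of level `j²` is central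
(`comm_mem`), so by extremality it acts by scalars. The transfer into the center, together with a
torsion bound for homomorphisms trivial on elementary matrices (`pow_eq_one_of_killsEl`, by Mennicke
symbols), bounds the exponent of the image (`exists_exponent`). Hence only finitely many scalars occur
and the kernel has finite index.

The arithmetic input is that conjugation by `SL₂(K)` is continuous for the groups `El R j`
(`contK`) and preserves their double cosets inside small congruence subgroups (`comK`). The latter
rests on `exists_good_modulus` (Dirichlet's theorem gives integers `a'` for which the exponent of
`(R/a'R)ˣ` is controlled one prime at a time) and on `exists_cyclic_quotient` (unimodular rows can
be moved so that one residue ring is a quotient of `ℤ`).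
-/

open scoped ComplexOrder

/-- A normalized character on a group: positive definite, conjugation invariant,
and taking the value `1` at the identity. -/
def IsCharacter {Γ : Type*} [Group Γ] (φ : Γ → ℂ) : Prop :=
  (∀ (n : ℕ) (lam : Fin n → ℂ) (g : Fin n → Γ),
      0 ≤ ∑ i, ∑ j, lam i * (starRingEnd ℂ) (lam j) * φ ((g j)⁻¹ * g i)) ∧
  (∀ g h : Γ, φ (h * g * h⁻¹) = φ g) ∧
  φ 1 = 1

/-- An extremal normalized character: an extreme point (over `ℝ`) of the convex
set of normalized characters. -/
def IsExtremalCharacter {Γ : Type*} [Group Γ] (τ : Γ → ℂ) : Prop :=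
  τ ∈ Set.extremePoints ℝ {φ : Γ → ℂ | IsCharacter φ}

/-- A function on a group factors through a finite quotient if it is constant
on the cosets of some finite-index normal subgroup. -/
def FactorsThroughFiniteQuotient {Γ : Type*} [Group Γ] (φ : Γ → ℂ) : Prop :=
  ∃ N : Subgroup Γ, N.Normal ∧ N.FiniteIndex ∧ ∀ g h : Γ, g⁻¹ * h ∈ N → φ g = φ h

set_option linter.unusedSectionVars false
set_option linter.unusedSimpArgs false

/-! ### Localizations of orders: residue rings and stable range -/

section

/-- `R` is a localization of an order: it has a subring `A` which is finitely generated over `ℤ`,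
and every element of `R` is a fraction `a / s` with `a, s ∈ A` and `s` a unit of `R`. The
multiplicative set itself is not recorded. -/
class OrderLoc (R : Type*) [CommRing R] : Prop where
  exists_order : ∃ A : Subalgebra ℤ R, (Subalgebra.toSubmodule A).FG ∧
    ∀ x : R, ∃ s ∈ A, IsUnit s ∧ s * x ∈ A

theorem exists_inv_mem_of_finite {Q : Type*} [CommRing Q] (T : Subring Q) [Finite T]
    {s : Q} (hs : s ∈ T) (hu : IsUnit s) : ∃ t ∈ T, s * t = 1 := by
  have hinj : Function.Injective (fun t : T => (⟨s, hs⟩ : T) * t) := by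
    intro a b hab
    have := congrArg Subtype.val hab
    exact Subtype.ext (hu.mul_left_cancel this)
  obtain ⟨t, ht⟩ := (Finite.injective_iff_surjective.1 hinj) 1
  exact ⟨t, t.2, congrArg Subtype.val ht⟩

theorem subring_eq_top_of_finite {Q : Type*} [CommRing Q] (T : Subring Q) [Finite T]
    (h : ∀ x : Q, ∃ s ∈ T, IsUnit s ∧ s * x ∈ T) : T = ⊤ := by
  rw [eq_top_iff]
  rintro x -
  obtain ⟨s, hs, hu, hx⟩ := h x
  obtain ⟨t, ht, h1⟩ := exists_inv_mem_of_finite T hs hu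
  have : x = t * (s * x) := by rw [← mul_assoc, mul_comm t s, h1, one_mul]
  rw [this]
  exact T.mul_mem ht hx

section
variable (R : Type*) [CommRing R] [OrderLoc R]

/-- The ring `R/NR` is the image of `A/NA`, hence has at most `N ^ n` elements if the order `A` has
`n` generators over `ℤ`. -/
theorem OrderLoc.exists_card_le : ∃ n : ℕ, ∀ N : ℕ, 1 ≤ N →
    Finite (R ⧸ Ideal.span {(N : R)}) ∧ Nat.card (R ⧸ Ideal.span {(N : R)}) ≤ N ^ n := by
  obtain ⟨A, hfg, hA⟩ := OrderLoc.exists_order (R := R)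
  obtain ⟨n, g, hg⟩ := Submodule.fg_iff_exists_fin_generating_family.1 hfg
  refine ⟨n, fun N hN => ?_⟩
  have : NeZero N := ⟨by omega⟩
  set Q := R ⧸ Ideal.span {(N : R)} with hQ
  let π : R →+* Q := Ideal.Quotient.mk _
  have hN0 : ((N : ℕ) : Q) = 0 := by
    have : π (N : R) = 0 := Ideal.Quotient.eq_zero_iff_mem.2 (Ideal.mem_span_singleton_self _)
    simpa using this
  let f : (Fin n → ZMod N) → Q := fun c => ∑ i, ((c i).val : Q) * π (g i)
  have hcast : ∀ z : ℤ, (((z : ZMod N).val : ℕ) : Q) = (z : Q) := by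
    intro z
    have h1 : ((((z : ZMod N).val : ℕ) : ℤ) : ZMod N) = (z : ZMod N) := by simp
    rw [ZMod.intCast_eq_intCast_iff_dvd_sub] at h1
    obtain ⟨k, hk⟩ := h1
    have h2 : (z : Q) - (((z : ZMod N).val : ℕ) : Q) = (N : Q) * (k : Q) := by
      have h3 := congrArg (Int.cast : ℤ → Q) hk; rw [Int.cast_mul, Int.cast_natCast] at h3; push_cast at h3; exact h3
    rw [hN0, zero_mul, sub_eq_zero] at h2
    exact h2.symm
  let T : Subring Q := A.toSubring.map π
  have hTf : ∀ x ∈ T, ∃ c, f c = x := by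
    rintro x ⟨a, ha, rfl⟩
    have ha' : a ∈ Submodule.span ℤ (Set.range g) := by rw [hg]; exact ha
    obtain ⟨c, rfl⟩ := (Submodule.mem_span_range_iff_exists_fun ℤ).1 ha'
    refine ⟨fun i => (c i : ZMod N), ?_⟩
    simp only [f, hcast, map_sum]
    refine Finset.sum_congr rfl fun i _ => ?_
    simp
  have : Finite T := by
    have : (T : Set Q) ⊆ Set.range f := fun x hx => hTf x hx
    exact ((Set.finite_range f).subset this).to_subtype
  have hT : T = ⊤ := by
    refine subring_eq_top_of_finite T fun x => ?_
    obtain ⟨r, rfl⟩ := Ideal.Quotient.mk_surjective x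
    obtain ⟨s, hs, hu, hsr⟩ := hA r
    exact ⟨π s, ⟨s, hs, rfl⟩, hu.map π, ⟨s * r, hsr, map_mul _ _ _⟩⟩
  have hsurj : Function.Surjective f := fun x => hTf x (by rw [hT]; trivial)
  have := Finite.of_surjective f hsurj
  refine ⟨this, ?_⟩
  calc Nat.card Q ≤ Nat.card (Fin n → ZMod N) := Nat.card_le_card_of_surjective f hsurj
    _ = N ^ n := by simp

variable {R}

theorem OrderLoc.finite_quot_nat {N : ℕ} (hN : N ≠ 0) : Finite (R ⧸ Ideal.span {(N : R)}) := by
  obtain ⟨n, hn⟩ := OrderLoc.exists_card_le R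
  exact (hn N (by omega)).1

theorem OrderLoc.exists_nat_dvd [IsDomain R] {x : R} (hx : x ≠ 0) :
    ∃ N : ℕ, N ≠ 0 ∧ x ∣ (N : R) := by
  obtain ⟨A, hfg, hA⟩ := OrderLoc.exists_order (R := R)
  obtain ⟨s, hs, hu, hsx⟩ := hA x
  have : Module.Finite ℤ A := Module.Finite.iff_fg.2 hfg
  have hint : IsIntegral ℤ (⟨s * x, hsx⟩ : A) := Algebra.IsIntegral.isIntegral _
  have hint' : IsIntegral ℤ (s * x) := hint.map A.val
  obtain ⟨r, hr, hd⟩ := hint'.isAlgebraic.exists_nonzero_dvd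
    (mem_nonZeroDivisors_of_ne_zero (mul_ne_zero hu.ne_zero hx))
  refine ⟨r.natAbs, by simpa using hr, ?_⟩
  have h1 : x ∣ ((r : ℤ) : R) := (Dvd.intro_left s rfl).trans (by simpa using hd)
  have h2 : (r : R) ∣ ((r.natAbs : ℤ) : R) := by
    exact_mod_cast (Int.castRingHom R).map_dvd (Int.dvd_natAbs.2 (dvd_refl r))
  simpa using h1.trans h2

theorem OrderLoc.finite_quot [IsDomain R] {x : R} (hx : x ≠ 0) : Finite (R ⧸ Ideal.span {x}) := by
  obtain ⟨N, hN, h⟩ := OrderLoc.exists_nat_dvd hx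
  have := OrderLoc.finite_quot_nat (R := R) hN
  exact Finite.of_surjective _ (Ideal.Quotient.factor_surjective
    (Ideal.span_singleton_le_span_singleton.2 h))

/-- Units are roots of unity modulo a nonzero integer. -/
theorem OrderLoc.exists_unit_pow (u : Rˣ) {N : ℕ} (hN : N ≠ 0) :
    ∃ k : ℕ, 1 ≤ k ∧ ∀ l : ℕ, (N : R) ∣ ((u ^ (k * l) : Rˣ) : R) - 1 := by
  have := OrderLoc.finite_quot_nat (R := R) hN
  let π := Ideal.Quotient.mk (Ideal.span {(N : R)})
  obtain ⟨k, hk, h⟩ := isOfFinOrder_iff_pow_eq_one.1 (isOfFinOrder_of_finite (Units.map π.toMonoidHom u))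
  refine ⟨k, hk, fun l => ?_⟩
  rw [← Ideal.mem_span_singleton, ← Ideal.Quotient.eq_zero_iff_mem]
  have h2 := congrArg Units.val (congrArg (· ^ l) h)
  simp only [Units.val_pow_eq_pow_val, Units.coe_map, one_pow, Units.val_one, ← pow_mul] at h2
  simp only [map_sub, map_pow, map_one, Units.val_pow_eq_pow_val, sub_eq_zero]
  exact h2

/-- A finite ring has stable range one, by the Chinese remainder theorem for its maximal ideals. -/
theorem exists_isUnit_add_mul {Q : Type*} [CommRing Q] [Finite Q] {a b : Q} (h : IsCoprime a b) :
    ∃ t, IsUnit (b + t * a) := by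
  classical
  obtain ⟨t, ht⟩ := Ideal.exists_forall_sub_mem_ideal
    (I := fun P : MaximalSpectrum Q => P.asIdeal)
    (fun P P' hne => Ideal.isCoprime_of_isMaximal (fun h => hne (MaximalSpectrum.ext h)))
    (fun P => if b ∈ P.asIdeal then 1 else 0)
  refine ⟨t, ?_⟩
  by_contra hu
  obtain ⟨M, hM, hmem⟩ := exists_max_ideal_of_mem_nonunits hu
  have htM := ht ⟨M, hM⟩
  simp only at htM
  by_cases hb : b ∈ M
  · rw [if_pos hb] at htM
    have h1 : t * a ∈ M := by simpa using M.sub_mem hmem hb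
    have h2 : a ∈ M := by
      have := M.sub_mem h1 (M.mul_mem_right a htM)
      have e : t * a - (t - 1) * a = a := by ring
      rwa [e] at this
    obtain ⟨u, v, huv⟩ := h
    exact hM.ne_top ((Ideal.eq_top_iff_one _).2 (huv ▸ M.add_mem (M.mul_mem_left u h2) (M.mul_mem_left v hb)))
  · rw [if_neg hb, sub_zero] at htM
    exact hb (by simpa using M.sub_mem hmem (M.mul_mem_right a htM))

theorem isUnit_mk_iff {R : Type*} [CommRing R] {x y : R} :
    IsUnit (Ideal.Quotient.mk (Ideal.span {x}) y) ↔ IsCoprime y x := by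
  constructor
  · intro h
    obtain ⟨z, hz⟩ := h.exists_right_inv
    obtain ⟨z, rfl⟩ := Ideal.Quotient.mk_surjective z
    rw [← map_mul, ← map_one (Ideal.Quotient.mk _), Ideal.Quotient.eq, Ideal.mem_span_singleton] at hz
    obtain ⟨k, hk⟩ := hz
    exact ⟨z, -k, by linear_combination hk⟩
  · rintro ⟨u, v, h⟩
    refine IsUnit.of_mul_eq_one (Ideal.Quotient.mk _ u) ?_
    rw [← map_mul, ← map_one (Ideal.Quotient.mk _), Ideal.Quotient.eq, Ideal.mem_span_singleton]
    exact ⟨-v, by linear_combination h⟩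

/-- A unimodular row `(a, b)` can be shifted so that `b + t a` is prime to a given `x ≠ 0`, because
the residue ring `R/xR` is finite. -/
theorem OrderLoc.exists_coprime_add [IsDomain R] {a b x : R} (hx : x ≠ 0) (h : IsCoprime a b) :
    ∃ t, IsCoprime (b + t * a) x := by
  have := OrderLoc.finite_quot hx
  obtain ⟨t, ht⟩ := exists_isUnit_add_mul (h.map (Ideal.Quotient.mk (Ideal.span {x})))
  obtain ⟨t, rfl⟩ := Ideal.Quotient.mk_surjective t
  exact ⟨t, isUnit_mk_iff.1 (by simpa using ht)⟩
end

end

/-! ### Exponents of residue rings modulo primes -/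

section

/-- At most `n` maximal ideals lie over a prime `p` as soon as `|R/pR| ≤ p ^ n`. -/
theorem no_many_maximal {R : Type*} [CommRing R] {n p : ℕ} (hp : p.Prime) [Finite (R ⧸ Ideal.span {(p : R)})]
    (hcard : Nat.card (R ⧸ Ideal.span {(p : R)}) ≤ p ^ n)
    (P : Fin (n + 1) → Ideal R) (hP : Function.Injective P) (hmax : ∀ i, (P i).IsMaximal)
    (hmem : ∀ i, (p : R) ∈ P i) : False := by
  have hle : ∀ i, Ideal.span {(p : R)} ≤ P i := fun i =>
    (Ideal.span_singleton_le_iff_mem _).2 (hmem i)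
  have hfin : ∀ i, Finite (R ⧸ P i) := fun i =>
    Finite.of_surjective _ (Ideal.Quotient.factor_surjective (hle i))
  have hpc : ∀ i, p ≤ Nat.card (R ⧸ P i) := by
    intro i
    have := hmax i
    have : Nontrivial (R ⧸ P i) := Ideal.Quotient.nontrivial_iff.2 (hmax i).ne_top
    have hc : CharP (R ⧸ P i) p := by
      rw [CharP.charP_iff_prime_eq_zero hp]
      have := Ideal.Quotient.eq_zero_iff_mem.2 (hmem i)
      simpa using this
    have h2 : (Finset.range p).card ≤ Nat.card (R ⧸ P i) := by
      have := Fintype.ofFinite (R ⧸ P i)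
      rw [Nat.card_eq_fintype_card]
      exact Finset.card_le_card_of_injOn (t := Finset.univ) (fun k : ℕ => (k : R ⧸ P i)) (by simp)
        (fun a ha b hb hab => (CharP.natCast_injOn_Iio (R ⧸ P i) p) (by simpa using ha)
          (by simpa using hb) hab)
    simpa using h2
  let f : R ⧸ Ideal.span {(p : R)} → ∀ i, R ⧸ P i := fun x i => Ideal.Quotient.factor (hle i) x
  have hf : Function.Surjective f := by
    intro y
    choose z hz using fun i => Ideal.Quotient.mk_surjective (y i)
    obtain ⟨r, hr⟩ := Ideal.exists_forall_sub_mem_ideal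
      (I := P) (fun i j hne => by
        have := hmax i
        have := hmax j
        exact Ideal.isCoprime_of_isMaximal (fun h => hne (hP h))) z
    refine ⟨Ideal.Quotient.mk _ r, ?_⟩
    funext i
    simp only [f, Ideal.Quotient.factor_mk]
    rw [← hz i, Ideal.Quotient.eq]
    exact hr i
  have h1 := Nat.card_le_card_of_surjective f hf
  rw [Nat.card_pi] at h1
  have h2 : p ^ (n + 1) ≤ ∏ i, Nat.card (R ⧸ P i) := by
    calc p ^ (n + 1) = ∏ _i : Fin (n + 1), p := by simp
      _ ≤ _ := Finset.prod_le_prod' fun i _ => hpc i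
  have h3 : p ^ n < p ^ (n + 1) := Nat.pow_lt_pow_right hp.one_lt (by omega)
  omega

/-- A finite domain of characteristic `p` with at most `p ^ n` elements is a field with `p ^ f`
elements, and `f ≤ n` implies that `f` divides `n!`. -/
theorem pow_factorial_eq_self {L : Type*} [CommRing L] [IsDomain L] [Finite L] {p n : ℕ}
    (hp : p.Prime) (h0 : (p : L) = 0) (hcard : Nat.card L ≤ p ^ n) (x : L) :
    x ^ (p ^ n.factorial) = x := by
  classical
  have := Fintype.ofFinite L
  let := Fintype.fieldOfDomain L
  obtain ⟨q, hq, f, hqp, hf⟩ := FiniteField.card' L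
  have hcP : CharP L p := (CharP.charP_iff_prime_eq_zero hp).2 h0
  have hqp' : q = p := CharP.eq L hq hcP
  subst hqp'
  have hle : q ^ (f : ℕ) ≤ q ^ n := by
    rw [← hf, ← Nat.card_eq_fintype_card]
    exact hcard
  have hfn : (f : ℕ) ≤ n := (Nat.pow_le_pow_iff_right hp.one_lt).1 hle
  obtain ⟨k, hk⟩ := Nat.dvd_factorial f.pos hfn
  rw [hk, pow_mul, ← hf]
  exact FiniteField.pow_card_pow k _

/-- A uniform exponent for the unit groups of the residue rings `R/pR`. -/
theorem exists_uniform_exponent (R : Type*) [CommRing R] [OrderLoc R] : ∃ F : ℕ, 1 ≤ F ∧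
    ∀ p : ℕ, p.Prime → ∃ N : ℕ,
    ∀ y : R, IsCoprime y (p : R) → (p : R) ∣ y ^ (p ^ N * (p ^ F - 1)) - 1 := by
  obtain ⟨n, hn⟩ := OrderLoc.exists_card_le R
  refine ⟨n.factorial, Nat.factorial_pos n, fun p hp => ?_⟩
  obtain ⟨hfin, hcard⟩ := hn p hp.one_le
  by_cases hpu : IsUnit (p : R)
  · exact ⟨0, fun y _ => hpu.dvd⟩
  set Q := R ⧸ Ideal.span {(p : R)} with hQ
  let π : R →+* Q := Ideal.Quotient.mk _
  have hnt : Nontrivial Q := Ideal.Quotient.nontrivial_iff.2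
    (fun h => hpu (Ideal.span_singleton_eq_top.1 h))
  have hchar : CharP Q p := by
    rw [CharP.charP_iff_prime_eq_zero hp]
    have : π (p : R) = 0 := Ideal.Quotient.eq_zero_iff_mem.2 (Ideal.mem_span_singleton_self _)
    simpa using this
  have hnil : ∀ y : Q, y ^ (p ^ n.factorial) - y ∈ nilradical Q := by
    intro y
    rw [nilradical_eq_sInf, Ideal.mem_sInf]
    intro P hP
    have hP : P.IsPrime := hP
    have hfP : Finite (Q ⧸ P) := Finite.of_surjective _ (Ideal.Quotient.mk_surjective)
    rw [← Ideal.Quotient.eq_zero_iff_mem, map_sub, map_pow, sub_eq_zero]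
    refine pow_factorial_eq_self hp ?_
      ((Nat.card_le_card_of_surjective _ (Ideal.Quotient.mk_surjective (I := P))).trans hcard) _
    rw [← map_natCast (Ideal.Quotient.mk P), CharP.cast_eq_zero Q p, map_zero]
  obtain ⟨N, hN⟩ := IsArtinianRing.isNilpotent_nilradical (R := Q)
  refine ⟨N, fun y hy => ?_⟩
  have hyu : IsUnit (π y) := isUnit_mk_iff.2 hy
  have h0 : (π y ^ (p ^ n.factorial) - π y) ^ (p ^ N) = 0 := by
    have hmem := Ideal.pow_mem_pow (hnil (π y)) N
    rw [hN] at hmem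
    have hz : (π y ^ (p ^ n.factorial) - π y) ^ N = 0 := by simpa using hmem
    exact pow_eq_zero_of_le (Nat.lt_pow_self hp.one_lt).le hz
  rw [← Ideal.mem_span_singleton, ← Ideal.Quotient.eq_zero_iff_mem]
  have : Fact p.Prime := ⟨hp⟩
  rw [sub_pow_char_pow, sub_eq_zero, ← pow_mul] at h0
  have hpos : 1 ≤ p ^ n.factorial := Nat.one_le_pow _ _ hp.pos
  have hsplit : p ^ n.factorial * p ^ N = p ^ N * (p ^ n.factorial - 1) + p ^ N := by
    rw [Nat.mul_sub, mul_one, mul_comm, Nat.sub_add_cancel]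
    exact Nat.le_mul_of_pos_right _ hpos
  rw [hsplit, pow_add] at h0
  have h1 : π y ^ (p ^ N * (p ^ n.factorial - 1)) = 1 :=
    (hyu.pow (p ^ N)).mul_right_cancel (by rw [h0, one_mul])
  change π (y ^ (p ^ N * (p ^ n.factorial - 1)) - 1) = 0
  rw [map_sub, map_pow, map_one, h1, sub_self]

end

/-! ### An integer modulus with controlled unit exponents -/

section

/-- If `p ^ F` is not `1` modulo `ℓ ^ k`, then the `ℓ`-part of `p ^ F - 1` is less than `ℓ ^ k`. -/
theorem exists_dvd_pow_sub {p F ℓ k : ℕ} (hp : p.Prime) (hF : 1 ≤ F) (hℓ : ℓ.Prime)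
    (h : (p : ZMod (ℓ ^ k)) ^ F ≠ 1) :
    ∃ i u, i < k ∧ ¬ ℓ ∣ u ∧ p ^ F - 1 = ℓ ^ i * u := by
  have h1 : 1 < p ^ F := Nat.one_lt_pow (by omega) hp.one_lt
  obtain ⟨i, u, hu, he⟩ := Nat.exists_eq_pow_mul_and_not_dvd (n := p ^ F - 1) (by omega) ℓ hℓ.ne_one
  refine ⟨i, u, ?_, hu, he⟩
  by_contra hik
  push Not at hik
  apply h
  have hd : ℓ ^ k ∣ p ^ F - 1 := he ▸ (pow_dvd_pow ℓ hik).mul_right u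
  have h2 := (ZMod.natCast_eq_zero_iff (p ^ F - 1) (ℓ ^ k)).2 hd
  rw [Nat.cast_sub h1.le, sub_eq_zero] at h2
  simpa using h2

theorem pow_sub_one_dvd {R : Type*} [CommRing R] (y : R) {a b : ℕ} (h : a ∣ b) :
    y ^ a - 1 ∣ y ^ b - 1 := by
  obtain ⟨c, rfl⟩ := h
  rw [pow_mul]
  simpa only [one_pow] using sub_dvd_pow_sub_pow (y ^ a) 1 c

/-- One integer `m` such that, prime by prime, residue classes `c` modulo `A` contain integers `a'`
for which the exponent of `(R/a'R)ˣ` divides `m` up to a factor prime to `ℓ`. Here `a' = p p'` is a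
product of two primes from arithmetic progressions, chosen such that the `F`-th powers of `p` and
`p'` are not `1` modulo a fixed power of `ℓ`. -/
theorem exists_good_modulus (R : Type*) [CommRing R] [OrderLoc R] : ∃ m : ℕ, 1 ≤ m ∧
    ∀ ℓ : ℕ, ℓ.Prime → ∀ A : ℕ, 1 ≤ A → ∀ c : ℕ, c.Coprime A →
    ∃ a' e u : ℕ, (a' : ZMod A) = c ∧ 1 ≤ e ∧ ¬ ℓ ∣ u ∧ e ∣ m * u ∧
      ∀ y : R, IsCoprime y (a' : R) → (a' : R) ∣ y ^ e - 1 := by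
  obtain ⟨F, hF, hexp⟩ := exists_uniform_exponent R
  set B := 9 ^ F with hB
  refine ⟨(B.factorial) ^ (2 * B), Nat.one_le_pow _ _ (Nat.factorial_pos _), ?_⟩
  intro ℓ hℓ A hA c hc
  set k := if ℓ ≤ B then B else 1 with hk
  have hkm : ℓ ^ (2 * (k - 1)) ∣ (B.factorial) ^ (2 * B) := by
    by_cases h : ℓ ≤ B
    · simp only [hk, if_pos h]
      exact (pow_dvd_pow_of_dvd (Nat.dvd_factorial hℓ.pos h) _).trans
        (pow_dvd_pow _ (by omega))
    · simp [hk, if_neg h]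
  have hL : B < ℓ ^ k := by
    by_cases h : ℓ ≤ B
    · simp only [hk, if_pos h]
      exact Nat.lt_pow_self hℓ.one_lt
    · simp only [hk, if_neg h, pow_one]; omega
  have hL0 : ℓ ^ k ≠ 0 := by positivity [hℓ.pos]
  set L := ℓ ^ k with hLdef
  have : NeZero L := ⟨hL0⟩
  have : NeZero (A * L) := ⟨Nat.mul_ne_zero (by omega) hL0⟩
  -- a small integer whose `2F`-th power is not `1` modulo `L`
  obtain ⟨g, hg⟩ : ∃ g : (ZMod L)ˣ, g ^ (2 * F) ≠ 1 := by
    obtain ⟨g, hg1, hg3, hgc⟩ : ∃ g : ℕ, 1 < g ∧ g ≤ 3 ∧ g.Coprime ℓ := by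
      by_cases h2 : ℓ = 2
      · exact ⟨3, by norm_num, le_rfl, by subst h2; norm_num⟩
      · exact ⟨2, by norm_num, by norm_num, (Nat.coprime_primes Nat.prime_two hℓ).2 (Ne.symm h2)⟩
    refine ⟨ZMod.unitOfCoprime g (hgc.pow_right k), fun h => ?_⟩
    have h1 := congrArg Units.val h
    simp only [Units.val_pow_eq_pow_val, ZMod.coe_unitOfCoprime, Units.val_one] at h1
    have h2 : 1 < g ^ (2 * F) := Nat.one_lt_pow (by omega) hg1
    have h3 : ((g ^ (2 * F) - 1 : ℕ) : ZMod L) = 0 := by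
      rw [Nat.cast_sub h2.le]; push_cast; rw [h1, sub_self]
    have h4 := Nat.le_of_dvd (by omega) ((ZMod.natCast_eq_zero_iff _ _).1 h3)
    have h5 : g ^ (2 * F) ≤ B := by
      rw [pow_mul, hB]
      exact Nat.pow_le_pow_left (by nlinarith) _
    omega
  obtain ⟨c1, hc1⟩ := ZMod.unitsMap_surjective (Dvd.intro L rfl : A ∣ A * L) (ZMod.unitOfCoprime c hc)
  have hLd : L ∣ A * L := Dvd.intro_left A rfl
  set c2 := ZMod.unitsMap hLd c1 with hc2
  -- Split a residue class into a product of two classes whose `F`-th powers are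
  -- both nontrivial.
  obtain ⟨x, hx1, hx2⟩ : ∃ x : (ZMod L)ˣ, x ^ F ≠ 1 ∧ (c2 / x) ^ F ≠ 1 := by
    have hg1 : g ^ F ≠ 1 := fun h => hg (by rw [mul_comm, pow_mul, h, one_pow])
    by_cases h : (c2 / g) ^ F = 1
    · refine ⟨g ^ 2, by rwa [← pow_mul], fun h' => hg1 ?_⟩
      have : g = (c2 / g) / (c2 / g ^ 2) := by
        rw [div_div_div_cancel_left, sq, mul_div_cancel_right]
      rw [this, div_pow, h, h', div_one]
    · exact ⟨g, hg1, h⟩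
  obtain ⟨p', hp'gt, hp', hp'x⟩ := Nat.forall_exists_prime_gt_and_eq_mod x.isUnit (A * L + ℓ)
  have hp'A : p'.Coprime (A * L) := by
    rw [hp'.coprime_iff_not_dvd]
    intro h
    have := Nat.le_of_dvd (Nat.pos_of_ne_zero (NeZero.ne (A * L))) h
    omega
  set q' := ZMod.unitOfCoprime p' hp'A with hq'
  have hq'x : ZMod.unitsMap hLd q' = x := by
    ext
    rw [← hp'x]
    simp [ZMod.unitsMap_def, hq']
  obtain ⟨p, hpgt, hp, hpx⟩ := Nat.forall_exists_prime_gt_and_eq_mod (c1 / q').isUnit (p' + ℓ)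
  have hpL : (p : ZMod L) = (c2 / x : (ZMod L)ˣ) := by
    rw [hc2, ← hq'x, ← map_div, ZMod.unitsMap_def, Units.coe_map, ← hpx]
    simp
  obtain ⟨i, u, hik, hu, he⟩ := exists_dvd_pow_sub hp hF hℓ (k := k) (by
    rw [hpL]; intro h; exact hx2 (Units.ext (by simpa using h)))
  obtain ⟨i', u', hik', hu', he'⟩ := exists_dvd_pow_sub hp' hF hℓ (k := k) (by
    rw [hp'x]; intro h; exact hx1 (Units.ext (by simpa using h)))
  obtain ⟨N, hN⟩ := hexp p hp
  obtain ⟨N', hN'⟩ := hexp p' hp'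
  have hone : ∀ {q : ℕ}, q.Prime → 1 ≤ q ^ F - 1 := by
    intro q hq
    have : 1 < q ^ F := Nat.one_lt_pow (by omega) hq.one_lt
    omega
  have hℓp : ∀ {q : ℕ}, q.Prime → ℓ < q → ∀ n, ¬ ℓ ∣ q ^ n := by
    intro q hq hlt n h
    have := (Nat.prime_dvd_prime_iff_eq hℓ hq).1 (hℓ.dvd_of_dvd_pow h)
    omega
  refine ⟨p * p', (p ^ N * (p ^ F - 1)) * (p' ^ N' * (p' ^ F - 1)),
    p ^ N * u * (p' ^ N' * u'), ?_, ?_, ?_, ?_, ?_⟩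
  · have h1 : ((p * p' : ℕ) : ZMod (A * L)) = c1 := by
      push_cast
      rw [hpx]
      have : (p' : ZMod (A * L)) = q' := by simp [hq']
      rw [this, ← Units.val_mul, div_mul_cancel]
    have h2 := congrArg (ZMod.castHom (Dvd.intro L rfl : A ∣ A * L) (ZMod A)) h1
    have h3 := congrArg Units.val hc1
    rw [ZMod.unitsMap_def, Units.coe_map] at h3
    rw [map_natCast] at h2
    rw [h2]
    simpa using h3
  · have := hone hp
    have := hone hp'
    have h1 : 1 ≤ p ^ N := Nat.one_le_pow _ _ hp.pos
    have h2 : 1 ≤ p' ^ N' := Nat.one_le_pow _ _ hp'.pos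
    exact Nat.mul_pos (Nat.mul_pos h1 (hone hp)) (Nat.mul_pos h2 (hone hp'))
  · intro h
    rcases hℓ.dvd_mul.1 h with h | h <;> rcases hℓ.dvd_mul.1 h with h | h
    · exact hℓp hp (by omega) _ h
    · exact hu h
    · exact hℓp hp' (by omega) _ h
    · exact hu' h
  · rw [he, he']
    have h1 : ℓ ^ (i + i') ∣ B.factorial ^ (2 * B) :=
      (pow_dvd_pow ℓ (by omega)).trans hkm
    have := mul_dvd_mul_right h1 (p ^ N * u * (p' ^ N' * u'))
    have e : p ^ N * (ℓ ^ i * u) * (p' ^ N' * (ℓ ^ i' * u')) =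
      ℓ ^ (i + i') * (p ^ N * u * (p' ^ N' * u')) := by ring
    rwa [e]
  · intro y hy
    push_cast at hy ⊢
    have hpp : IsCoprime (p : R) (p' : R) := by
      have : IsCoprime (p : ℤ) (p' : ℤ) := Nat.isCoprime_iff_coprime.2
        ((Nat.coprime_primes hp hp').2 (by omega))
      simpa using this.map (Int.castRingHom R)
    refine hpp.mul_dvd ?_ ?_
    · exact (hN y (IsCoprime.of_mul_right_left hy)).trans (pow_sub_one_dvd y (Dvd.intro _ rfl))
    · exact (hN' y (IsCoprime.of_mul_right_right hy)).trans
        (pow_sub_one_dvd y (Dvd.intro_left _ rfl))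

end

/-! ### Primitive elements of the number field -/

section

open IntermediateField Polynomial in
/-- Since `K` has only finitely many subfields, two of the shifts of `κ` by integer multiples of
`M θ` generate the same subfield, which then contains `θ`. -/
theorem exists_primitive_shift {K : Type*} [Field K] [NumberField K] {θ : K} (hθ : ℚ⟮θ⟯ = ⊤)
    (hθ0 : θ ≠ 0) (κ : K) {M : ℕ} (hM : M ≠ 0) :
    ∃ c : ℕ, ℚ⟮κ + c * M * θ⟯ = ⊤ ∧ κ + c * M * θ ≠ 0 := by
  have hfin : Finite (IntermediateField ℚ K) :=
    Field.finite_intermediateField_of_exists_primitive_element ℚ K ⟨θ, hθ⟩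
  obtain ⟨F, hF⟩ := Finite.exists_infinite_fiber (fun c : ℕ => ℚ⟮κ + c * M * θ⟯)
  rw [Set.infinite_coe_iff] at hF
  have hmem : ∀ c ∈ (fun c : ℕ => ℚ⟮κ + c * M * θ⟯) ⁻¹' {F}, κ + c * M * θ ∈ F := by
    intro c hc
    have : ℚ⟮κ + c * M * θ⟯ = F := hc
    rw [← this]
    exact mem_adjoin_simple_self ℚ _
  have hM' : (M : K) ≠ 0 := by exact_mod_cast hM
  have hFtop : F = ⊤ := by
    obtain ⟨c, hc⟩ := hF.nonempty
    obtain ⟨c', hc', hne⟩ := hF.exists_notMem_finset {c}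
    have hcc : (c : K) - c' ≠ 0 := by
      rw [sub_ne_zero]
      exact_mod_cast fun h => hne (by simp [h])
    have h1 := F.sub_mem (hmem c hc) (hmem c' hc')
    have h2 : θ = (κ + c * M * θ - (κ + c' * M * θ)) * (((c : K) - c') * M)⁻¹ := by
      field_simp
      ring
    have h3 : θ ∈ F := by
      rw [h2]
      refine F.mul_mem h1 (F.inv_mem (F.mul_mem (F.sub_mem ?_ ?_) ?_)) <;> exact _root_.natCast_mem F _
    rw [eq_top_iff, ← hθ]
    exact adjoin_simple_le_iff.2 h3
  obtain ⟨c, hc⟩ := hF.nonempty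
  by_cases h0 : κ + c * M * θ = 0
  · obtain ⟨c', hc', hne⟩ := hF.exists_notMem_finset {c}
    refine ⟨c', by rw [← hFtop]; exact hc', fun h => hne ?_⟩
    have : ((c' : K) - c) * (M * θ) = 0 := by linear_combination h - h0
    rcases mul_eq_zero.1 this with h | h
    · rw [sub_eq_zero] at h
      simpa using (by exact_mod_cast h : c' = c)
    · exact absurd h (mul_ne_zero hM' hθ0)
  · exact ⟨c, by rw [← hFtop]; exact hc, h0⟩

open IntermediateField Polynomial in
/-- Every element of `K` is a rational polynomial of bounded degree in a primitive element. -/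
theorem exists_poly_of_primitive {K : Type*} [Field K] [NumberField K] {η : K} (hη : ℚ⟮η⟯ = ⊤) :
    ∃ d : ℕ, ∀ x : K, ∃ q : ℚ[X], q.natDegree ≤ d ∧ aeval η q = x := by
  have hint : IsIntegral ℚ η := Algebra.IsIntegral.isIntegral η
  refine ⟨(minpoly ℚ η).natDegree, fun x => ?_⟩
  have hx : x ∈ Algebra.adjoin ℚ {η} := by
    have h1 : x ∈ ℚ⟮η⟯ := by rw [hη]; trivial
    rwa [← IntermediateField.mem_toSubalgebra,
      IntermediateField.adjoin_simple_toSubalgebra_of_isAlgebraic hint.isAlgebraic] at h1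
  rw [Algebra.adjoin_singleton_eq_range_aeval] at hx
  obtain ⟨q, rfl⟩ := hx
  refine ⟨q %ₘ minpoly ℚ η, natDegree_modByMonic_le _ (minpoly.monic hint), ?_⟩
  exact aeval_modByMonic_eq_self_of_root (minpoly.aeval ℚ η)

section
variable {R : Type*} [CommRing R] [IsDomain R] [OrderLoc R]
variable (K : Type*) [Field K] [NumberField K] [Algebra R K] [IsFractionRing R K]

theorem exists_nat_mul_mem (x : K) : ∃ N : ℕ, N ≠ 0 ∧ ∃ r : R, algebraMap R K r = N * x := by
  obtain ⟨a, b, hb, rfl⟩ := IsFractionRing.div_surjective (A := R) x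
  have hb0 : b ≠ 0 := nonZeroDivisors.ne_zero hb
  obtain ⟨N, hN, c, hc⟩ := OrderLoc.exists_nat_dvd hb0
  refine ⟨N, hN, c * a, ?_⟩
  have h1 : algebraMap R K b ≠ 0 := by
    simpa using hb0
  have h2 : (N : K) = algebraMap R K b * algebraMap R K c := by
    rw [← map_mul, ← hc, map_natCast]
  rw [h2, map_mul]
  field_simp

open IntermediateField in
/-- A primitive element of `K` can be chosen nonzero and in `R`, by clearing denominators. -/
theorem exists_primitive_mem : ∃ θ : R, ℚ⟮algebraMap R K θ⟯ = ⊤ ∧ algebraMap R K θ ≠ 0 := by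
  obtain ⟨α, hα⟩ := Field.exists_primitive_element ℚ K
  obtain ⟨α, hα, hα0⟩ : ∃ α : K, ℚ⟮α⟯ = ⊤ ∧ α ≠ 0 := by
    by_cases h : α = 0
    · refine ⟨1, ?_, one_ne_zero⟩
      rw [h, adjoin_zero] at hα
      rw [adjoin_one, hα]
    · exact ⟨α, hα, h⟩
  obtain ⟨N, hN, r, hr⟩ := exists_nat_mul_mem (R := R) K α
  have hN' : (N : K) ≠ 0 := by exact_mod_cast hN
  refine ⟨r, ?_, by rw [hr]; exact mul_ne_zero hN' hα0⟩
  rw [hr, eq_top_iff, ← hα, adjoin_simple_le_iff]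
  have h1 := (ℚ⟮(N : K) * α⟯).mul_mem (mem_adjoin_simple_self ℚ ((N : K) * α))
    ((ℚ⟮(N : K) * α⟯).inv_mem (_root_.natCast_mem _ N))
  have h2 : (N : K) * α * (N : K)⁻¹ = α := by field_simp
  rwa [h2] at h1
end

open Polynomial in
/-- Homogeneous form of the division of an integral polynomial by `X + k`. -/
theorem dvd_sum_homogeneous {R : Type*} [CommRing R] (γ a : R) (d : ℕ) (c : ℕ → ℤ) (k : ℤ) :
    γ + k * a ∣ (∑ i ∈ Finset.range (d + 1), (c i : R) * γ ^ i * a ^ (d - i)) -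
      a ^ d * ((∑ i ∈ Finset.range (d + 1), c i * (-k) ^ i : ℤ) : R) := by
  push_cast
  rw [Finset.mul_sum, ← Finset.sum_sub_distrib]
  refine Finset.dvd_sum fun i hi => ?_
  have hid : i ≤ d := by simpa [Nat.lt_succ_iff] using hi
  have h1 : γ + k * a ∣ γ ^ i - (-k * a) ^ i := by
    simpa using sub_dvd_pow_sub_pow γ (-k * a) i
  have h2 : (c i : R) * γ ^ i * a ^ (d - i) - a ^ d * ((c i : R) * (-k) ^ i) =
      (γ ^ i - (-k * a) ^ i) * ((c i : R) * a ^ (d - i)) := by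
    obtain ⟨e, rfl⟩ := Nat.exists_eq_add_of_le hid
    rw [Nat.add_sub_cancel_left]
    ring
  rw [h2]
  exact h1.mul_right _

theorem isCoprime_natCast_of_primeFactors {R : Type*} [CommRing R] {x : R} {M : ℕ} (hM : M ≠ 0)
    (h : ∀ p : ℕ, p.Prime → p ∣ M → IsCoprime x (p : R)) : IsCoprime x (M : R) := by
  induction M using Nat.recOnMul with
  | zero => exact absurd rfl hM
  | one => simpa using isCoprime_one_right
  | prime p hp => exact h p hp dvd_rfl
  | mul a b iha ihb =>
    push_cast
    have ha : a ≠ 0 := fun h => hM (by simp [h])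
    have hb : b ≠ 0 := fun h => hM (by simp [h])
    exact (iha ha fun p hp hd => h p hp (hd.mul_right b)).mul_right
      (ihb hb fun p hp hd => h p hp (hd.mul_left a))

end

/-! ### Integral shifts and denominators -/

section

section
variable {R : Type*} [CommRing R] [IsDomain R]
variable (K : Type*) [Field K] [NumberField K] [Algebra R K] [IsFractionRing R K]

open Polynomial IntermediateField in
/-- Modulo `γ + k a`, every `b ∈ R` is `a ^ d` times an integer up to a denominator `D` which does
not depend on `k`: write `b / a ^ d` as a polynomial in `γ / a` and divide by `γ + k a`. -/
theorem exists_denominator {γ a : R} (ha : a ≠ 0)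
    (hγ : ℚ⟮algebraMap R K γ / algebraMap R K a⟯ = ⊤) :
    ∃ d : ℕ, ∀ b : R, ∃ D : ℕ, D ≠ 0 ∧ ∀ k : ℤ, ∃ C : ℤ, γ + k * a ∣ D * b - a ^ d * C := by
  obtain ⟨d, hd⟩ := exists_poly_of_primitive hγ
  refine ⟨d, fun b => ?_⟩
  have ha' : algebraMap R K a ≠ 0 := by simpa using ha
  obtain ⟨q, hqd, hq⟩ := hd (algebraMap R K b / algebraMap R K a ^ d)
  let D : ℕ := ∏ i ∈ Finset.range (d + 1), (q.coeff i).den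
  have hD : D ≠ 0 := Finset.prod_ne_zero_iff.2 fun i _ => (q.coeff i).den_nz
  have hc : ∀ i, i ∈ Finset.range (d + 1) → ∃ c : ℤ, (D : ℚ) * q.coeff i = c := by
    intro i hi
    obtain ⟨e, he⟩ := Finset.dvd_prod_of_mem (fun i => (q.coeff i).den) hi
    refine ⟨(q.coeff i).num * e, ?_⟩
    have h1 : (D : ℚ) = (q.coeff i).den * e := by exact_mod_cast he
    have h2 := Rat.mul_den_eq_num (q.coeff i)
    rw [h1]; push_cast; rw [← h2]; ring
  choose! c hc using hc
  have hDb : (D : R) * b = ∑ i ∈ Finset.range (d + 1), (c i : R) * γ ^ i * a ^ (d - i) := by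
    apply IsFractionRing.injective R K
    have h1 : algebraMap R K b = algebraMap R K a ^ d * aeval (algebraMap R K γ / algebraMap R K a) q := by
      rw [hq]; field_simp
    rw [map_mul, map_sum, h1, aeval_eq_sum_range' (Nat.lt_succ_of_le hqd), Finset.mul_sum,
      Finset.mul_sum]
    refine Finset.sum_congr rfl fun i hi => ?_
    have hid : i ≤ d := by simpa [Nat.lt_succ_iff] using hi
    have h3 : (D : K) * (algebraMap ℚ K (q.coeff i)) = c i := by
      have := congrArg (algebraMap ℚ K) (hc i hi)
      simpa using this
    rw [Algebra.smul_def]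
    simp only [map_mul, map_pow, map_natCast, map_intCast]
    rw [← h3]
    obtain ⟨e, rfl⟩ := Nat.exists_eq_add_of_le hid
    rw [Nat.add_sub_cancel_left, div_pow]
    field_simp
    ring
  refine ⟨D, hD, fun k => ⟨∑ i ∈ Finset.range (d + 1), c i * (-k) ^ i, ?_⟩⟩
  rw [hDb]
  exact dvd_sum_homogeneous γ a d c k

open IntermediateField in
/-- The same denominator works for all `b` in a finitely generated subring. -/
theorem exists_common_denominator {γ a : R} (ha : a ≠ 0)
    (hγ : ℚ⟮algebraMap R K γ / algebraMap R K a⟯ = ⊤) (A : Subalgebra ℤ R)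
    (hA : (Subalgebra.toSubmodule A).FG) :
    ∃ d D : ℕ, D ≠ 0 ∧ ∀ b ∈ A, ∀ k : ℤ, ∃ C : ℤ, γ + k * a ∣ D * b - a ^ d * C := by
  obtain ⟨d, hd⟩ := exists_denominator K ha hγ
  choose D hD hC using hd
  obtain ⟨t, ht⟩ := hA
  refine ⟨d, ∏ x ∈ t, D x, Finset.prod_ne_zero_iff.2 fun x _ => hD x, fun b hb k => ?_⟩
  have hb' : b ∈ Submodule.span ℤ (t : Set R) := by rw [ht]; exact hb
  induction hb' using Submodule.span_induction with
  | mem x hx =>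
    obtain ⟨C, hC⟩ := hC x k
    obtain ⟨e, he⟩ := Finset.dvd_prod_of_mem D hx
    refine ⟨e * C, ?_⟩
    rw [he]
    push_cast
    convert hC.mul_left (e : R) using 1
    ring
  | zero => exact ⟨0, by simp⟩
  | add x y hx hy ihx ihy =>
    obtain ⟨C, h⟩ := ihx (by rw [← Subalgebra.mem_toSubmodule, ← ht]; exact hx)
    obtain ⟨C', h'⟩ := ihy (by rw [← Subalgebra.mem_toSubmodule, ← ht]; exact hy)
    refine ⟨C + C', ?_⟩
    push_cast at h h' ⊢
    convert dvd_add h h' using 1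
    ring
  | smul z x hx ih =>
    obtain ⟨C, h⟩ := ih (by rw [← Subalgebra.mem_toSubmodule, ← ht]; exact hx)
    refine ⟨z * C, ?_⟩
    push_cast at h ⊢
    convert h.mul_left (z : R) using 1
    simp
    ring

/-- If `γ` is prime to `N₁`, and `N₁` is divisible by all primes `p ≤ n`, then a shift `γ + k a` by
a natural number `k` is prime to all primes in a given finite set. Over a prime `p > n` there are
at most `n` maximal ideals of `R`, and each excludes at most one class of `k` modulo `p`. -/
theorem exists_shift_coprime [OrderLoc R] [CharZero R] {n : ℕ}
    (hn : ∀ N : ℕ, 1 ≤ N → Finite (R ⧸ Ideal.span {(N : R)}) ∧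
      Nat.card (R ⧸ Ideal.span {(N : R)}) ≤ N ^ n)
    {γ a : R} (h : IsCoprime a γ) {N₁ : ℕ} (hN₁ : ∀ p : ℕ, p.Prime → p ≤ n → p ∣ N₁)
    (hγ : IsCoprime γ (N₁ : R)) (T : Finset ℕ) (hT : ∀ p ∈ T, p.Prime) :
    ∃ k : ℕ, ∀ p ∈ T, IsCoprime (γ + k * a) (p : R) := by
  suffices ∃ k : ℕ, N₁ ∣ k ∧ ∀ p ∈ T, IsCoprime (γ + k * a) (p : R) from
    let ⟨k, _, h⟩ := this; ⟨k, h⟩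
  have hshift : ∀ (x : R) (p e : ℕ), p ∣ e → IsCoprime x (p : R) →
      IsCoprime (x + e * a) (p : R) := by
    rintro x p e ⟨f, rfl⟩ hx
    have := hx.add_mul_left_left (f * a)
    push_cast
    rwa [mul_assoc]
  induction T using Finset.induction_on with
  | empty => exact ⟨0, by simp⟩
  | insert p T hpT ih =>
    obtain ⟨k, hk, hkT⟩ := ih fun p hp => hT p (Finset.mem_insert_of_mem hp)
    have hp : p.Prime := hT p (Finset.mem_insert_self _ _)
    by_cases hpN : p ∣ N₁
    · refine ⟨k, hk, fun q hq => ?_⟩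
      rcases Finset.mem_insert.1 hq with rfl | hq
      · refine hshift _ _ _ (hpN.trans hk) ?_
        obtain ⟨f, hf⟩ := hpN
        rw [hf] at hγ
        push_cast at hγ
        exact hγ.of_mul_right_left
      · exact hkT q hq
    · have hnp : n < p := by
        by_contra hle
        exact hpN (hN₁ p hp (by omega))
      set W := ∏ q ∈ T, q with hW
      have hpW : ¬ p ∣ W := by
        intro hd
        obtain ⟨q, hq, hpq⟩ := (Prime.dvd_finsetProd_iff hp.prime _).1 hd
        have := (Nat.prime_dvd_prime_iff_eq hp (hT q (Finset.mem_insert_of_mem hq))).1 hpq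
        exact hpT (this ▸ hq)
      by_contra hcon
      push Not at hcon
      -- each of the `n + 1` shifts below lies in a maximal ideal over `p`
      have hbad : ∀ j : Fin (n + 1), ∃ P : Ideal R, P.IsMaximal ∧ (p : R) ∈ P ∧
          γ + ((k + j * (N₁ * W) : ℕ) : R) * a ∈ P := by
        intro j
        have hnc : ¬ IsCoprime (γ + ((k + j * (N₁ * W) : ℕ) : R) * a) (p : R) := by
          intro hc
          obtain ⟨q, hq, hnq⟩ := hcon (k + j * (N₁ * W))
            (dvd_add hk (Dvd.dvd.mul_left (Dvd.intro _ rfl) _))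
          rcases Finset.mem_insert.1 hq with rfl | hq
          · exact hnq hc
          · apply hnq
            have := hshift _ q (j * (N₁ * W))
              (((Finset.dvd_prod_of_mem (fun q => q) hq).mul_left N₁).mul_left j) (hkT q hq)
            push_cast at this ⊢
            convert this using 1
            ring
        have hne : Ideal.span {γ + ((k + j * (N₁ * W) : ℕ) : R) * a, (p : R)} ≠ ⊤ := by
          intro h
          exact hnc (Ideal.isCoprime_span_singleton_iff _ _ |>.1 (by
            rw [Ideal.isCoprime_iff_sup_eq, ← Ideal.span_insert, h]))
        obtain ⟨P, hP, hle⟩ := Ideal.exists_le_maximal _ hne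
        exact ⟨P, hP, hle (Ideal.subset_span (by simp)), hle (Ideal.subset_span (by simp))⟩
      choose P hPmax hpP hγP using hbad
      have := (hn p hp.one_le).1
      refine no_many_maximal hp (hn p hp.one_le).2 P ?_ hPmax hpP
      intro i j hij
      by_contra hne
      have haP : a ∉ P i := by
        intro haP
        have h1 : γ ∈ P i := by
          have := (P i).sub_mem (hγP i) ((P i).mul_mem_left ((k + i * (N₁ * W) : ℕ) : R) haP)
          simpa using this
        obtain ⟨u, v, huv⟩ := h
        exact (hPmax i).ne_top ((Ideal.eq_top_iff_one _).2
          (huv ▸ (P i).add_mem ((P i).mul_mem_left u haP) ((P i).mul_mem_left v h1)))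
      have h1 : ((((i : ℕ) : ℤ) - (j : ℕ)) * (N₁ * W) : ℤ) * a ∈ P i := by
        have := (P i).sub_mem (hγP i) (hij ▸ hγP j)
        push_cast at this ⊢
        convert this using 1
        ring
      have h2 := ((hPmax i).isPrime.mem_or_mem h1).resolve_right haP
      have h3 : IsCoprime ((((i : ℕ) : ℤ) - (j : ℕ)) * (N₁ * W)) (p : ℤ) := by
        rw [isCoprime_comm, (Nat.prime_iff_prime_int.1 hp).coprime_iff_not_dvd]
        intro hd
        rcases (Nat.prime_iff_prime_int.1 hp).dvd_or_dvd hd with hd | hd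
        · have hi := i.2
          have hj := j.2
          have hz : ((i : ℕ) : ℤ) - (j : ℕ) = 0 := Int.eq_zero_of_abs_lt_dvd hd (by
            rw [abs_lt]; omega)
          exact hne (Fin.ext (by omega))
        · have hd' : p ∣ N₁ * W := by exact_mod_cast hd
          rcases hp.dvd_mul.1 hd' with h | h
          · exact hpN h
          · exact hpW h
      obtain ⟨u, v, huv⟩ := h3
      refine (hPmax i).ne_top ((Ideal.eq_top_iff_one _).2 ?_)
      have h4 : (1 : R) = (u : R) * (((((i : ℕ) : ℤ) - (j : ℕ)) * (N₁ * W) : ℤ) : R) + v * (p : R) := by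
        exact_mod_cast (congrArg (Int.cast : ℤ → R) huv).symm
      rw [h4]
      exact (P i).add_mem ((P i).mul_mem_left _ h2) ((P i).mul_mem_left _ (hpP i))
end

end

/-! ### Cyclic residue rings in unimodular rows -/

section

theorem isCoprime_of_dvd_sub_pow {R : Type*} [CommRing R] {x D a C : R} {d : ℕ}
    (h : x ∣ D - a ^ d * C) (hD : IsCoprime x D) : IsCoprime x C := by
  obtain ⟨e, he⟩ := h
  obtain ⟨u, v, huv⟩ := hD
  exact ⟨u + v * e, v * a ^ d, by linear_combination huv - v * he⟩

section
variable {R : Type*} [CommRing R] [IsDomain R] [OrderLoc R] [CharZero R]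

open IntermediateField in
/-- In a unimodular row `(a, β)` with `a ≠ 0`, adding a multiple of `a` to `β` makes `R/βR` a
quotient of `ℤ`, and `β` prime to a given integer. -/
theorem exists_cyclic_quotient (K : Type*) [Field K] [NumberField K] [Algebra R K]
    [IsFractionRing R K] {a β : R} (ha : a ≠ 0) (h : IsCoprime a β) {N : ℕ} (hN : N ≠ 0) :
    ∃ s : R, β + s * a ≠ 0 ∧ IsCoprime (β + s * a) (N : R) ∧
      ∀ x : R, ∃ c : ℤ, β + s * a ∣ x - c := by
  obtain ⟨n, hn⟩ := OrderLoc.exists_card_le R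
  obtain ⟨A, hfg, hA⟩ := OrderLoc.exists_order (R := R)
  set N₁ := N * n.factorial with hN₁
  have hN₁0 : N₁ ≠ 0 := Nat.mul_ne_zero hN (Nat.factorial_ne_zero n)
  obtain ⟨s₁, hs₁⟩ := OrderLoc.exists_coprime_add (x := (N₁ : R)) (by exact_mod_cast hN₁0) h
  obtain ⟨θ, hθ, hθ0⟩ := exists_primitive_mem (R := R) K
  have ha' : algebraMap R K a ≠ 0 := by simpa using ha
  obtain ⟨c, hc, -⟩ := exists_primitive_shift hθ hθ0
    (algebraMap R K (β + s₁ * a) / algebraMap R K a) hN₁0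
  set γ := β + s₁ * a + c * N₁ * θ * a with hγdef
  have hγ : ℚ⟮algebraMap R K γ / algebraMap R K a⟯ = ⊤ := by
    rw [← hc, hγdef]
    congr 2
    simp only [map_add, map_mul, map_natCast]
    field_simp
  have hγa : IsCoprime a γ := by
    have : γ = β + a * (s₁ + c * N₁ * θ) := by rw [hγdef]; ring
    rw [this]
    exact h.add_mul_left_right _
  have hγN : IsCoprime γ (N₁ : R) := by
    have : γ = β + s₁ * a + N₁ * (c * θ * a) := by rw [hγdef]; ring
    rw [this]
    exact hs₁.add_mul_left_left _
  obtain ⟨d, D, hD, hC⟩ := exists_common_denominator K ha hγ A hfg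
  have hDN : D * N ≠ 0 := Nat.mul_ne_zero hD hN
  obtain ⟨k, hk⟩ := exists_shift_coprime hn hγa (N₁ := N₁)
    (fun p hp hpn => (hp.dvd_factorial.2 hpn).mul_left N) hγN (D * N).primeFactors
    (fun p hp => Nat.prime_of_mem_primeFactors hp)
  obtain ⟨k, hk, hk0⟩ : ∃ k : ℕ, IsCoprime (γ + k * a) ((D * N : ℕ) : R) ∧ γ + k * a ≠ 0 := by
    have hcop : IsCoprime (γ + k * a) ((D * N : ℕ) : R) :=
      isCoprime_natCast_of_primeFactors hDN fun p hp hpd =>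
        hk p (Nat.mem_primeFactors.2 ⟨hp, hpd, hDN⟩)
    by_cases h0 : γ + k * a = 0
    · refine ⟨k + D * N, ?_, ?_⟩
      · have := hcop.add_mul_left_left a
        convert this using 1
        push_cast; ring
      · have : γ + ((k + D * N : ℕ) : R) * a = (D * N : ℕ) * a := by
          push_cast; linear_combination h0
        rw [this]
        exact mul_ne_zero (by exact_mod_cast hDN) ha
    · exact ⟨k, hcop, h0⟩
  have hs : β + (s₁ + c * N₁ * θ + k) * a = γ + k * a := by rw [hγdef]; ring
  refine ⟨s₁ + c * N₁ * θ + k, ?_⟩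
  rw [hs]
  refine ⟨hk0, ?_, ?_⟩
  · push_cast at hk
    exact hk.of_mul_right_right
  set b := γ + k * a with hb
  have hbD : IsCoprime b (D : R) := by
    push_cast at hk
    exact hk.of_mul_right_left
  have hfin := OrderLoc.finite_quot hk0
  let π := Ideal.Quotient.mk (Ideal.span {b})
  have hπ : ∀ x y : R, b ∣ x - y ↔ π x = π y := fun x y => by
    rw [Ideal.Quotient.eq, Ideal.mem_span_singleton]
  let T : Subring (R ⧸ Ideal.span {b}) := (Int.castRingHom (R ⧸ Ideal.span {b})).range
  have hTint : ∀ z : ℤ, π z ∈ T := fun z => ⟨z, by simp⟩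
  obtain ⟨C₁, hC₁⟩ := hC 1 A.one_mem k
  have hbe : γ + ((k : ℤ) : R) * a = b := by rw [hb]; simp
  rw [hbe, mul_one] at hC₁
  have hC₁u : IsUnit (π C₁) := isUnit_mk_iff.2 (isCoprime_of_dvd_sub_pow hC₁ hbD).symm
  have hDu : IsUnit (π D) := isUnit_mk_iff.2 hbD.symm
  obtain ⟨t, ht, ht1⟩ := exists_inv_mem_of_finite T (hTint C₁) hC₁u
  -- Modulo `b` every element of `A` is an integer: `D x` is `a ^ d` times an integer,
  -- and so is `D`, with an invertible factor, so `a ^ d` cancels.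
  have hAT : ∀ x ∈ A, π x ∈ T := by
    intro x hx
    obtain ⟨C, hC⟩ := hC x hx k
    rw [hbe, hπ] at hC
    rw [hπ] at hC₁
    simp only [map_mul, map_pow] at hC hC₁
    have h1 : π x * π C₁ = π C := by
      refine hDu.mul_left_cancel ?_
      calc π D * (π x * π C₁) = (π D * π x) * π C₁ := by ring
        _ = π C * (π a ^ d * π C₁) := by rw [hC]; ring
        _ = π D * π C := by rw [← hC₁]; ring
    have h2 : π x = π C * t := by rw [← h1, mul_assoc, ht1, mul_one]
    rw [h2]
    exact T.mul_mem (hTint C) ht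
  have hT : T = ⊤ := by
    refine subring_eq_top_of_finite T fun x => ?_
    obtain ⟨r, rfl⟩ := Ideal.Quotient.mk_surjective x
    obtain ⟨s, hs, hu, hsr⟩ := hA r
    exact ⟨π s, hAT s hs, hu.map π, by simpa using hAT _ hsr⟩
  intro x
  have hx : π x ∈ T := by rw [hT]; trivial
  obtain ⟨c, hc⟩ := hx
  exact ⟨c, (hπ _ _).2 (by rw [← hc]; simp)⟩
end

/-- Membership in a group of exponents can be tested prime by prime. -/
theorem mem_of_local (E : AddSubgroup ℤ) (m : ℕ)
    (h : ∀ ℓ : ℕ, ℓ.Prime → ∃ e u : ℕ, (e : ℤ) ∈ E ∧ ¬ ℓ ∣ u ∧ e ∣ m * u) : (m : ℤ) ∈ E := by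
  obtain ⟨d, hd⟩ := Int.subgroup_cyclic (E.comap (AddMonoidHom.mulLeft (m : ℤ)))
  have hmem : ∀ u : ℤ, (m : ℤ) * u ∈ E ↔ d ∣ u := by
    intro u
    have : u ∈ E.comap (AddMonoidHom.mulLeft (m : ℤ)) ↔ d ∣ u := by
      rw [hd, ← AddSubgroup.zmultiples_eq_closure, Int.mem_zmultiples_iff]
    rw [← this]
    rfl
  by_cases h1 : d.natAbs = 1
  · have := (hmem 1).2 (Int.natAbs_dvd.1 (by rw [h1]; norm_num))
    simpa using this
  · obtain ⟨ℓ, hℓ, hℓd⟩ := Nat.exists_prime_and_dvd h1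
    obtain ⟨e, u, he, hu, f, hf⟩ := h ℓ hℓ
    exfalso
    apply hu
    have h2 : (m : ℤ) * u ∈ E := by
      have : (m : ℤ) * u = (f : ℤ) • (e : ℤ) := by
        rw [smul_eq_mul]
        exact_mod_cast hf.trans (mul_comm e f)
      rw [this]
      exact E.zsmul_mem he f
    have h3 := (hmem u).1 h2
    have h4 : d.natAbs ∣ u := by simpa using Int.natAbs_dvd_natAbs.2 h3
    exact hℓd.trans h4

end

/-! ### Elementary and congruence subgroups of SL₂ -/

section

open Matrix

section
variable {F : Type*} [CommRing F]

/-- Upper elementary matrix. -/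
def e12 (x : F) : SpecialLinearGroup (Fin 2) F := ⟨!![1, x; 0, 1], by simp [det_fin_two]⟩

/-- Lower elementary matrix. -/
def e21 (x : F) : SpecialLinearGroup (Fin 2) F := ⟨!![1, 0; x, 1], by simp [det_fin_two]⟩

/-- Diagonal matrix `diag(u, u⁻¹)`. -/
def hd (u : Fˣ) : SpecialLinearGroup (Fin 2) F :=
  ⟨!![(u : F), 0; 0, ((u⁻¹ : Fˣ) : F)], by simp [det_fin_two]⟩

/-- The Weyl element. -/
def wl : SpecialLinearGroup (Fin 2) F := ⟨!![0, 1; -1, 0], by simp [det_fin_two]⟩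

theorem sl2_ext {g h : SpecialLinearGroup (Fin 2) F} (h00 : g 0 0 = h 0 0) (h01 : g 0 1 = h 0 1)
    (h10 : g 1 0 = h 1 0) (h11 : g 1 1 = h 1 1) : g = h := by
  ext i j
  fin_cases i <;> fin_cases j <;> assumption

@[simp] theorem e12_00 (x : F) : e12 x 0 0 = 1 := rfl
@[simp] theorem e12_01 (x : F) : e12 x 0 1 = x := rfl
@[simp] theorem e12_10 (x : F) : e12 x 1 0 = 0 := rfl
@[simp] theorem e12_11 (x : F) : e12 x 1 1 = 1 := rfl
@[simp] theorem e21_00 (x : F) : e21 x 0 0 = 1 := rfl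
@[simp] theorem e21_01 (x : F) : e21 x 0 1 = 0 := rfl
@[simp] theorem e21_10 (x : F) : e21 x 1 0 = x := rfl
@[simp] theorem e21_11 (x : F) : e21 x 1 1 = 1 := rfl
@[simp] theorem hd_00 (u : Fˣ) : hd u 0 0 = u := rfl
@[simp] theorem hd_01 (u : Fˣ) : hd u 0 1 = 0 := rfl
@[simp] theorem hd_10 (u : Fˣ) : hd u 1 0 = 0 := rfl
@[simp] theorem hd_11 (u : Fˣ) : hd u 1 1 = ((u⁻¹ : Fˣ) : F) := rfl
@[simp] theorem wl_00 : (wl : SpecialLinearGroup (Fin 2) F) 0 0 = 0 := rfl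
@[simp] theorem wl_01 : (wl : SpecialLinearGroup (Fin 2) F) 0 1 = 1 := rfl
@[simp] theorem wl_10 : (wl : SpecialLinearGroup (Fin 2) F) 1 0 = -1 := rfl
@[simp] theorem wl_11 : (wl : SpecialLinearGroup (Fin 2) F) 1 1 = 0 := rfl

@[simp] theorem sl2_mul_apply (g h : SpecialLinearGroup (Fin 2) F) (i k : Fin 2) :
    (g * h) i k = g i 0 * h 0 k + g i 1 * h 1 k := by
  change (g.1 * h.1) i k = _
  rw [Matrix.mul_apply, Fin.sum_univ_two]

theorem sl2_det (g : SpecialLinearGroup (Fin 2) F) : g 0 0 * g 1 1 - g 0 1 * g 1 0 = 1 := by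
  have := g.det_coe
  rwa [det_fin_two] at this

@[simp] theorem sl2_inv_00 (g : SpecialLinearGroup (Fin 2) F) : g⁻¹ 0 0 = g 1 1 := by
  change adjugate g.1 _ _ = _; rw [adjugate_fin_two]; rfl
@[simp] theorem sl2_inv_01 (g : SpecialLinearGroup (Fin 2) F) : g⁻¹ 0 1 = - g 0 1 := by
  change adjugate g.1 _ _ = _; rw [adjugate_fin_two]; rfl
@[simp] theorem sl2_inv_10 (g : SpecialLinearGroup (Fin 2) F) : g⁻¹ 1 0 = - g 1 0 := by
  change adjugate g.1 _ _ = _; rw [adjugate_fin_two]; rfl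
@[simp] theorem sl2_inv_11 (g : SpecialLinearGroup (Fin 2) F) : g⁻¹ 1 1 = g 0 0 := by
  change adjugate g.1 _ _ = _; rw [adjugate_fin_two]; rfl

@[simp] theorem sl2_one_apply (i k : Fin 2) :
    (1 : SpecialLinearGroup (Fin 2) F) i k = (1 : Matrix (Fin 2) (Fin 2) F) i k := rfl

theorem e12_add (x y : F) : e12 (x + y) = e12 x * e12 y := by
  apply sl2_ext <;> simp [add_comm]
theorem e21_add (x y : F) : e21 (x + y) = e21 x * e21 y := by
  apply sl2_ext <;> simp
@[simp] theorem e12_zero : e12 (0 : F) = 1 := by apply sl2_ext <;> simp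
@[simp] theorem e21_zero : e21 (0 : F) = 1 := by apply sl2_ext <;> simp
theorem e12_neg (x : F) : e12 (-x) = (e12 x)⁻¹ := by apply sl2_ext <;> simp
theorem e21_neg (x : F) : e21 (-x) = (e21 x)⁻¹ := by apply sl2_ext <;> simp

theorem hd_mul (u v : Fˣ) : hd (u * v) = hd u * hd v := by
  apply sl2_ext <;> simp [mul_comm]
theorem hd_one : hd (1 : Fˣ) = 1 := by apply sl2_ext <;> simp
/-- `hd` as a homomorphism. -/
def hdHom : Fˣ →* SpecialLinearGroup (Fin 2) F where
  toFun := hd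
  map_one' := hd_one
  map_mul' := hd_mul
theorem hd_inv (u : Fˣ) : hd u⁻¹ = (hd u)⁻¹ := map_inv hdHom u
theorem hd_pow (u : Fˣ) (n : ℕ) : hd (u ^ n) = hd u ^ n := map_pow hdHom u n
theorem hd_zpow (u : Fˣ) (n : ℤ) : hd (u ^ n) = hd u ^ n := map_zpow hdHom u n

theorem hd_conj_e12 (u : Fˣ) (x : F) : hd u * e12 x * (hd u)⁻¹ = e12 ((u : F) ^ 2 * x) := by
  apply sl2_ext <;> simp; ring
theorem hd_conj_e21 (u : Fˣ) (x : F) :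
    hd u * e21 x * (hd u)⁻¹ = e21 (((u⁻¹ : Fˣ) : F) ^ 2 * x) := by
  apply sl2_ext <;> simp; ring
theorem wl_conj_e12 (x : F) : wl * e12 x * wl⁻¹ = e21 (-x) := by
  apply sl2_ext <;> simp
theorem wl_conj_e21 (x : F) : wl * e21 x * wl⁻¹ = e12 (-x) := by
  apply sl2_ext <;> simp

/-- The subgroup generated by the elementary matrices with off-diagonal entry in `jR`. -/
def El (F : Type*) [CommRing F] (j : ℕ) : Subgroup (SpecialLinearGroup (Fin 2) F) :=
  Subgroup.closure ({g | ∃ r : F, g = e12 (j * r)} ∪ {g | ∃ r : F, g = e21 (j * r)})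

theorem e12_mem_El (j : ℕ) (r : F) : e12 (j * r) ∈ El F j :=
  Subgroup.subset_closure (Or.inl ⟨r, rfl⟩)
theorem e21_mem_El (j : ℕ) (r : F) : e21 (j * r) ∈ El F j :=
  Subgroup.subset_closure (Or.inr ⟨r, rfl⟩)

theorem El_le {j : ℕ} {H : Subgroup (SpecialLinearGroup (Fin 2) F)}
    (h12 : ∀ r : F, e12 (j * r) ∈ H) (h21 : ∀ r : F, e21 (j * r) ∈ H) : El F j ≤ H := by
  rw [El, Subgroup.closure_le]
  rintro g (⟨r, rfl⟩ | ⟨r, rfl⟩)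
  · exact h12 r
  · exact h21 r

theorem El_mono {j k : ℕ} (h : j ∣ k) : El F k ≤ El F j := by
  obtain ⟨c, rfl⟩ := h
  refine El_le (fun r => ?_) (fun r => ?_) <;> push_cast <;> rw [mul_assoc]
  · exact e12_mem_El j _
  · exact e21_mem_El j _

theorem conj_mem_El_of {j k : ℕ} {g : SpecialLinearGroup (Fin 2) F}
    (h12 : ∀ r : F, g * e12 (k * r) * g⁻¹ ∈ El F j) (h21 : ∀ r : F, g * e21 (k * r) * g⁻¹ ∈ El F j)
    {e : SpecialLinearGroup (Fin 2) F} (he : e ∈ El F k) : g * e * g⁻¹ ∈ El F j := by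
  have : El F k ≤ (El F j).comap (MulAut.conj g).toMonoidHom := El_le h12 h21
  exact this he

theorem hd_conj_El (u : Fˣ) {j : ℕ} {e : SpecialLinearGroup (Fin 2) F} (he : e ∈ El F j) :
    hd u * e * (hd u)⁻¹ ∈ El F j := by
  refine conj_mem_El_of (fun r => ?_) (fun r => ?_) he
  · rw [hd_conj_e12, mul_left_comm]; exact e12_mem_El _ _
  · rw [hd_conj_e21, mul_left_comm]; exact e21_mem_El _ _

theorem wl_conj_El {j : ℕ} {e : SpecialLinearGroup (Fin 2) F} (he : e ∈ El F j) :
    wl * e * wl⁻¹ ∈ El F j := by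
  refine conj_mem_El_of (fun r => ?_) (fun r => ?_) he
  · rw [wl_conj_e12, ← mul_neg]; exact e21_mem_El _ _
  · rw [wl_conj_e21, ← mul_neg]; exact e12_mem_El _ _

theorem wl_mem_El : wl ∈ El F 1 := by
  have : (wl : SpecialLinearGroup (Fin 2) F) = e12 (((1 : ℕ) : F) * 1) *
      e21 (((1 : ℕ) : F) * (-1)) * e12 (((1 : ℕ) : F) * 1) := by
    apply sl2_ext <;> simp
  rw [this]
  exact mul_mem (mul_mem (e12_mem_El 1 _) (e21_mem_El 1 _)) (e12_mem_El 1 _)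

/-- Diagonal matrices congruent to `1` modulo `j²` lie in `El F j`. -/
theorem hd_mem_El (j : ℕ) (u : Fˣ) (h : (j : F) ^ 2 ∣ (u : F) - 1) : hd u ∈ El F j := by
  obtain ⟨r, hr⟩ := h
  have hu : (u : F) * ((u⁻¹ : Fˣ) : F) = 1 := by simp
  have : hd u = e21 ((j : F) * (-((u⁻¹ : Fˣ) : F))) * e12 (j * r) * e21 ((j : F) * 1) *
      e12 (j * (-(r * ((u⁻¹ : Fˣ) : F)))) := by
    apply sl2_ext <;> simp
    · linear_combination hr
    · linear_combination ((j : F) * r) * hu - (j * r * ((u⁻¹ : Fˣ) : F)) * hr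
    · linear_combination (j : F) * hu - (j * ((u⁻¹ : Fˣ) : F)) * hr
    · linear_combination (-(j:F)^2 * r * ((u⁻¹ : Fˣ) : F)  + 1) * hu + (((u⁻¹ : Fˣ) : F) ^ 2 * j ^ 2 * r - ((u⁻¹ : Fˣ) : F)) * hr
  rw [this]
  exact mul_mem (mul_mem (mul_mem (e21_mem_El _ _) (e12_mem_El _ _)) (e21_mem_El _ _)) (e12_mem_El _ _)

/-- The principal congruence subgroup of level `j`. -/
def Cg (F : Type*) [CommRing F] (j : ℕ) : Subgroup (SpecialLinearGroup (Fin 2) F) :=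
  (SpecialLinearGroup.map (Ideal.Quotient.mk (Ideal.span {(j : F)}))).ker

instance (j : ℕ) : (Cg F j).Normal := by unfold Cg; infer_instance

theorem mem_Cg {j : ℕ} {g : SpecialLinearGroup (Fin 2) F} : g ∈ Cg F j ↔
    (j : F) ∣ g 0 0 - 1 ∧ (j : F) ∣ g 0 1 ∧ (j : F) ∣ g 1 0 ∧ (j : F) ∣ g 1 1 - 1 := by
  have key : ∀ x : F, (j : F) ∣ x ↔ Ideal.Quotient.mk (Ideal.span {(j : F)}) x = 0 := fun x => by
    rw [Ideal.Quotient.eq_zero_iff_mem, Ideal.mem_span_singleton]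
  rw [Cg, MonoidHom.mem_ker]
  simp only [key, map_sub, map_one, sub_eq_zero]
  constructor
  · intro h
    have h' : ∀ i k, Ideal.Quotient.mk (Ideal.span {(j : F)}) (g i k) =
      (1 : Matrix (Fin 2) (Fin 2) _) i k := fun i k => by
      rw [← sl2_one_apply, ← h]; rfl
    exact ⟨h' 0 0, h' 0 1, h' 1 0, h' 1 1⟩
  · rintro ⟨h1, h2, h3, h4⟩
    exact sl2_ext h1 h2 h3 h4

theorem Cg_mono {j k : ℕ} (h : j ∣ k) : Cg F k ≤ Cg F j := by
  intro g hg
  have hjk : (j : F) ∣ (k : F) := by exact_mod_cast (Nat.castRingHom F).map_dvd h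
  rw [mem_Cg] at hg ⊢
  exact ⟨hjk.trans hg.1, hjk.trans hg.2.1, hjk.trans hg.2.2.1, hjk.trans hg.2.2.2⟩

theorem El_le_Cg (j : ℕ) : El F j ≤ Cg F j :=
  El_le (fun r => mem_Cg.2 (by simp)) (fun r => mem_Cg.2 (by simp))
end

section
variable {F : Type*} [Field F]

/-- `SL₂` of a field is generated by elementary matrices. -/
theorem sl2_field_induction {P : SpecialLinearGroup (Fin 2) F → Prop}
    (h12 : ∀ x, P (e12 x)) (h21 : ∀ x, P (e21 x)) (hmul : ∀ g h, P g → P h → P (g * h))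
    (g : SpecialLinearGroup (Fin 2) F) : P g := by
  have key : ∀ g : SpecialLinearGroup (Fin 2) F, g 1 0 ≠ 0 → P g := by
    intro g hg
    have hdet := sl2_det g
    have : g = e12 ((g 0 0 - 1) / g 1 0) * e21 (g 1 0) * e12 ((g 1 1 - 1) / g 1 0) := by
      apply sl2_ext <;> simp <;> field_simp <;> first | ring1 | linear_combination hdet | linear_combination (-1 : F) * hdet
    rw [this]
    exact hmul _ _ (hmul _ _ (h12 _) (h21 _)) (h12 _)
  by_cases hg : g 1 0 = 0
  · have h00 : g 0 0 ≠ 0 := by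
      intro h
      have := sl2_det g
      simp [h, hg] at this
    have : g = e21 (-1) * (e21 1 * g) := by rw [← mul_assoc, ← e21_add]; simp
    rw [this]
    exact hmul _ _ (h21 _) (key _ (by simpa [hg] using h00))
  · exact key g hg
end

end

/-! ### Elementary groups inside SL₂(K) -/

section

open Matrix

/-- Partial fractions: the inverses of sufficiently many rational translates of a primitive
element span the number field over `ℚ`. -/
theorem exists_partial_fractions {K : Type*} [Field K] [NumberField K] {η : K}
    (hη : IntermediateField.adjoin ℚ {η} = ⊤) :
    ∃ d : ℕ, ∀ v : ℕ → ℚ, Function.Injective v → (∀ i, η - v i ≠ 0) → ∀ x : K, ∃ w : ℕ → ℚ,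
      x = ∑ i ∈ Finset.range (d + 1), w i • (η - v i)⁻¹ := by
  obtain ⟨d, hd⟩ := exists_poly_of_primitive hη
  refine ⟨d, fun v hv hne x => ?_⟩
  set s := Finset.range (d + 1)
  have hP : Polynomial.aeval η (Lagrange.nodal s v) ≠ 0 := by
    rw [Lagrange.nodal, map_prod, Finset.prod_ne_zero_iff]
    intro i _
    simpa using hne i
  obtain ⟨q, hq, hqx⟩ := hd (x * Polynomial.aeval η (Lagrange.nodal s v))
  have hdeg : q.degree < s.card := by
    rw [Finset.card_range]
    exact lt_of_le_of_lt (Polynomial.degree_le_of_natDegree_le hq) (by exact_mod_cast Nat.lt_succ_self d)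
  have h1 := Lagrange.eq_interpolate hv.injOn hdeg
  rw [Lagrange.interpolate_eq_nodalWeight_mul_nodal_div_X_sub_C] at h1
  refine ⟨fun i => Lagrange.nodalWeight s v i * q.eval (v i), ?_⟩
  have h2 : x * Polynomial.aeval η (Lagrange.nodal s v) =
      (∑ i ∈ s, (Lagrange.nodalWeight s v i * q.eval (v i)) • (η - v i)⁻¹) *
        Polynomial.aeval η (Lagrange.nodal s v) := by
    rw [← hqx]
    conv_lhs => rw [h1]
    rw [map_sum, Finset.sum_mul]
    refine Finset.sum_congr rfl fun i hi => ?_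
    rw [← Lagrange.nodal_erase_eq_nodal_div hi]
    conv_rhs => rw [Lagrange.nodal_eq_mul_nodal_erase hi]
    have := hne i
    simp only [map_mul, Polynomial.aeval_C, map_sub, Polynomial.aeval_X, eq_ratCast, Algebra.smul_def]
    field_simp
  exact mul_right_cancel₀ hP h2

section
variable {R : Type*} [CommRing R] [IsDomain R]
variable (K : Type*) [Field K] [Algebra R K]

/-- The inclusion `SL₂(R) → SL₂(K)`. -/
def phi (R : Type*) [CommRing R] (K : Type*) [Field K] [Algebra R K] :
    SpecialLinearGroup (Fin 2) R →* SpecialLinearGroup (Fin 2) K :=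
  SpecialLinearGroup.map (algebraMap R K)

@[simp] theorem phi_apply (g : SpecialLinearGroup (Fin 2) R) (i k : Fin 2) :
    phi R K g i k = algebraMap R K (g i k) := rfl

theorem phi_e12 (x : R) : phi R K (e12 x) = e12 (algebraMap R K x) := by
  apply sl2_ext <;> simp
theorem phi_e21 (x : R) : phi R K (e21 x) = e21 (algebraMap R K x) := by
  apply sl2_ext <;> simp
theorem phi_wl : phi R K wl = wl := by
  apply sl2_ext <;> simp
theorem phi_hd (u : Rˣ) : phi R K (hd u) = hd (Units.map (algebraMap R K).toMonoidHom u) := by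
  apply sl2_ext <;> simp

theorem phi_injective [IsFractionRing R K] : Function.Injective (phi R K) := by
  intro g h hgh
  have hinj := IsFractionRing.injective R K
  have : ∀ i k, g i k = h i k := fun i k => hinj (by rw [← phi_apply, hgh, phi_apply])
  exact sl2_ext (this _ _) (this _ _) (this _ _) (this _ _)

/-- The image of `El R j` in `SL₂(K)`. -/
def ElK (R : Type*) [CommRing R] (K : Type*) [Field K] [Algebra R K] (j : ℕ) :
    Subgroup (SpecialLinearGroup (Fin 2) K) := (El R j).map (phi R K)

variable {K}

theorem ElK_mono {j k : ℕ} (h : j ∣ k) : ElK R K k ≤ ElK R K j := Subgroup.map_mono (El_mono h)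

theorem e12_mem_ElK (j : ℕ) (r : R) : e12 (algebraMap R K (j * r)) ∈ ElK R K j :=
  ⟨_, e12_mem_El j r, phi_e12 K _⟩
theorem e21_mem_ElK (j : ℕ) (r : R) : e21 (algebraMap R K (j * r)) ∈ ElK R K j :=
  ⟨_, e21_mem_El j r, phi_e21 K _⟩
theorem hd_mem_ElK (j : ℕ) (u : Rˣ) (h : (j : R) ^ 2 ∣ (u : R) - 1) :
    hd (Units.map (algebraMap R K).toMonoidHom u) ∈ ElK R K j :=
  ⟨_, hd_mem_El j u h, phi_hd K _⟩

theorem hd_conj_ElK (u : Rˣ) {j : ℕ} {e : SpecialLinearGroup (Fin 2) K} (he : e ∈ ElK R K j) :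
    hd (Units.map (algebraMap R K).toMonoidHom u) * e *
      (hd (Units.map (algebraMap R K).toMonoidHom u))⁻¹ ∈ ElK R K j := by
  obtain ⟨e, he, rfl⟩ := he
  refine ⟨_, hd_conj_El u he, ?_⟩
  rw [map_mul, map_mul, map_inv, phi_hd]

/-- Conjugation by `x` is continuous at the identity for the topology defined by the groups
`El R j`. -/
def ContK (R : Type*) [CommRing R] {K : Type*} [Field K] [Algebra R K]
    (x : SpecialLinearGroup (Fin 2) K) : Prop :=
  ∀ j : ℕ, 1 ≤ j → ∃ j' : ℕ, 1 ≤ j' ∧ ∀ e ∈ ElK R K j', x * e * x⁻¹ ∈ ElK R K j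

/-- Continuity of a conjugation needs to be checked on elementary matrices only. -/
theorem contK_of_gens {x : SpecialLinearGroup (Fin 2) K}
    (h12 : ∀ j : ℕ, 1 ≤ j → ∃ N : ℕ, 1 ≤ N ∧
      ∀ r : R, x * e12 (algebraMap R K (N * r)) * x⁻¹ ∈ ElK R K j)
    (h21 : ∀ j : ℕ, 1 ≤ j → ∃ N : ℕ, 1 ≤ N ∧
      ∀ r : R, x * e21 (algebraMap R K (N * r)) * x⁻¹ ∈ ElK R K j) : ContK R x := by
  intro j hj
  obtain ⟨N, hN, h1⟩ := h12 j hj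
  obtain ⟨N', hN', h2⟩ := h21 j hj
  refine ⟨N * N', Nat.mul_pos hN hN', ?_⟩
  have : El R (N * N') ≤ (ElK R K j).comap ((MulAut.conj x).toMonoidHom.comp (phi R K)) := by
    refine El_le (fun r => ?_) (fun r => ?_)
    · change x * phi R K (e12 _) * x⁻¹ ∈ ElK R K j
      rw [phi_e12]
      rw [Nat.cast_mul, mul_assoc (N : R)]
      exact h1 _
    · change x * phi R K (e21 _) * x⁻¹ ∈ ElK R K j
      rw [phi_e21]
      rw [Nat.cast_mul, mul_comm (N : R), mul_assoc (N' : R)]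
      exact h2 _
  rintro _ ⟨e, he, rfl⟩
  exact this he

theorem ContK.mul {x y : SpecialLinearGroup (Fin 2) K} (hx : ContK R x) (hy : ContK R y) :
    ContK R (x * y) := by
  intro j hj
  obtain ⟨j1, hj1, h1⟩ := hx j hj
  obtain ⟨j2, hj2, h2⟩ := hy j1 hj1
  refine ⟨j2, hj2, fun e he => ?_⟩
  have := h1 _ (h2 e he)
  simpa [mul_assoc] using this

theorem contK_wl : ContK R (wl : SpecialLinearGroup (Fin 2) K) := by
  intro j hj
  refine ⟨j, hj, ?_⟩
  rintro _ ⟨e, he, rfl⟩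
  refine ⟨_, wl_conj_El he, ?_⟩
  rw [map_mul, map_mul, map_inv, phi_wl]

theorem contK_wl_inv : ContK R (wl⁻¹ : SpecialLinearGroup (Fin 2) K) := by
  have h : (wl⁻¹ : SpecialLinearGroup (Fin 2) K) = wl * (wl * wl) := by
    apply sl2_ext <;> simp
  rw [h]
  exact contK_wl.mul (contK_wl.mul contK_wl)

/-- The additive group of those `z ∈ K` for which the conjugate of `e21 z` by `e12 y` lies in the
image of `El R j`. -/
def Zgrp (R : Type*) [CommRing R] {K : Type*} [Field K] [Algebra R K] (y : K) (j : ℕ) :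
    AddSubgroup K where
  carrier := {z | e12 y * e21 z * (e12 y)⁻¹ ∈ ElK R K j}
  zero_mem' := by simp [one_mem]
  add_mem' := by
    intro a b ha hb
    have ha' : e12 y * e21 a * (e12 y)⁻¹ ∈ ElK R K j := ha
    have hb' : e12 y * e21 b * (e12 y)⁻¹ ∈ ElK R K j := hb
    change e12 y * e21 (a + b) * (e12 y)⁻¹ ∈ ElK R K j
    have := mul_mem ha' hb'
    simpa [e21_add, mul_assoc] using this
  neg_mem' := by
    intro a ha
    have ha' : e12 y * e21 a * (e12 y)⁻¹ ∈ ElK R K j := ha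
    change e12 y * e21 (-a) * (e12 y)⁻¹ ∈ ElK R K j
    have := inv_mem ha'
    simpa [e21_neg, mul_assoc] using this

theorem mem_Zgrp {y z : K} {j : ℕ} :
    z ∈ Zgrp R y j ↔ e12 y * e21 z * (e12 y)⁻¹ ∈ ElK R K j := Iff.rfl

/-- `Zgrp R y j` is stable under `ε⁻²` for units `ε` with `(ε² - 1) y ∈ jR`: conjugate by `hd ε`.
-/
theorem Zgrp_unit_smul {y : K} {j : ℕ} (ε : Rˣ) (r : R)
    (hr : algebraMap R K (j * r) = (algebraMap R K ε ^ 2 - 1) * y) {z : K} (hz : z ∈ Zgrp R y j) :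
    (algebraMap R K ((ε⁻¹ : Rˣ) : R)) ^ 2 * z ∈ Zgrp R y j := by
  rw [mem_Zgrp] at hz ⊢
  have h1 := hd_conj_ElK ε hz
  have h2 := mul_mem (mul_mem (inv_mem (e12_mem_ElK (K := K) j r)) h1) (e12_mem_ElK (K := K) j r)
  rw [hr] at h2
  set u := Units.map (algebraMap R K).toMonoidHom ε with hu
  have e1 : hd u * (e12 y * e21 z * (e12 y)⁻¹) * (hd u)⁻¹ =
      (hd u * e12 y * (hd u)⁻¹) * (hd u * e21 z * (hd u)⁻¹) * (hd u * e12 y * (hd u)⁻¹)⁻¹ := by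
    group
  rw [e1, hd_conj_e12, hd_conj_e21] at h2
  have e2 : algebraMap R K ε ^ 2 * y = (algebraMap R K ε ^ 2 - 1) * y + y := by ring
  have hu1 : (u : K) = algebraMap R K ε := rfl
  have hu2 : ((u⁻¹ : Kˣ) : K) = algebraMap R K ((ε⁻¹ : Rˣ) : R) := rfl
  rw [hu1, hu2, e2, e12_add] at h2
  convert h2 using 1
  group

theorem Zgrp_translate {y : K} {j : ℕ} (r : R) :
    Zgrp R (y + algebraMap R K (j * r)) j = Zgrp R y j := by
  ext z
  rw [mem_Zgrp, mem_Zgrp, add_comm, e12_add]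
  have h := e12_mem_ElK (K := K) j r
  set p := e12 (algebraMap R K (j * r))
  have e1 : p * e12 y * e21 z * (p * e12 y)⁻¹ = p * (e12 y * e21 z * (e12 y)⁻¹) * p⁻¹ := by group
  rw [e1]
  constructor
  · intro h1
    have := mul_mem (mul_mem (inv_mem h) h1) h
    convert this using 1
    group
  · intro h1
    exact mul_mem (mul_mem h h1) (inv_mem h)

theorem e12_conj_e21_unit {η : K} (hη : η ≠ 0) (u : Kˣ) :
    e12 η * e21 (((u : K) - 1) * η⁻¹) * (e12 η)⁻¹ =
      e21 (((u : K) - 1) * η⁻¹ * ((u⁻¹ : Kˣ) : K)) * hd u *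
        e12 (-(((u : K) - 1) * η * ((u⁻¹ : Kˣ) : K))) := by
  have h := u.ne_zero
  apply sl2_ext <;> simp <;> field_simp <;> ring

/-- The basic elements of `Zgrp`: they come from the identity
`e12 η * e21 z = e21 (z / ε) * diag(ε, ε⁻¹) * e12 (η / ε)` for `ε = 1 + η z`. -/
theorem Zgrp_basic {η : K} (hη : η ≠ 0) {j N1 N2 : ℕ} {r1 r2 : R}
    (h1 : algebraMap R K r1 = N1 * η⁻¹) (h2 : algebraMap R K r2 = N2 * η) (ε : Rˣ)
    (hε : (j : R) ^ 2 * N1 * N2 ∣ (ε : R) - 1) :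
    (algebraMap R K ε - 1) * η⁻¹ ∈ Zgrp R η j := by
  obtain ⟨c, hc⟩ := hε
  rw [mem_Zgrp]
  have hcK : algebraMap R K ε - 1 = j ^ 2 * N1 * N2 * algebraMap R K c := by
    rw [← map_one (algebraMap R K), ← map_sub, hc]; simp
  have key : e12 η * e21 ((algebraMap R K ε - 1) * η⁻¹) * (e12 η)⁻¹ =
      e21 (algebraMap R K (j * (j * N2 * r1 * c * ((ε⁻¹ : Rˣ) : R)))) *
      hd (Units.map (algebraMap R K).toMonoidHom ε) *
      e12 (algebraMap R K (j * (-(j * N1 * r2 * c * ((ε⁻¹ : Rˣ) : R))))) := by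
    have hz1 : algebraMap R K (j * (j * N2 * r1 * c * ((ε⁻¹ : Rˣ) : R))) =
        (algebraMap R K ε - 1) * η⁻¹ * algebraMap R K ((ε⁻¹ : Rˣ) : R) := by
      simp only [map_mul, map_natCast, h1, hcK]; ring
    have hz2 : algebraMap R K (j * (-(j * N1 * r2 * c * ((ε⁻¹ : Rˣ) : R)))) =
        - ((algebraMap R K ε - 1) * η * algebraMap R K ((ε⁻¹ : Rˣ) : R)) := by
      simp only [map_mul, map_neg, map_natCast, h2, hcK]; ring
    rw [hz1, hz2]
    exact e12_conj_e21_unit hη (Units.map (algebraMap R K).toMonoidHom ε)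
  rw [key]
  refine mul_mem (mul_mem (e21_mem_ElK _ _) (hd_mem_ElK _ _ ⟨N1 * N2 * c, ?_⟩)) (e12_mem_ElK _ _)
  rw [hc]; ring

end

end

/-! ### Continuity of conjugation by SL₂(K) -/

section

open Matrix

section
variable {R : Type*} [CommRing R] [IsDomain R] [OrderLoc R]
variable {K : Type*} [Field K] [NumberField K] [Algebra R K] [IsFractionRing R K]

/-- Every element of `K` has a multiple in `Zgrp`. This group contains the elements
`(ε - 1) / (η + j i)` for a primitive element `η`, a suitable unit `ε` and a range of integers `i`;
by partial fractions these span `K` over `ℚ`. -/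
theorem exists_nsmul_mem_Zgrp {ω : Rˣ} (hω : ∀ n : ℕ, 1 ≤ n → ω ^ n ≠ 1) (y : K) {j : ℕ}
    (hj : 1 ≤ j) (x : K) : ∃ N : ℕ, N ≠ 0 ∧ (N : K) * x ∈ Zgrp R y j := by
  obtain ⟨θ, hθ, hθ0⟩ := exists_primitive_mem (R := R) K
  obtain ⟨c, hc, -⟩ := exists_primitive_shift hθ hθ0 y (M := j) (by omega)
  set η := y + c * j * algebraMap R K θ with hη
  have hjK : (j : K) ≠ 0 := by exact_mod_cast (by omega : j ≠ 0)
  obtain ⟨n0, hn0⟩ : ∃ n0 : ℕ, ∀ i : ℕ, n0 ≤ i → η + j * i ≠ 0 := by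
    by_cases h : ∃ i : ℕ, η + j * i = 0
    · obtain ⟨i, hi⟩ := h
      refine ⟨i + 1, fun i' hi' h0 => ?_⟩
      have : (j : K) * i = j * i' := by linear_combination hi - h0
      have := mul_left_cancel₀ hjK this
      have : i = i' := by exact_mod_cast this
      omega
    · push Not at h
      exact ⟨0, fun i _ => h i⟩
  obtain ⟨d, hd⟩ := exists_partial_fractions hc
  have hη' : ∀ i : ℕ, η + j * ((n0 + i : ℕ) : K) ≠ 0 := fun i => hn0 _ (by omega)
  choose N1 hN1 r1 hr1 using fun i : ℕ => exists_nat_mul_mem (R := R) K (η + j * ((n0 + i : ℕ) : K))⁻¹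
  choose N2 hN2 r2 hr2 using fun i : ℕ => exists_nat_mul_mem (R := R) K (η + j * ((n0 + i : ℕ) : K))
  set M := j ^ 2 * ∏ i ∈ Finset.range (d + 1), (N1 i * N2 i) with hM
  have hM0 : M ≠ 0 := by
    refine mul_ne_zero (pow_ne_zero _ (by omega)) (Finset.prod_ne_zero_iff.2 fun i _ => ?_)
    exact mul_ne_zero (hN1 i) (hN2 i)
  obtain ⟨k, hk, hkM⟩ := OrderLoc.exists_unit_pow ω hM0
  set ε := ω ^ k with hε
  have hε1 : algebraMap R K ε - 1 ≠ 0 := by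
    intro h
    apply hω k hk
    ext
    apply IsFractionRing.injective R K
    rw [sub_eq_zero.1 h]; simp
  have hεM : (M : R) ∣ (ε : R) - 1 := by have := hkM 1; rwa [mul_one] at this
  have hz : ∀ i ∈ Finset.range (d + 1), (algebraMap R K ε - 1) * (η + j * ((n0 + i : ℕ) : K))⁻¹ ∈
      Zgrp R y j := by
    intro i hi
    have h1 := Zgrp_basic (hη' i) (j := j) (hr1 i) (hr2 i) ε (by
      refine dvd_trans ?_ hεM
      have : j ^ 2 * N1 i * N2 i ∣ M := by
        rw [hM, mul_assoc]
        exact mul_dvd_mul_left _ (Finset.dvd_prod_of_mem (fun i => N1 i * N2 i) hi)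
      exact_mod_cast (Nat.castRingHom R).map_dvd this)
    have h2 : η + j * ((n0 + i : ℕ) : K) =
        y + algebraMap R K (j * (c * θ + ((n0 + i : ℕ) : R))) := by
      simp only [hη, map_mul, map_add, map_natCast]; ring
    have h3 := Zgrp_translate (K := K) (y := y) (j := j) (c * θ + ((n0 + i : ℕ) : R))
    rw [← h2] at h3
    rwa [h3] at h1
  obtain ⟨w, hw⟩ := hd (fun i => -(j * ((n0 + i : ℕ) : ℚ))) (by
      intro a b hab
      have hjQ : (j : ℚ) ≠ 0 := by exact_mod_cast (by omega : j ≠ 0)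
      have := mul_left_cancel₀ hjQ (neg_injective hab)
      have : n0 + a = n0 + b := by exact_mod_cast this
      omega) (by
      intro i
      have := hη' i
      push_cast at this ⊢
      simpa using this) (x / (algebraMap R K ε - 1))
  -- rational multiples of elements of `Zgrp` are again divisible into `Zgrp`
  let ZQ : Submodule ℚ K :=
    { carrier := {z | ∃ N : ℕ, N ≠ 0 ∧ (N : K) * z ∈ Zgrp R y j}
      zero_mem' := ⟨1, one_ne_zero, by simp⟩
      add_mem' := by
        rintro a b ⟨N, hN, ha⟩ ⟨N', hN', hb⟩
        refine ⟨N * N', mul_ne_zero hN hN', ?_⟩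
        have := add_mem (nsmul_mem ha N') (nsmul_mem hb N)
        simp only [nsmul_eq_mul] at this
        convert this using 1
        push_cast; ring
      smul_mem' := by
        rintro q a ⟨N, hN, ha⟩
        refine ⟨N * q.den, mul_ne_zero hN q.den_ne_zero, ?_⟩
        have := zsmul_mem ha q.num
        rw [zsmul_eq_mul] at this
        convert this using 1
        have hq : (q : K) * q.den = q.num := by exact_mod_cast Rat.mul_den_eq_num q
        rw [Rat.smul_def]
        push_cast
        linear_combination (N * a) * hq }
  have hx : x = ∑ i ∈ Finset.range (d + 1),
      w i • ((algebraMap R K ε - 1) * (η + j * ((n0 + i : ℕ) : K))⁻¹) := by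
    rw [div_eq_iff hε1] at hw
    rw [hw, Finset.sum_mul]
    refine Finset.sum_congr rfl fun i _ => ?_
    push_cast
    rw [sub_neg_eq_add, smul_mul_assoc, mul_comm]
  have : x ∈ ZQ := by
    rw [hx]
    exact sum_mem fun i hi => ZQ.smul_mem _ ⟨1, one_ne_zero, by simpa using hz i hi⟩
  exact this

/-- A single multiple works for the whole ring `R`. -/
theorem exists_forall_mem_Zgrp {ω : Rˣ} (hω : ∀ n : ℕ, 1 ≤ n → ω ^ n ≠ 1) (y : K) {j : ℕ}
    (hj : 1 ≤ j) : ∃ N : ℕ, 1 ≤ N ∧ ∀ r : R, algebraMap R K (N * r) ∈ Zgrp R y j := by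
  obtain ⟨A, hfg, hA⟩ := OrderLoc.exists_order (R := R)
  obtain ⟨s, hs⟩ := hfg
  choose N hN hNm using fun x : R => exists_nsmul_mem_Zgrp hω y hj (algebraMap R K x)
  set N0 := ∏ x ∈ s, N x with hN0
  have hN0' : N0 ≠ 0 := Finset.prod_ne_zero_iff.2 fun x _ => hN x
  have hA0 : ∀ a ∈ A, algebraMap R K (N0 * a) ∈ Zgrp R y j := by
    intro a ha
    have ha' : a ∈ Submodule.span ℤ (s : Set R) := by rw [hs]; exact ha
    induction ha' using Submodule.span_induction with
    | mem x hx =>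
      obtain ⟨c, hc⟩ : N x ∣ N0 := Finset.dvd_prod_of_mem _ hx
      have := nsmul_mem (hNm x) c
      rw [nsmul_eq_mul] at this
      convert this using 1
      rw [hc]; simp only [Nat.cast_mul, map_mul, map_natCast]; ring
    | zero => simp
    | add x y _ _ hx hy =>
      have := add_mem (hx (by rw [← Subalgebra.mem_toSubmodule, ← hs]; assumption))
        (hy (by rw [← Subalgebra.mem_toSubmodule, ← hs]; assumption))
      rwa [← map_add, ← mul_add] at this
    | smul n x _ hx =>
      have := zsmul_mem (hx (by rw [← Subalgebra.mem_toSubmodule, ← hs]; assumption)) n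
      rw [← map_zsmul, ← mul_smul_comm] at this
      exact this
  obtain ⟨Ny, hNy, ry, hry⟩ := exists_nat_mul_mem (R := R) K y
  refine ⟨N0, by omega, fun x => ?_⟩
  obtain ⟨t, htA, ht, htx⟩ := hA x
  obtain ⟨u, rfl⟩ := ht
  obtain ⟨k, hk, hkM⟩ := OrderLoc.exists_unit_pow u (mul_ne_zero (by omega : j ≠ 0) hNy)
  have hk1 : ((j * Ny : ℕ) : R) ∣ ((u ^ k : Rˣ) : R) - 1 := by simpa using hkM 1
  obtain ⟨c, hc⟩ := hk1
  have h1 := hA0 ((u : R) ^ (2 * k - 1) * (u * x)) (mul_mem (pow_mem htA _) htx)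
  have h2 := Zgrp_unit_smul (u ^ k) (c * ry * (((u ^ k : Rˣ) : R) + 1)) (by
      have hcK : algebraMap R K ((u ^ k : Rˣ) : R) - 1 = j * Ny * algebraMap R K c := by
        rw [← map_one (algebraMap R K), ← map_sub, hc]; simp
      have : (algebraMap R K ((u ^ k : Rˣ) : R)) ^ 2 - 1 =
        (algebraMap R K ((u ^ k : Rˣ) : R) - 1) * (algebraMap R K ((u ^ k : Rˣ) : R) + 1) := by ring
      rw [this, hcK]
      simp only [map_mul, map_add, map_natCast, map_one, hry]
      ring) h1
  rw [← map_pow, ← map_mul] at h2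
  convert h2 using 2
  have e1 : (u : R) ^ (2 * k - 1) * (u * x) = ((u ^ k : Rˣ) : R) ^ 2 * x := by
    rw [← mul_assoc, ← pow_succ, Units.val_pow_eq_pow_val, ← pow_mul]
    congr 2; omega
  have e2 : (((u ^ k)⁻¹ : Rˣ) : R) * ((u ^ k : Rˣ) : R) = 1 := Units.inv_mul _
  rw [e1]
  have e3 : (((u ^ k)⁻¹ : Rˣ) : R) ^ 2 * (N0 * (((u ^ k : Rˣ) : R) ^ 2 * x)) =
    ((((u ^ k)⁻¹ : Rˣ) : R) * ((u ^ k : Rˣ) : R)) ^ 2 * (N0 * x) := by ring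
  rw [e3, e2, one_pow, one_mul]

theorem contK_e12 {ω : Rˣ} (hω : ∀ n : ℕ, 1 ≤ n → ω ^ n ≠ 1) (y : K) : ContK R (e12 y) := by
  refine contK_of_gens (fun j hj => ⟨j, hj, fun r => ?_⟩) (fun j hj => ?_)
  · rw [← e12_add, ← e12_neg, ← e12_add, add_assoc, add_comm, add_assoc, neg_add_cancel, add_zero]
    exact e12_mem_ElK j r
  · exact exists_forall_mem_Zgrp hω y hj

/-- Conjugation by every element of `SL₂(K)` is continuous for the groups `El R j`. -/
theorem contK {ω : Rˣ} (hω : ∀ n : ℕ, 1 ≤ n → ω ^ n ≠ 1)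
    (x : SpecialLinearGroup (Fin 2) K) : ContK R x := by
  refine sl2_field_induction (P := ContK R) (contK_e12 hω) (fun y => ?_)
    (fun _ _ => ContK.mul) x
  have h := wl_conj_e12 (-y)
  rw [neg_neg] at h
  rw [← h]
  exact (contK_wl.mul (contK_e12 hω _)).mul contK_wl_inv
end

end

/-! ### Conjugation by diagonal matrices and double cosets -/

section

open Matrix

section
variable {R : Type*} [CommRing R]

/-- The integers `e` such that conjugation by `diag(u, u⁻¹)^e` maps `g` into the double coset of
`g` with respect to `El R j`. -/
def Ex (j : ℕ) (u : Rˣ) (g : SpecialLinearGroup (Fin 2) R) : AddSubgroup ℤ where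
  carrier := {e | ∃ p ∈ El R j, ∃ q ∈ El R j, hd (u ^ e) * g * (hd (u ^ e))⁻¹ = p * g * q}
  zero_mem' := ⟨1, one_mem _, 1, one_mem _, by simp [hd_one]⟩
  add_mem' := by
    rintro e f ⟨p, hp, q, hq, h1⟩ ⟨p', hp', q', hq', h2⟩
    refine ⟨hd (u ^ e) * p' * (hd (u ^ e))⁻¹ * p, mul_mem (hd_conj_El _ hp') hp,
      q * (hd (u ^ e) * q' * (hd (u ^ e))⁻¹), mul_mem hq (hd_conj_El _ hq'), ?_⟩
    have : hd (u ^ (e + f)) * g * (hd (u ^ (e + f)))⁻¹ =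
        hd (u ^ e) * (hd (u ^ f) * g * (hd (u ^ f))⁻¹) * (hd (u ^ e))⁻¹ := by
      rw [_root_.zpow_add, hd_mul]; group
    rw [this, h2]
    have : hd (u ^ e) * (p' * g * q') * (hd (u ^ e))⁻¹ =
      hd (u ^ e) * p' * (hd (u ^ e))⁻¹ * (hd (u ^ e) * g * (hd (u ^ e))⁻¹) *
        (hd (u ^ e) * q' * (hd (u ^ e))⁻¹) := by group
    rw [this, h1]; group
  neg_mem' := by
    rintro e ⟨p, hp, q, hq, h1⟩
    refine ⟨(hd (u ^ (-e)) * p * (hd (u ^ (-e)))⁻¹)⁻¹, inv_mem (hd_conj_El _ hp),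
      (hd (u ^ (-e)) * q * (hd (u ^ (-e)))⁻¹)⁻¹, inv_mem (hd_conj_El _ hq), ?_⟩
    have h2 : g = p⁻¹ * (hd (u ^ e) * g * (hd (u ^ e))⁻¹) * q⁻¹ := by rw [h1]; group
    rw [_root_.zpow_neg, hd_inv]
    conv_lhs => rw [h2]
    group

theorem mem_Ex {j : ℕ} {u : Rˣ} {g : SpecialLinearGroup (Fin 2) R} {e : ℤ} : e ∈ Ex j u g ↔
    ∃ p ∈ El R j, ∃ q ∈ El R j, hd (u ^ e) * g * (hd (u ^ e))⁻¹ = p * g * q := Iff.rfl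

/-- The set `Ex j u g` depends only on the double coset of `g`. -/
theorem mem_Ex_of_coset {j : ℕ} {u : Rˣ} {g p q : SpecialLinearGroup (Fin 2) R}
    (hp : p ∈ El R j) (hq : q ∈ El R j) {e : ℤ} (he : e ∈ Ex j u (p * g * q)) : e ∈ Ex j u g := by
  obtain ⟨a, ha, b, hb, h⟩ := he
  refine ⟨(hd (u ^ e) * p * (hd (u ^ e))⁻¹)⁻¹ * a * p,
    mul_mem (mul_mem (inv_mem (hd_conj_El _ hp)) ha) hp,
    q * b * (hd (u ^ e) * q * (hd (u ^ e))⁻¹)⁻¹,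
    mul_mem (mul_mem hq hb) (inv_mem (hd_conj_El _ hq)), ?_⟩
  have : hd (u ^ e) * g * (hd (u ^ e))⁻¹ = (hd (u ^ e) * p * (hd (u ^ e))⁻¹)⁻¹ *
    (hd (u ^ e) * (p * g * q) * (hd (u ^ e))⁻¹) * (hd (u ^ e) * q * (hd (u ^ e))⁻¹)⁻¹ := by group
  rw [this, h]; group

theorem mem_Ex_of_coset_right {j : ℕ} {u : Rˣ} {g q : SpecialLinearGroup (Fin 2) R}
    (hq : q ∈ El R j) {e : ℤ} (he : e ∈ Ex j u (g * q)) : e ∈ Ex j u g :=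
  mem_Ex_of_coset (one_mem _) hq (by rwa [one_mul])

theorem hd_conj_apply (u : Rˣ) (g : SpecialLinearGroup (Fin 2) R) :
    (hd u * g * (hd u)⁻¹) 0 0 = g 0 0 ∧ (hd u * g * (hd u)⁻¹) 0 1 = (u : R) ^ 2 * g 0 1 ∧
    (hd u * g * (hd u)⁻¹) 1 0 = ((u⁻¹ : Rˣ) : R) ^ 2 * g 1 0 ∧
    (hd u * g * (hd u)⁻¹) 1 1 = g 1 1 := by
  have h : (u : R) * ((u⁻¹ : Rˣ) : R) = 1 := Units.mul_inv u
  simp only [sl2_mul_apply, sl2_inv_00, sl2_inv_01, sl2_inv_10, sl2_inv_11, hd_00, hd_01, hd_10,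
    hd_11]
  refine ⟨?_, ?_, ?_, ?_⟩
  · linear_combination (g 0 0) * h
  · ring
  · ring
  · linear_combination (g 1 1) * h

/-- If the upper left entry `a` of `g` divides `u^(2e) - 1`, conjugation by `diag(u, u⁻¹)^e` is an
elementary modification. -/
theorem mem_Ex_of_dvd {j : ℕ} {u : Rˣ} {g : SpecialLinearGroup (Fin 2) R}
    (h01 : (j : R) ∣ g 0 1) (h10 : (j : R) ∣ g 1 0) {e : ℕ}
    (he : g 0 0 ∣ ((u : R) ^ 2) ^ e - 1) : (e : ℤ) ∈ Ex j u g := by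
  obtain ⟨b, hb⟩ := h01
  obtain ⟨c, hc⟩ := h10
  obtain ⟨k, hk⟩ := he
  set U := (((u ^ e)⁻¹ : Rˣ) : R) with hU
  have hUu : U * (u : R) ^ e = 1 := by
    rw [hU, ← Units.val_pow_eq_pow_val, Units.inv_mul]
  have hu2 : (u : R) ^ e * (u : R) ^ e = 1 + g 0 0 * k := by
    rw [← hk]; ring
  refine ⟨e21 (j * (-(c * U ^ 2 * k))), e21_mem_El _ _, e12 (j * (b * k)), e12_mem_El _ _, ?_⟩
  obtain ⟨q00, q01, q10, q11⟩ := hd_conj_apply (u ^ e) g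
  rw [zpow_natCast]
  rw [← hU] at q10
  rw [Units.val_pow_eq_pow_val] at q01
  have hU2 : U ^ 2 * (1 + g 0 0 * k) = 1 := by
    linear_combination (U * (u : R) ^ e + 1) * hUu - U ^ 2 * hu2
  apply sl2_ext
  · rw [q00]; simp
  · rw [q01]; simp
    linear_combination (g 0 1) * hu2 + g 0 0 * k * hb
  · rw [q10]; simp
    linear_combination (g 1 0) * hU2 - U ^ 2 * g 0 0 * k * hc
  · rw [q11]; simp
    linear_combination (g 1 0 * g 0 1 * k) * hU2 + (-(j * c) * U ^ 2 * k ^ 2 * g 0 0 + g 1 0 * k) * hb +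
      (-(U ^ 2 * k ^ 2 * g 0 0 * g 0 1) - U ^ 2 * k * g 0 1) * hc

end

end

/-! ### Double cosets of elementary groups -/

section

open Matrix

section
variable {R : Type*} [CommRing R] [IsDomain R] [OrderLoc R] [CharZero R]

/-- The integers divisible by `β ≠ 0` in `R` form a nonzero ideal `n₀ ℤ`. -/
theorem exists_modulus {β : R} (hβ : β ≠ 0) : ∃ n₀ : ℕ, n₀ ≠ 0 ∧ ∀ z : ℤ, β ∣ (z : R) ↔ (n₀ : ℤ) ∣ z := by
  obtain ⟨N, hN, hβN⟩ := OrderLoc.exists_nat_dvd hβ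
  set I : Ideal ℤ := (Ideal.span {β}).comap (Int.castRingHom R)
  have hI : ∀ z : ℤ, z ∈ I ↔ β ∣ (z : R) := fun z => by
    rw [Ideal.mem_comap, Ideal.mem_span_singleton]; rfl
  obtain ⟨d, hd⟩ := IsPrincipalIdealRing.principal I
  have hd' : ∀ z : ℤ, β ∣ (z : R) ↔ (d.natAbs : ℤ) ∣ z := fun z => by
    rw [← hI, hd, Int.natAbs_dvd]
    exact Ideal.mem_span_singleton
  refine ⟨d.natAbs, fun h => ?_, hd'⟩
  have := (hd' N).1 (by simpa using hβN)
  rw [h] at this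
  simp at this
  exact hN this

/-- The arithmetic core of the reduction: an elementary modification of the first row of `g` makes
the upper left entry an integer `a'` such that `(R/a'R)ˣ` has a controlled exponent. -/
theorem exists_mem_Ex (K : Type*) [Field K] [NumberField K] [Algebra R K] [IsFractionRing R K]
    {m : ℕ} (hm : ∀ ℓ : ℕ, ℓ.Prime → ∀ A : ℕ, 1 ≤ A → ∀ c : ℕ, c.Coprime A →
      ∃ a' e u : ℕ, (a' : ZMod A) = c ∧ 1 ≤ e ∧ ¬ ℓ ∣ u ∧ e ∣ m * u ∧
        ∀ y : R, IsCoprime y (a' : R) → (a' : R) ∣ y ^ e - 1)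
    (ω : Rˣ) {j : ℕ} (hj : 1 ≤ j) {g : SpecialLinearGroup (Fin 2) R} (hg : g ∈ Cg R (j ^ 2))
    (h00 : g 0 0 ≠ 0) {ℓ : ℕ} (hℓ : ℓ.Prime) :
    ∃ e u : ℕ, (e : ℤ) ∈ Ex j ω g ∧ ¬ ℓ ∣ u ∧ e ∣ m * u := by
  obtain ⟨hg00, ⟨b0, hb0⟩, ⟨c0, hc0⟩, -⟩ := mem_Cg.1 hg
  push_cast at hg00 hb0 hc0
  have hdet := sl2_det g
  have hcop : IsCoprime (g 0 0) (j * b0) :=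
    ⟨g 1 1, -(j * g 1 0), by linear_combination hdet + g 1 0 * hb0⟩
  obtain ⟨s, hs0, hsj, hsZ⟩ := exists_cyclic_quotient K h00 hcop (N := j) (by omega)
  set β := j * b0 + s * g 0 0 with hβ
  obtain ⟨n₀, hn₀, hn₀'⟩ := exists_modulus hs0
  -- `n₀` is prime to `j`
  have hnj : Nat.Coprime n₀ j := by
    obtain ⟨x, y, hxy⟩ := hsj
    obtain ⟨c, hc⟩ := hsZ y
    have : β ∣ ((1 - c * j : ℤ) : R) := by
      obtain ⟨t, ht⟩ := hc
      refine ⟨x + t * j, ?_⟩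
      push_cast
      linear_combination (-1 : R) * hxy + (j : R) * ht
    obtain ⟨z, hz⟩ := (hn₀' _).1 this
    rw [← Nat.isCoprime_iff_coprime]
    exact ⟨z, c, by linear_combination -hz⟩
  obtain ⟨a1, ha1⟩ := hsZ (g 0 0)
  have hna : IsCoprime a1 (n₀ : ℤ) := by
    have h1 : IsCoprime (g 0 0) β := by
      have := hcop.add_mul_right_right s
      exact this
    obtain ⟨x, y, hxy⟩ := h1
    obtain ⟨x1, hx1⟩ := hsZ x
    have : β ∣ ((1 - x1 * a1 : ℤ) : R) := by
      obtain ⟨t, ht⟩ := hx1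
      obtain ⟨t', ht'⟩ := ha1
      refine ⟨y + t * g 0 0 + x1 * t', ?_⟩
      push_cast
      linear_combination (-1 : R) * hxy + g 0 0 * ht + x1 * ht'
    obtain ⟨z, hz⟩ := (hn₀' _).1 this
    exact ⟨x1, z, by linear_combination -hz⟩
  have hnj2 : Nat.Coprime (j ^ 2) n₀ := (Nat.Coprime.pow_left 2 hnj.symm)
  set a2 := (a1 % n₀).toNat with ha2
  have ha2' : (a2 : ℤ) = a1 % n₀ := Int.toNat_of_nonneg (Int.emod_nonneg _ (by exact_mod_cast hn₀))
  obtain ⟨c, hc1, hc2⟩ := Nat.chineseRemainder hnj2 1 a2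
  have hc2' : (n₀ : ℤ) ∣ a1 - c := by
    have h1 : (n₀ : ℤ) ∣ a2 - c := (Nat.modEq_iff_dvd.1 hc2)
    rw [ha2'] at h1
    have h2 : (n₀ : ℤ) ∣ a1 - a1 % n₀ := Int.dvd_self_sub_emod
    exact (dvd_add h1 h2).trans (dvd_of_eq (by ring))
  have hcA : c.Coprime (j ^ 2 * n₀) := by
    refine Nat.Coprime.mul_right ?_ ?_
    · have := hc1.gcd_eq
      rw [Nat.gcd_one_left] at this
      exact this
    · rw [← Nat.isCoprime_iff_coprime]
      obtain ⟨k, hk⟩ := hc2'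
      have : (c : ℤ) = a1 + n₀ * (-k) := by linear_combination -hk
      rw [this]
      exact IsCoprime.add_mul_left_left hna _
  -- The integer `a'` is congruent to `g 0 0` modulo `β` and to `1` modulo `j²`.
  obtain ⟨a', e, u, ha', -, hu, heu, hexp⟩ := hm ℓ hℓ (j ^ 2 * n₀)
    (Nat.one_le_iff_ne_zero.2 (mul_ne_zero (pow_ne_zero _ (by omega)) hn₀)) c hcA
  refine ⟨e, u, ?_, hu, heu⟩
  have ha'' : ((j ^ 2 * n₀ : ℕ) : ℤ) ∣ (a' : ℤ) - c := by
    have := (ZMod.natCast_eq_natCast_iff _ _ _).1 ha'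
    exact Nat.modEq_iff_dvd.1 this.symm
  have hd1 : β ∣ (a' : R) - g 0 0 := by
    have h1 : (n₀ : ℤ) ∣ a' - a1 := by
      exact (dvd_sub ((Dvd.intro_left _ (by push_cast; rfl)).trans ha'') hc2').trans
        (dvd_of_eq (by ring))
    have h2 := (hn₀' _).2 h1
    exact (dvd_sub h2 ha1).trans (dvd_of_eq (by push_cast; ring))
  have hd2 : (j : R) ^ 2 ∣ (a' : R) - g 0 0 := by
    have h1 : ((j ^ 2 : ℕ) : ℤ) ∣ a' - 1 := by
      have h3 : ((j ^ 2 : ℕ) : ℤ) ∣ 1 - c := Nat.modEq_iff_dvd.1 hc1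
      exact (dvd_sub ((Dvd.intro _ (by push_cast; rfl)).trans ha'') h3).trans
        (dvd_of_eq (by ring))
    have h2 := (Int.castRingHom R).map_dvd h1
    have h4 : (j : R) ^ 2 ∣ a' - 1 := by simpa using h2
    exact (dvd_sub h4 hg00).trans (dvd_of_eq (by ring))
  have hcop2 : IsCoprime ((j : R) ^ 2) β := hsj.symm.pow_left
  obtain ⟨t, ht⟩ := hcop2.mul_dvd hd2 hd1
  refine mem_Ex_of_coset_right (e12_mem_El j s) (mem_Ex_of_coset_right (e21_mem_El j t) ?_)
  refine mem_Ex_of_dvd ?_ ?_ ?_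
  · refine ⟨β, ?_⟩
    simp
    linear_combination hb0 - j * hβ
  · refine ⟨j * c0 + (g 1 1 + g 1 0 * (j * s)) * t, ?_⟩
    simp
    linear_combination hc0
  · have h1 : (g * e12 (j * s) * e21 (j * t)) 0 0 = (a' : R) := by
      simp
      linear_combination -ht + (j * t) * hb0 - j ^ 2 * t * hβ
    rw [h1]
    exact hexp _ ⟨((ω⁻¹ : Rˣ) : R) ^ 2, 0, by rw [← mul_pow]; simp⟩

/-- Conjugation by `diag(ω, ω⁻¹)^m` preserves the double cosets of `El R j` in `Cg R (j²)`. -/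
theorem natCast_mem_Ex (K : Type*) [Field K] [NumberField K] [Algebra R K] [IsFractionRing R K]
    {m : ℕ} (hm : ∀ ℓ : ℕ, ℓ.Prime → ∀ A : ℕ, 1 ≤ A → ∀ c : ℕ, c.Coprime A →
      ∃ a' e u : ℕ, (a' : ZMod A) = c ∧ 1 ≤ e ∧ ¬ ℓ ∣ u ∧ e ∣ m * u ∧
        ∀ y : R, IsCoprime y (a' : R) → (a' : R) ∣ y ^ e - 1)
    (ω : Rˣ) {j : ℕ} (hj : 1 ≤ j) {g : SpecialLinearGroup (Fin 2) R} (hg : g ∈ Cg R (j ^ 2)) :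
    (m : ℤ) ∈ Ex j ω g := by
  by_cases h00 : g 0 0 = 0
  · -- here `j` is a unit, and multiplication by `e21 j` makes the entry nonzero
    have h1 : g * e21 ((j : R) * 1) ∈ Cg R (j ^ 2) := by
      refine mul_mem hg (El_le_Cg _ ?_)
      obtain ⟨⟨t, ht⟩, -⟩ := mem_Cg.1 hg
      have : (j : R) * 1 = ((j ^ 2 : ℕ) : R) * (-(t * j)) := by
        rw [h00] at ht
        linear_combination (-(j : R)) * ht
      rw [this]
      exact e21_mem_El _ _
    refine mem_Ex_of_coset_right (e21_mem_El j 1) (mem_of_local _ _ fun ℓ hℓ =>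
      exists_mem_Ex K hm ω hj h1 ?_ hℓ)
    have hdet := sl2_det g
    rw [h00] at hdet
    have hb : g 0 1 ≠ 0 := by
      intro h
      rw [h] at hdet
      simp at hdet
    have hj0 : (j : R) ≠ 0 := by exact_mod_cast (by omega : j ≠ 0)
    simp [h00, hb]
    omega
  · exact mem_of_local _ _ fun ℓ hℓ => exists_mem_Ex K hm ω hj hg h00 hℓ

/-- Conjugation by `x` maps each `g` in a small congruence subgroup into its own double coset
`El R j * g * El R j`; how small depends on `j`. -/
def ComK (R : Type*) [CommRing R] {K : Type*} [Field K] [Algebra R K]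
    (x : SpecialLinearGroup (Fin 2) K) : Prop :=
  ∀ j : ℕ, 1 ≤ j → ∃ j' : ℕ, 1 ≤ j' ∧ ∀ g ∈ Cg R j', ∃ p ∈ El R j, ∃ q ∈ El R j,
    x * phi R K g * x⁻¹ = phi R K (p * g * q)

section
variable {K : Type*} [Field K] [NumberField K] [Algebra R K] [IsFractionRing R K]

theorem comK_hd (ω : Rˣ) {m : ℕ} (hm : ∀ ℓ : ℕ, ℓ.Prime → ∀ A : ℕ, 1 ≤ A → ∀ c : ℕ, c.Coprime A →
      ∃ a' e u : ℕ, (a' : ZMod A) = c ∧ 1 ≤ e ∧ ¬ ℓ ∣ u ∧ e ∣ m * u ∧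
        ∀ y : R, IsCoprime y (a' : R) → (a' : R) ∣ y ^ e - 1) :
    ComK R (phi R K (hd (ω ^ m))) := by
  intro j hj
  refine ⟨j ^ 2, Nat.one_le_pow _ _ hj, fun g hg => ?_⟩
  obtain ⟨p, hp, q, hq, h⟩ := natCast_mem_Ex K hm ω hj hg
  refine ⟨p, hp, q, hq, ?_⟩
  rw [← h, zpow_natCast]
  simp

theorem ComK.mul {x y : SpecialLinearGroup (Fin 2) K} (hcx : ContK R x) (hx : ComK R x)
    (hy : ComK R y) : ComK R (x * y) := by
  intro j hj
  obtain ⟨j1, hj1, h1⟩ := hcx j hj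
  obtain ⟨j2, hj2, h2⟩ := hx j hj
  obtain ⟨j3, hj3, h3⟩ := hy j1 hj1
  refine ⟨j2 * j3, Nat.mul_pos hj2 hj3, fun g hg => ?_⟩
  obtain ⟨p, hp, q, hq, e1⟩ := h2 g (Cg_mono (Nat.dvd_mul_right _ _) hg)
  obtain ⟨p', hp', q', hq', e2⟩ := h3 g (Cg_mono (Nat.dvd_mul_left _ _) hg)
  obtain ⟨p'', hp'', e3⟩ := h1 _ ⟨p', hp', rfl⟩
  obtain ⟨q'', hq'', e4⟩ := h1 _ ⟨q', hq', rfl⟩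
  refine ⟨p'' * p, mul_mem hp'' hp, q * q'', mul_mem hq hq'', ?_⟩
  have : x * y * phi R K g * (x * y)⁻¹ = x * (y * phi R K g * y⁻¹) * x⁻¹ := by group
  rw [this, e2]
  have : x * phi R K (p' * g * q') * x⁻¹ =
      (x * phi R K p' * x⁻¹) * (x * phi R K g * x⁻¹) * (x * phi R K q' * x⁻¹) := by
    rw [map_mul, map_mul]; group
  rw [this, ← e3, ← e4, e1]
  simp only [map_mul, mul_assoc]

theorem ComK.inv {x : SpecialLinearGroup (Fin 2) K} (hcx : ContK R x⁻¹) (hx : ComK R x) :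
    ComK R x⁻¹ := by
  intro j hj
  obtain ⟨j1, hj1, h1⟩ := hcx j hj
  obtain ⟨j2, hj2, h2⟩ := hx j1 hj1
  refine ⟨j2, hj2, fun g hg => ?_⟩
  obtain ⟨p, hp, q, hq, e1⟩ := h2 g hg
  obtain ⟨p', hp', e3⟩ := h1 _ ⟨p, hp, rfl⟩
  obtain ⟨q', hq', e4⟩ := h1 _ ⟨q, hq, rfl⟩
  refine ⟨p'⁻¹, inv_mem hp', q'⁻¹, inv_mem hq', ?_⟩
  simp only [map_mul, map_inv] at e1 ⊢
  rw [e3, e4]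
  have : phi R K g = (phi R K p)⁻¹ * (x * phi R K g * x⁻¹) * (phi R K q)⁻¹ := by rw [e1]; group
  rw [inv_inv]
  conv_lhs => rw [this]
  group

/-- Conjugation by any `x ∈ SL₂(K)` maps small congruence subgroups into small ones. -/
theorem exists_conj_Cg (x : SpecialLinearGroup (Fin 2) K) : ∀ j : ℕ, 1 ≤ j → ∃ j' : ℕ, 1 ≤ j' ∧
    ∀ g ∈ Cg R j', ∃ g' ∈ Cg R j, x * phi R K g * x⁻¹ = phi R K g' := by
  have hmul : ∀ x y : SpecialLinearGroup (Fin 2) K, (∀ j : ℕ, 1 ≤ j → ∃ j' : ℕ, 1 ≤ j' ∧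
      ∀ g ∈ Cg R j', ∃ g' ∈ Cg R j, x * phi R K g * x⁻¹ = phi R K g') →
      (∀ j : ℕ, 1 ≤ j → ∃ j' : ℕ, 1 ≤ j' ∧
      ∀ g ∈ Cg R j', ∃ g' ∈ Cg R j, y * phi R K g * y⁻¹ = phi R K g') →
      (∀ j : ℕ, 1 ≤ j → ∃ j' : ℕ, 1 ≤ j' ∧
      ∀ g ∈ Cg R j', ∃ g' ∈ Cg R j, x * y * phi R K g * (x * y)⁻¹ = phi R K g') := by
    intro x y hx hy j hj
    obtain ⟨j1, hj1, h1⟩ := hx j hj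
    obtain ⟨j2, hj2, h2⟩ := hy j1 hj1
    refine ⟨j2, hj2, fun g hg => ?_⟩
    obtain ⟨g1, hg1, e1⟩ := h2 g hg
    obtain ⟨g2, hg2, e2⟩ := h1 g1 hg1
    refine ⟨g2, hg2, ?_⟩
    rw [← e2, ← e1]; group
  have hwl : ∀ w : SpecialLinearGroup (Fin 2) R, ∀ j : ℕ, 1 ≤ j → ∃ j' : ℕ, 1 ≤ j' ∧
      ∀ g ∈ Cg R j', ∃ g' ∈ Cg R j, phi R K w * phi R K g * (phi R K w)⁻¹ = phi R K g' := by
    intro w j hj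
    refine ⟨j, hj, fun g hg => ⟨w * g * w⁻¹, ?_, by simp⟩⟩
    exact (inferInstance : (Cg R j).Normal).conj_mem g hg w
  have h12 : ∀ y : K, ∀ j : ℕ, 1 ≤ j → ∃ j' : ℕ, 1 ≤ j' ∧
      ∀ g ∈ Cg R j', ∃ g' ∈ Cg R j, e12 y * phi R K g * (e12 y)⁻¹ = phi R K g' := by
    intro y j hj
    obtain ⟨N, hN, r, hr⟩ := exists_nat_mul_mem (R := R) K y
    refine ⟨j * N ^ 2, Nat.mul_pos hj (Nat.pow_pos (by omega)), fun g hg => ?_⟩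
    obtain ⟨⟨a0, ha⟩, ⟨b0, hb⟩, ⟨c0, hc⟩, ⟨d0, hd⟩⟩ := mem_Cg.1 hg
    push_cast at ha hb hc hd
    have hdet := sl2_det g
    let g' : SpecialLinearGroup (Fin 2) R := ⟨!![g 0 0 + j * N * r * c0,
        g 0 1 + j * N * r * (d0 - a0) - j * r ^ 2 * c0; g 1 0, g 1 1 - j * N * r * c0], by
      rw [det_fin_two_of]
      linear_combination hdet + j * N * r * c0 * (hd - ha) - (j * N * r * (d0 - a0) - j * r ^ 2 * c0) * hc⟩
    have q00 : g' 0 0 = g 0 0 + j * N * r * c0 := rfl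
    have q01 : g' 0 1 = g 0 1 + j * N * r * (d0 - a0) - j * r ^ 2 * c0 := rfl
    have q10 : g' 1 0 = g 1 0 := rfl
    have q11 : g' 1 1 = g 1 1 - j * N * r * c0 := rfl
    clear_value g'
    refine ⟨g', mem_Cg.2 ⟨?_, ?_, ?_, ?_⟩, ?_⟩
    · exact ⟨N ^ 2 * a0 + N * r * c0, by rw [q00]; linear_combination ha⟩
    · exact ⟨N ^ 2 * b0 + N * r * (d0 - a0) - r ^ 2 * c0, by rw [q01]; linear_combination hb⟩
    · exact ⟨N ^ 2 * c0, by rw [q10]; linear_combination hc⟩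
    · exact ⟨N ^ 2 * d0 - N * r * c0, by rw [q11]; linear_combination hd⟩
    · have ha' := congrArg (algebraMap R K) ha
      have hc' := congrArg (algebraMap R K) hc
      have hd' := congrArg (algebraMap R K) hd
      simp only [map_mul, map_sub, map_pow, map_natCast, map_one] at ha' hc' hd'
      apply sl2_ext <;> simp [phi_apply, q00, q01, q10, q11, hr]
      · linear_combination y * hc'
      · linear_combination y * (hd' - ha') - y ^ 2 * hc'
      · linear_combination (-y) * hc'
  refine sl2_field_induction (P := fun x => ∀ j : ℕ, 1 ≤ j → ∃ j' : ℕ, 1 ≤ j' ∧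
    ∀ g ∈ Cg R j', ∃ g' ∈ Cg R j, x * phi R K g * x⁻¹ = phi R K g') h12 (fun y => ?_) hmul x
  have h := wl_conj_e12 (-y)
  rw [neg_neg, ← phi_wl (R := R), ← map_inv] at h
  rw [← h]
  exact hmul _ _ (hmul _ _ (hwl _) (h12 _)) (hwl _)

theorem ComK.conj {x y : SpecialLinearGroup (Fin 2) K} (hcy : ContK R y) (hx : ComK R x) :
    ComK R (y * x * y⁻¹) := by
  intro j hj
  obtain ⟨j1, hj1, h1⟩ := hcy j hj
  obtain ⟨j2, hj2, h2⟩ := hx j1 hj1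
  obtain ⟨j3, hj3, h3⟩ := exists_conj_Cg (R := R) y⁻¹ j2 hj2
  refine ⟨j3, hj3, fun g hg => ?_⟩
  obtain ⟨g1, hg1, e0⟩ := h3 g hg
  obtain ⟨p, hp, q, hq, e1⟩ := h2 g1 hg1
  obtain ⟨p', hp', e3⟩ := h1 _ ⟨p, hp, rfl⟩
  obtain ⟨q', hq', e4⟩ := h1 _ ⟨q, hq, rfl⟩
  refine ⟨p', hp', q', hq', ?_⟩
  have : y * x * y⁻¹ * phi R K g * (y * x * y⁻¹)⁻¹ =
      y * (x * (y⁻¹ * phi R K g * y⁻¹⁻¹) * x⁻¹) * y⁻¹ := by group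
  rw [this, e0, e1]
  simp only [map_mul]
  rw [e3, e4]
  have : phi R K g = y * phi R K g1 * y⁻¹ := by rw [← e0]; group
  rw [this]
  group

/-- All of `SL₂(K)` preserves the double cosets. A power of `diag(ω, ω⁻¹)` does, by `comK_hd`; the
elements `x` that do are closed under products, inverses and conjugation; and `e12 y` is the
product of `u = hd (ω ^ m)` and a conjugate of `u⁻¹` by some `e12 z`. -/
theorem comK {ω : Rˣ} (hω : ∀ n : ℕ, 1 ≤ n → ω ^ n ≠ 1) (x : SpecialLinearGroup (Fin 2) K) :
    ComK R x := by
  obtain ⟨m, hm1, hm⟩ := exists_good_modulus R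
  have hh := comK_hd (K := K) ω hm
  have h12 : ∀ y : K, ComK R (e12 y) := by
    intro y
    set u := Units.map (algebraMap R K).toMonoidHom (ω ^ m) with hu
    have hu0 : (u : K) ^ 2 - 1 ≠ 0 := by
      intro h
      apply hω (m * 2) (by omega)
      ext
      apply IsFractionRing.injective R K
      rw [sub_eq_zero] at h
      rw [pow_mul, Units.val_pow_eq_pow_val, map_pow, Units.val_one, map_one]
      exact h
    rw [phi_hd] at hh
    have h1 : e12 y = hd u * (e12 (y / ((u : K) ^ 2 - 1)) * (hd u)⁻¹ *
        (e12 (y / ((u : K) ^ 2 - 1)))⁻¹) := by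
      have := hd_conj_e12 u (y / ((u : K) ^ 2 - 1))
      have e1 : hd u * (e12 (y / ((u : K) ^ 2 - 1)) * (hd u)⁻¹ *
        (e12 (y / ((u : K) ^ 2 - 1)))⁻¹) = hd u * e12 (y / ((u : K) ^ 2 - 1)) * (hd u)⁻¹ *
        (e12 (y / ((u : K) ^ 2 - 1)))⁻¹ := by group
      rw [e1, this, ← e12_neg, ← e12_add]
      congr 1
      field_simp
      ring
    rw [h1]
    exact ComK.mul (contK hω _) hh (ComK.conj (contK hω _) (ComK.inv (contK hω _) hh))
  refine sl2_field_induction (P := ComK R) h12 (fun y => ?_)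
    (fun g h hg hh => ComK.mul (contK hω _) hg hh) x
  have h := wl_conj_e12 (-y)
  rw [neg_neg] at h
  rw [← h]
  exact ComK.conj contK_wl (h12 _)
end
end

end

/-! ### Normal subgroups containing elementary groups -/

section

open Matrix

section
variable {R : Type*} [CommRing R] [IsDomain R] [OrderLoc R] [CharZero R]

/-- Four elementary factors move an element into any given `Cg R l`, provided its entries satisfy
the obvious congruences; this rests on the finiteness of residue rings. -/
theorem exists_mul_mem_Cg_aux {l : ℕ} (hl : 1 ≤ l) {g : SpecialLinearGroup (Fin 2) R} (i k : R)
    {p b c : R} (hp : g 0 0 - 1 = i * k * p) (hb : g 0 1 = i * b) (hc : g 1 0 = k * c) :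
    ∃ t₁ t₂ t₃ t₄ : R,
      g * (e12 (i * t₁) * e21 (k * t₂) * e12 (i * t₃) * e21 (k * t₄)) ∈ Cg R l := by
  have hdet := sl2_det g
  have hcop : IsCoprime (g 0 0) b :=
    ⟨g 1 1, -(i * g 1 0), by linear_combination hdet + g 1 0 * hb⟩
  have hl0 : (l : R) ≠ 0 := by exact_mod_cast (by omega : l ≠ 0)
  obtain ⟨t₁, x, z, hxz⟩ := OrderLoc.exists_coprime_add hl0 hcop
  set β := b + t₁ * g 0 0 with hβ
  set t₂ : R := -p * x with ht₂
  set c₁ : R := g 1 0 + (g 1 1 + g 1 0 * (i * t₁)) * (k * t₂) with hc₁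
  set c₂ : R := c + (g 1 1 + g 1 0 * (i * t₁)) * t₂ with hc₂
  have hcc : c₁ = k * c₂ := by rw [hc₁, hc₂, hc]; ring
  refine ⟨t₁, t₂, -β, -c₂, ?_⟩
  set g₁ := g * (e12 (i * t₁) * e21 (k * t₂) * e12 (i * -β)) with hg₁
  have h00 : g₁ 0 0 = 1 + l * (i * k * p * z) := by
    simp [hg₁]
    linear_combination hp + (k * t₂) * hb - (i * k * p) * hxz - i * k * t₂ * hβ + (i * k * β) * ht₂
  have h01 : g₁ 0 1 = l * (-(i ^ 2 * k * p * z * β)) := by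
    have : g₁ 0 1 = (g 0 1 + g 0 0 * (i * t₁)) + g₁ 0 0 * (i * -β) := by
      simp [hg₁]; ring
    rw [this, h00, hb]
    linear_combination (-i) * hβ
  have h10 : g₁ 1 0 = k * c₂ := by
    rw [← hcc, hc₁]
    simp [hg₁]
    ring
  have hdet₁ := sl2_det g₁
  have hmul : g * (e12 (i * t₁) * e21 (k * t₂) * e12 (i * -β) * e21 (k * -c₂)) =
      g₁ * e21 (k * -c₂) := by rw [hg₁]; group
  have h11 : (l : R) ∣ g₁ 1 1 - 1 := by
    refine ⟨-(i * k * p * z) * g₁ 1 1 + -(i ^ 2 * k * p * z * β) * g₁ 1 0, ?_⟩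
    linear_combination hdet₁ - g₁ 1 1 * h00 + g₁ 1 0 * h01
  obtain ⟨d, hd⟩ := h11
  rw [hmul]
  refine mem_Cg.2 ⟨⟨i * k * p * z + -(i ^ 2 * k * p * z * β) * (k * -c₂), ?_⟩,
    ⟨-(i ^ 2 * k * p * z * β), ?_⟩, ⟨d * (k * -c₂), ?_⟩, ⟨d, ?_⟩⟩
  · simp only [sl2_mul_apply, e21_00, e21_10]
    linear_combination h00 + (k * -c₂) * h01
  · simp only [sl2_mul_apply, e21_01, e21_11]
    linear_combination h01
  · simp only [sl2_mul_apply, e21_00, e21_10]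
    linear_combination h10 + (k * -c₂) * hd
  · simp only [sl2_mul_apply, e21_01, e21_11]
    linear_combination hd

theorem exists_mul_mem_Cg {j l : ℕ} (hl : 1 ≤ l) {g : SpecialLinearGroup (Fin 2) R}
    (hg : g ∈ Cg R (j ^ 2)) : ∃ t₁ t₂ t₃ t₄ : R,
      g * (e12 (j * t₁) * e21 (j * t₂) * e12 (j * t₃) * e21 (j * t₄)) ∈ Cg R l := by
  obtain ⟨⟨p, hp⟩, ⟨b, hb⟩, ⟨c, hc⟩, -⟩ := mem_Cg.1 hg
  push_cast at hp hb hc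
  exact exists_mul_mem_Cg_aux hl _ _ (p := p) (b := j * b) (c := j * c)
    (by linear_combination hp) (by linear_combination hb) (by linear_combination hc)

theorem cont_sl2 (K : Type*) [Field K] [NumberField K] [Algebra R K]
    [IsFractionRing R K] {ω : Rˣ} (hω : ∀ n : ℕ, 1 ≤ n → ω ^ n ≠ 1) (x : SpecialLinearGroup (Fin 2) R)
    {j : ℕ} (hj : 1 ≤ j) : ∃ j' : ℕ, 1 ≤ j' ∧ ∀ e ∈ El R j', x * e * x⁻¹ ∈ El R j := by
  obtain ⟨j', hj', h⟩ := contK (K := K) hω (phi R K x) j hj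
  refine ⟨j', hj', fun e he => ?_⟩
  obtain ⟨e', he', h'⟩ := h _ ⟨e, he, rfl⟩
  rw [← map_inv, ← map_mul, ← map_mul] at h'
  rw [← phi_injective K h']
  exact he'

theorem com_sl2 (K : Type*) [Field K] [NumberField K] [Algebra R K]
    [IsFractionRing R K] {ω : Rˣ} (hω : ∀ n : ℕ, 1 ≤ n → ω ^ n ≠ 1) (x : SpecialLinearGroup (Fin 2) R)
    {j : ℕ} (hj : 1 ≤ j) : ∃ j' : ℕ, 1 ≤ j' ∧ ∀ g ∈ Cg R j', ∃ p ∈ El R j, ∃ q ∈ El R j,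
      x * g * x⁻¹ = p * g * q := by
  obtain ⟨j', hj', h⟩ := comK (K := K) hω (phi R K x) j hj
  refine ⟨j', hj', fun g hg => ?_⟩
  obtain ⟨p, hp, q, hq, h'⟩ := h g hg
  rw [← map_inv, ← map_mul, ← map_mul] at h'
  exact ⟨p, hp, q, hq, phi_injective K h'⟩

/-- A one-parameter unipotent family conjugates `El R j'` into `El R j` for `j'` independent of the
parameter, since the parameter only matters modulo `j`. -/
theorem unif_one (K : Type*) [Field K] [NumberField K] [Algebra R K]
    [IsFractionRing R K] {ω : Rˣ} (hω : ∀ n : ℕ, 1 ≤ n → ω ^ n ≠ 1)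
    (a : R → SpecialLinearGroup (Fin 2) R) (ha : ∀ x y, a (x + y) = a x * a y)
    (haE : ∀ (j : ℕ) (r : R), a (j * r) ∈ El R j)
    {j : ℕ} (hj : 1 ≤ j) :
    ∃ j' : ℕ, 1 ≤ j' ∧ ∀ t : R, ∀ e ∈ El R j', a t * e * (a t)⁻¹ ∈ El R j := by
  have hfin : Finite (R ⧸ Ideal.span {(j : R)}) := OrderLoc.finite_quot_nat (by omega)
  have := Fintype.ofFinite (R ⧸ Ideal.span {(j : R)})
  choose f hf1 hf using fun c : R ⧸ Ideal.span {(j : R)} => cont_sl2 K hω (a c.out) hj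
  refine ⟨∏ c, f c, Finset.one_le_prod' fun c _ => hf1 c, fun t e he => ?_⟩
  set c : R ⧸ Ideal.span {(j : R)} := Ideal.Quotient.mk _ t with hc
  have h1 : Ideal.Quotient.mk (Ideal.span {(j : R)}) c.out = Ideal.Quotient.mk _ t := by
    rw [← hc]; exact Quotient.out_eq c
  obtain ⟨r, hr⟩ := Ideal.mem_span_singleton.1 ((Ideal.Quotient.eq).1 h1.symm)
  have h2 : a t = a (j * r) * a c.out := by rw [← ha]; congr 1; linear_combination hr
  have h3 := hf c e (El_mono (Finset.dvd_prod_of_mem f (Finset.mem_univ c)) he)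
  have : a t * e * (a t)⁻¹ = a (j * r) * (a c.out * e * (a c.out)⁻¹) * (a (j * r))⁻¹ := by
    rw [h2]; group
  rw [this]
  exact mul_mem (mul_mem (haE j r) h3) (inv_mem (haE j r))

/-- The conjugates of `El R j₁` are all contained in `El R j₀`, for a suitable `j₁`. -/
theorem unif_cont (K : Type*) [Field K] [NumberField K] [Algebra R K]
    [IsFractionRing R K] {ω : Rˣ} (hω : ∀ n : ℕ, 1 ≤ n → ω ^ n ≠ 1) {j₀ : ℕ} (hj₀ : 1 ≤ j₀) :
    ∃ j₁ : ℕ, 1 ≤ j₁ ∧ ∀ γ : SpecialLinearGroup (Fin 2) R, ∀ e ∈ El R j₁,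
      γ * e * γ⁻¹ ∈ El R j₀ := by
  obtain ⟨k₁, hk₁, h₁⟩ := unif_one K hω e12 e12_add e12_mem_El hj₀
  obtain ⟨k₂, hk₂, h₂⟩ := unif_one K hω e21 e21_add e21_mem_El hk₁
  obtain ⟨k₃, hk₃, h₃⟩ := unif_one K hω e12 e12_add e12_mem_El hk₂
  obtain ⟨k₄, hk₄, h₄⟩ := unif_one K hω e21 e21_add e21_mem_El hk₃
  refine ⟨k₄, hk₄, fun γ e he => ?_⟩
  obtain ⟨j₃, hj₃, h⟩ := cont_sl2 K hω γ hj₀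
  obtain ⟨l, hl, hcom⟩ := com_sl2 K hω e (j := j₃ * k₄) (Nat.mul_pos hj₃ hk₄)
  have hγ : γ⁻¹ ∈ Cg R (1 ^ 2) := mem_Cg.2 ⟨by simp, by simp, by simp, by simp⟩
  obtain ⟨t₁, t₂, t₃, t₄, hc⟩ := exists_mul_mem_Cg hl hγ
  simp only [Nat.cast_one, one_mul] at hc
  set s := e12 t₁ * e21 t₂ * e12 t₃ * e21 t₄ with hs
  obtain ⟨p, hp, q, hq, hpq⟩ := hcom _ hc
  have h5 : γ * e * γ⁻¹ = (γ * p * γ⁻¹) * (s * (q * e) * s⁻¹) := by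
    have : e * (γ⁻¹ * s) = p * (γ⁻¹ * s) * q * e := by
      rw [← hpq]; group
    calc γ * e * γ⁻¹ = γ * (e * (γ⁻¹ * s)) * s⁻¹ := by group
      _ = _ := by rw [this]; group
  rw [h5]
  refine mul_mem (h p (El_mono (Nat.dvd_mul_right _ _) hp)) ?_
  have h6 := h₁ t₁ _ (h₂ t₂ _ (h₃ t₃ _ (h₄ t₄ (q * e)
    (mul_mem (El_mono (Nat.dvd_mul_left _ _) hq) he))))
  convert h6 using 1
  rw [hs]; group

/-- Two opposite unipotent groups, even if they are not in standard position, contain all conjugates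
of a small elementary group. -/
theorem conj_El_le (K : Type*) [Field K] [NumberField K] [Algebra R K]
    [IsFractionRing R K] {ω : Rˣ} (hω : ∀ n : ℕ, 1 ≤ n → ω ^ n ≠ 1) {j₀ : ℕ} (hj₀ : 1 ≤ j₀) {y : R}
    (hy : y ≠ 0) (W : Subgroup (SpecialLinearGroup (Fin 2) R)) (hW1 : ∀ r : R, e12 (j₀ * r) ∈ W)
    (hW2 : ∀ r : R, e21 y * e12 (j₀ * r) * (e21 y)⁻¹ ∈ W) :
    ∃ j : ℕ, 1 ≤ j ∧ ∀ γ : SpecialLinearGroup (Fin 2) R, ∀ e ∈ El R j, γ * e * γ⁻¹ ∈ W := by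
  obtain ⟨n, hn, z, hz⟩ := OrderLoc.exists_nat_dvd (pow_ne_zero 2 hy)
  set x : SpecialLinearGroup (Fin 2) K := e12 (algebraMap R K y)⁻¹ with hx
  have hy' : algebraMap R K y ≠ 0 := by
    rwa [Ne, map_eq_zero_iff _ (IsFractionRing.injective R K)]
  have hzK : (n : K) = algebraMap R K y ^ 2 * algebraMap R K z := by
    have := congrArg (algebraMap R K) hz
    simpa using this
  obtain ⟨j₁, hj₁, h₁⟩ := contK (K := K) hω x⁻¹ (j₀ * n) (Nat.mul_pos hj₀ (by omega))
  obtain ⟨j, hj, h⟩ := unif_cont K hω hj₁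
  refine ⟨j, hj, fun γ e he => ?_⟩
  have h2 := h₁ _ ⟨_, h γ e he, rfl⟩
  have h3 : ElK R K (j₀ * n) ≤ (W.map (phi R K)).comap (MulAut.conj x).toMonoidHom := by
    rw [ElK, Subgroup.map_le_iff_le_comap]
    refine El_le (fun r => ?_) (fun r => ?_)
    · refine ⟨e12 (j₀ * (n * r)), hW1 _, ?_⟩
      simp only [MulEquiv.toMonoidHom_eq_coe, MonoidHom.coe_coe, MulAut.conj_apply, hx]
      rw [phi_e12, phi_e12, ← e12_neg, ← e12_add, ← e12_add]
      congr 1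
      simp
      ring
    · refine ⟨e21 y * e12 (j₀ * (-(z * r))) * (e21 y)⁻¹, hW2 _, ?_⟩
      simp only [MulEquiv.toMonoidHom_eq_coe, MonoidHom.coe_coe, MulAut.conj_apply, hx, map_mul,
        map_inv, phi_e12, phi_e21]
      apply sl2_ext <;> simp [hzK] <;> field_simp <;> ring
  obtain ⟨v, hv, hv'⟩ := h3 h2
  have h4 : phi R K v = phi R K (γ * e * γ⁻¹) := by
    rw [hv']
    simp only [MulEquiv.toMonoidHom_eq_coe, MonoidHom.coe_coe, MulAut.conj_apply]
    group
  rw [← phi_injective K h4]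
  exact hv

/-- Modulo a normal subgroup containing `El R j`, the group `Cg R (j²)` is central. -/
theorem comm_mem (K : Type*) [Field K] [NumberField K] [Algebra R K]
    [IsFractionRing R K] {ω : Rˣ} (hω : ∀ n : ℕ, 1 ≤ n → ω ^ n ≠ 1) {j : ℕ} (hj : 1 ≤ j)
    (N : Subgroup (SpecialLinearGroup (Fin 2) R)) [N.Normal] (hN : El R j ≤ N)
    {g : SpecialLinearGroup (Fin 2) R} (hg : g ∈ Cg R (j ^ 2)) (x : SpecialLinearGroup (Fin 2) R) :
    x * g * x⁻¹ * g⁻¹ ∈ N := by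
  obtain ⟨l, hl, h⟩ := com_sl2 K hω x hj
  obtain ⟨t₁, t₂, t₃, t₄, hc⟩ := exists_mul_mem_Cg hl hg
  set s := e12 (j * t₁) * e21 (j * t₂) * e12 (j * t₃) * e21 (j * t₄) with hs
  have hsN : s ∈ N := hN (mul_mem (mul_mem (mul_mem (e12_mem_El _ _) (e21_mem_El _ _))
    (e12_mem_El _ _)) (e21_mem_El _ _))
  obtain ⟨p, hp, q, hq, hpq⟩ := h _ hc
  rw [← QuotientGroup.eq_one_iff]
  have e1 := congrArg (QuotientGroup.mk' N) hpq
  have hz : ∀ v ∈ N, (QuotientGroup.mk' N) v = 1 := fun v hv => (QuotientGroup.eq_one_iff v).2 hv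
  simp only [map_mul, map_inv, hz s hsN, hz p (hN hp), hz q (hN hq), mul_one, one_mul] at e1
  change QuotientGroup.mk' N (x * g * x⁻¹ * g⁻¹) = 1
  simp only [map_mul, map_inv]
  rw [e1, mul_inv_cancel]
end

end

/-! ### Mennicke symbols -/

section

open Matrix
universe v

section
variable {R : Type*} [CommRing R] {C : Type*} [CommGroup C]
  {χ : SpecialLinearGroup (Fin 2) R →* C}

/-- A homomorphism trivial on elementary matrices. -/
def KillsEl (χ : SpecialLinearGroup (Fin 2) R →* C) : Prop :=
  (∀ r, χ (e12 r) = 1) ∧ ∀ r, χ (e21 r) = 1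

open Classical in
/-- The Mennicke symbol `[a, b]` of a homomorphism `χ` trivial on elementary matrices: its value at
any matrix with first row `(a, b)` (with junk value `1` if there is none). -/
noncomputable def sym (χ : SpecialLinearGroup (Fin 2) R →* C) (a b : R) : C :=
  if h : ∃ g : SpecialLinearGroup (Fin 2) R, g 0 0 = a ∧ g 0 1 = b then χ h.choose else 1

/-- The symbol is well defined: two matrices with the same first row differ by a lower elementary
factor on the left. -/
theorem sym_eq (h : KillsEl χ) (g : SpecialLinearGroup (Fin 2) R) :
    sym χ (g 0 0) (g 0 1) = χ g := by
  have hex : ∃ g' : SpecialLinearGroup (Fin 2) R, g' 0 0 = g 0 0 ∧ g' 0 1 = g 0 1 := ⟨g, rfl, rfl⟩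
  rw [sym, dif_pos hex]
  obtain ⟨h0, h1⟩ := hex.choose_spec
  set g' := hex.choose
  have e := sl2_det g
  have e' := sl2_det g'
  rw [h0, h1] at e'
  have : g' = e21 (g' 1 0 * g 1 1 - g' 1 1 * g 1 0) * g := by
    apply sl2_ext <;> simp
    · exact h0
    · exact h1
    · linear_combination (-g' 1 0) * e + g 1 0 * e'
    · linear_combination (-g' 1 1) * e + g 1 1 * e'
  rw [this, map_mul, h.2, one_mul]

theorem sym_eq' (h : KillsEl χ) {a b : R} {g : SpecialLinearGroup (Fin 2) R} (h0 : g 0 0 = a)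
    (h1 : g 0 1 = b) : sym χ a b = χ g := by
  rw [← h0, ← h1, sym_eq h]

theorem exists_row {a b : R} (hab : IsCoprime a b) :
    ∃ g : SpecialLinearGroup (Fin 2) R, g 0 0 = a ∧ g 0 1 = b := by
  obtain ⟨x, y, hxy⟩ := hab
  exact ⟨⟨!![a, b; -y, x], by rw [det_fin_two_of]; linear_combination hxy⟩, rfl, rfl⟩

theorem sym_add_right (h : KillsEl χ) {a b b' : R} (hab : IsCoprime a b) (hb : a ∣ b' - b) :
    sym χ a b' = sym χ a b := by
  obtain ⟨g, h0, h1⟩ := exists_row hab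
  obtain ⟨t, ht⟩ := hb
  rw [sym_eq' h h0 h1, sym_eq' h (g := g * e12 t), map_mul, h.1, mul_one]
  · simp [h0]
  · simp [h0, h1]; linear_combination -ht

theorem sym_add_left (h : KillsEl χ) {a a' b : R} (hab : IsCoprime a b) (hb : b ∣ a' - a) :
    sym χ a' b = sym χ a b := by
  obtain ⟨g, h0, h1⟩ := exists_row hab
  obtain ⟨t, ht⟩ := hb
  rw [sym_eq' h h0 h1, sym_eq' h (g := g * e21 t), map_mul, h.2, mul_one]
  · simp [h0, h1]; linear_combination -ht
  · simp [h1]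

theorem sym_unit (h : KillsEl χ) (a : R) {b : R} (hb : IsUnit b) : sym χ a b = 1 := by
  have h1 : sym χ 1 b = 1 := by rw [sym_eq' h (g := e12 b) (by simp) (by simp), h.1]
  rw [← h1]
  exact sym_add_left h isCoprime_one_left (hb.dvd)

/-- `[a, b][a, c] = 1` when `bc ≡ -1` modulo `a`: conjugation by the Weyl element. -/
theorem sym_mul_eq_one (h : KillsEl χ) {a b c d : R} (hd : a * d - b * c = 1) :
    sym χ a b * sym χ a c = 1 := by
  let g : SpecialLinearGroup (Fin 2) R := ⟨!![a, b; c, d], by rw [det_fin_two_of]; exact hd⟩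
  let g' : SpecialLinearGroup (Fin 2) R := ⟨!![a, c; b, d], by
    rw [det_fin_two_of]; linear_combination hd⟩
  have e1 : sym χ a b = χ g := sym_eq' h rfl rfl
  have e2 : sym χ a c = χ g' := sym_eq' h rfl rfl
  rw [e1, e2]
  have : g' = wl * g⁻¹ * wl⁻¹ := by
    have q00 : g 0 0 = a := rfl
    have q01 : g 0 1 = b := rfl
    have q10 : g 1 0 = c := rfl
    have q11 : g 1 1 = d := rfl
    have r00 : g' 0 0 = a := rfl
    have r01 : g' 0 1 = c := rfl
    have r10 : g' 1 0 = b := rfl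
    have r11 : g' 1 1 = d := rfl
    apply sl2_ext <;> simp [q00, q01, q10, q11, r00, r01, r10, r11]
  rw [this]
  simp only [map_mul, map_inv]
  rw [mul_comm (χ wl), mul_inv_cancel_right, mul_inv_cancel]
end

section
variable {R : Type*} [CommRing R] [IsDomain R] [OrderLoc R] [CharZero R]
  {C : Type*} [CommGroup C] {χ : SpecialLinearGroup (Fin 2) R →* C}

/-- The matrix `h` is the conjugate of `g` by `diag(y, y⁻¹)` in `SL₂(K)`. Hence `comK` applies,
once `g` has been moved into a small congruence subgroup by elementary factors. -/
theorem chi_eq_of_conj (K : Type*) [Field K] [NumberField K] [Algebra R K] [IsFractionRing R K]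
    {ω : Rˣ} (hω : ∀ n : ℕ, 1 ≤ n → ω ^ n ≠ 1) (hχ : KillsEl χ) {y : R} (hy : y ≠ 0)
    {g h : SpecialLinearGroup (Fin 2) R} (h00 : h 0 0 = g 0 0) (h01 : h 0 1 = y ^ 2 * g 0 1)
    (h10 : g 1 0 = y ^ 2 * h 1 0) (h11 : h 1 1 = g 1 1) (h1 : y ^ 2 ∣ g 0 0 - 1) :
    χ h = χ g := by
  have hy' : algebraMap R K y ≠ 0 := by
    rwa [Ne, map_eq_zero_iff _ (IsFractionRing.injective R K)]
  set x : SpecialLinearGroup (Fin 2) K := hd (Units.mk0 _ hy') with hx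
  obtain ⟨l, hl, hcom⟩ := comK (K := K) hω x 1 le_rfl
  obtain ⟨p, hp⟩ := h1
  obtain ⟨t₁, t₂, t₃, t₄, hc⟩ := exists_mul_mem_Cg_aux hl 1 (y ^ 2) (g := g) (p := p) (b := g 0 1)
    (c := h 1 0) (by rw [hp]; ring) (by ring) h10
  simp only [one_mul] at hc
  obtain ⟨p, hp, q, hq, hpq⟩ := hcom _ hc
  have hEl : ∀ v ∈ El R 1, χ v = 1 := by
    have : El R 1 ≤ χ.ker := El_le (fun r => hχ.1 _) (fun r => hχ.2 _)
    exact this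
  have c12 : ∀ t : R, x * phi R K (e12 t) * x⁻¹ = phi R K (e12 (y ^ 2 * t)) := fun t => by
    rw [phi_e12, hx, hd_conj_e12, phi_e12]; simp
  have c21 : ∀ t : R, x * phi R K (e21 (y ^ 2 * t)) * x⁻¹ = phi R K (e21 t) := fun t => by
    rw [phi_e21, hx, hd_conj_e21, phi_e21]; congr 1; simp; field_simp
  have cg : x * phi R K g * x⁻¹ = phi R K h := by
    apply sl2_ext <;> simp [hx, h00, h01, h10, h11] <;> field_simp
  have e1 : phi R K (h * (e12 (y ^ 2 * t₁) * e21 t₂ * e12 (y ^ 2 * t₃) * e21 t₄)) =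
      phi R K (p * (g * (e12 t₁ * e21 (y ^ 2 * t₂) * e12 t₃ * e21 (y ^ 2 * t₄))) * q) := by
    rw [← hpq]
    simp only [map_mul]
    rw [← c12 t₁, ← c12 t₃, ← c21 t₂, ← c21 t₄, ← cg]
    group
  have e2 := congrArg χ (phi_injective K e1)
  simpa only [map_mul, hχ.1, hχ.2, hEl p hp, hEl q hq, mul_one, one_mul] using e2

/-- `[a, y²b] = [a, b][a, y²]`: the symbol is multiplicative as soon as one factor is a square. -/
theorem sym_sq_mul (K : Type*) [Field K] [NumberField K] [Algebra R K] [IsFractionRing R K]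
    {ω : Rˣ} (hω : ∀ n : ℕ, 1 ≤ n → ω ^ n ≠ 1) (hχ : KillsEl χ) {a b y : R} (hy : y ≠ 0)
    (hab : IsCoprime a b) (hay : IsCoprime a y) :
    sym χ a (y ^ 2 * b) = sym χ a b * sym χ a (y ^ 2) := by
  obtain ⟨d, c, hd⟩ : IsCoprime a (y ^ 2 * b) := (hay.pow_right).mul_right hab
  obtain ⟨d', c', hd'⟩ : IsCoprime a (y ^ 2) := hay.pow_right
  let g : SpecialLinearGroup (Fin 2) R := ⟨!![a, b; y ^ 2 * -c, d], by
    rw [det_fin_two_of]; linear_combination hd⟩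
  let h : SpecialLinearGroup (Fin 2) R := ⟨!![a, y ^ 2 * b; -c, d], by
    rw [det_fin_two_of]; linear_combination hd⟩
  let g' : SpecialLinearGroup (Fin 2) R := ⟨!![a, 1; y ^ 2 * -c', d'], by
    rw [det_fin_two_of]; linear_combination hd'⟩
  let h' : SpecialLinearGroup (Fin 2) R := ⟨!![a, y ^ 2; -c', d'], by
    rw [det_fin_two_of]; linear_combination hd'⟩
  have g00 : g 0 0 = a := rfl
  have g01 : g 0 1 = b := rfl
  have g10 : g 1 0 = y ^ 2 * -c := rfl
  have g11 : g 1 1 = d := rfl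
  have h00 : h 0 0 = a := rfl
  have h01 : h 0 1 = y ^ 2 * b := rfl
  have h10 : h 1 0 = -c := rfl
  have h11 : h 1 1 = d := rfl
  have g'00 : g' 0 0 = a := rfl
  have g'01 : g' 0 1 = 1 := rfl
  have g'10 : g' 1 0 = y ^ 2 * -c' := rfl
  have g'11 : g' 1 1 = d' := rfl
  have h'00 : h' 0 0 = a := rfl
  have h'01 : h' 0 1 = y ^ 2 := rfl
  have h'10 : h' 1 0 = -c' := rfl
  have h'11 : h' 1 1 = d' := rfl
  have key : χ (h * h'⁻¹) = χ (g * g'⁻¹) := by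
    refine chi_eq_of_conj K hω hχ hy ?_ ?_ ?_ ?_ ?_
    · simp [g00, g01, g10, g11, h00, h01, h10, h11, g'00, g'01, g'10, g'11, h'00, h'01, h'10, h'11]
      ring
    · simp [g00, g01, g10, g11, h00, h01, h10, h11, g'00, g'01, g'10, g'11, h'00, h'01, h'10, h'11]
      ring
    · simp [g00, g01, g10, g11, h00, h01, h10, h11, g'00, g'01, g'10, g'11, h'00, h'01, h'10, h'11]
      ring
    · simp [g00, g01, g10, g11, h00, h01, h10, h11, g'00, g'01, g'10, g'11, h'00, h'01, h'10, h'11]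
      ring
    · refine ⟨c' * (b - 1), ?_⟩
      simp [g00, g01, g10, g11, h00, h01, h10, h11, g'00, g'01, g'10, g'11, h'00, h'01, h'10, h'11]
      linear_combination hd'
  have e1 : χ g' = 1 := by rw [← sym_eq' hχ g'00 g'01, sym_unit hχ _ isUnit_one]
  rw [sym_eq' hχ h00 h01, sym_eq' hχ g00 g01, sym_eq' hχ h'00 h'01]
  simp only [map_mul, map_inv, e1, inv_one, mul_one] at key
  rw [← key, inv_mul_cancel_right]

/-- `[a, b]² = [a, b²]` if `-1` is a square modulo `a`. -/
theorem sym_sq (K : Type*) [Field K] [NumberField K] [Algebra R K] [IsFractionRing R K]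
    {ω : Rˣ} (hω : ∀ n : ℕ, 1 ≤ n → ω ^ n ≠ 1) (hχ : KillsEl χ) {a b i : R} (hb : b ≠ 0)
    (hi : i ≠ 0) (hab : IsCoprime a b) (hai : a ∣ i ^ 2 + 1) :
    sym χ a b ^ 2 = sym χ a (b ^ 2) := by
  obtain ⟨k, hk⟩ := hai
  have hai : IsCoprime a i := ⟨k, -i, by linear_combination -hk⟩
  obtain ⟨d, c, hdc⟩ := id hab
  have h1 := sym_mul_eq_one hχ (a := a) (b := b) (c := -c) (d := d) (by linear_combination hdc)
  have hac : IsCoprime a (-c) := ⟨d, -b, by linear_combination hdc⟩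
  have hanb : IsCoprime a (-b) := hab.neg_right
  have h2 := sym_sq_mul K hω hχ hb hac hab
  have h3 : sym χ a (b ^ 2 * -c) = sym χ a (-b) :=
    sym_add_right hχ hanb ⟨b * d, by linear_combination (-b) * hdc⟩
  have h4 := sym_sq_mul K hω hχ hi hab hai
  have h5 : sym χ a (i ^ 2 * b) = sym χ a (-b) :=
    sym_add_right hχ hanb ⟨b * k, by linear_combination b * hk⟩
  have h6 : sym χ a (i ^ 2) = 1 := by
    rw [← sym_unit hχ a isUnit_one.neg]
    exact sym_add_right hχ isCoprime_one_right.neg_right ⟨k, by linear_combination hk⟩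
  rw [h6, mul_one, h5] at h4
  rw [h3, h4] at h2
  rw [pow_two]
  nth_rw 1 [h2]
  rw [mul_right_comm, mul_comm (sym χ a (-c)), h1, one_mul]

/-- Powers of symbols of squares: `[a, y²]^k = [a, y^(2k)]`. -/
theorem sym_pow (K : Type*) [Field K] [NumberField K] [Algebra R K] [IsFractionRing R K]
    {ω : Rˣ} (hω : ∀ n : ℕ, 1 ≤ n → ω ^ n ≠ 1) (hχ : KillsEl χ) {a y : R} (hy : y ≠ 0)
    (hay : IsCoprime a y) (k : ℕ) : sym χ a (y ^ 2) ^ k = sym χ a ((y ^ k) ^ 2) := by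
  induction k with
  | zero => simp [sym_unit hχ a isUnit_one]
  | succ k ih =>
    have : (y ^ (k + 1)) ^ 2 = y ^ 2 * (y ^ k) ^ 2 := by ring
    rw [this, sym_sq_mul K hω hχ hy (hay.pow_right.pow_right) hay, pow_succ, ih]

/-- Homomorphisms from `SL₂(R)` to commutative groups which are trivial on elementary matrices have
a common finite exponent `2 m`. Given a symbol `[a, b]`, make `R/bR` a quotient of `ℤ` and replace
`a` by a prime `p ≡ 1` modulo `4`, so that `[p, b]² = [p, b²]`. Prime by prime, `p` can be replaced
modulo `b²` by an integer `a'` as in `exists_good_modulus`, for which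
`[a', b²]^e = [a', b^(2e)] = 1`. -/
theorem pow_eq_one_of_killsEl (K : Type*) [Field K] [NumberField K] [Algebra R K]
    [IsFractionRing R K] {ω : Rˣ} (hω : ∀ n : ℕ, 1 ≤ n → ω ^ n ≠ 1) :
    ∃ M : ℕ, 1 ≤ M ∧ ∀ (C : Type v) [CommGroup C] (χ : SpecialLinearGroup (Fin 2) R →* C),
      KillsEl χ → ∀ g, χ g ^ M = 1 := by
  obtain ⟨m, hm1, hm⟩ := exists_good_modulus R
  refine ⟨2 * m, by omega, fun C _ χ hχ g => ?_⟩
  wlog h00 : g 0 0 ≠ 0 generalizing g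
  · push Not at h00
    have := this (g * e21 1) ?_
    · rwa [map_mul, hχ.2, mul_one] at this
    · have hdet := sl2_det g
      rw [h00] at hdet
      intro h
      simp [h00] at h
      rw [h] at hdet
      simp at hdet
  have hdet := sl2_det g
  have hcop : IsCoprime (g 0 0) (g 0 1) := ⟨g 1 1, -g 1 0, by linear_combination hdet⟩
  obtain ⟨s, hs0, hs2, hsZ⟩ := exists_cyclic_quotient K h00 hcop (N := 2) (by omega)
  rw [← sym_eq hχ]
  generalize g 0 0 = a at *
  generalize g 0 1 = b₀ at *
  have hb := hcop.add_mul_right_right s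
  rw [← sym_add_right hχ hcop (b' := b₀ + s * a) ⟨s, by ring⟩]
  generalize b₀ + s * a = b at *
  obtain ⟨n₀, hn₀, hn₀'⟩ := exists_modulus hs0
  have hn2 : Nat.Coprime n₀ 4 := by
    have : Nat.Coprime n₀ 2 := by
      obtain ⟨x, y, hxy⟩ := hs2
      obtain ⟨c, t, ht⟩ := hsZ y
      push_cast at hxy
      have : b ∣ ((1 - c * 2 : ℤ) : R) := by
        refine ⟨x + t * 2, ?_⟩
        push_cast
        linear_combination (-1 : R) * hxy + 2 * ht
      obtain ⟨z, hz⟩ := (hn₀' _).1 this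
      rw [← Nat.isCoprime_iff_coprime]
      exact ⟨z, c, by push_cast; linear_combination -hz⟩
    exact Nat.Coprime.pow_right 2 this
  obtain ⟨a1, ha1⟩ := hsZ a
  have hna : IsCoprime a1 (n₀ : ℤ) := by
    obtain ⟨x, y, hxy⟩ := hb
    obtain ⟨x1, hx1⟩ := hsZ x
    have : b ∣ ((1 - x1 * a1 : ℤ) : R) := by
      obtain ⟨t, ht⟩ := hx1
      obtain ⟨t', ht'⟩ := ha1
      refine ⟨y + t * a + x1 * t', ?_⟩
      push_cast
      linear_combination (-1 : R) * hxy + a * ht + x1 * ht'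
    obtain ⟨z, hz⟩ := (hn₀' _).1 this
    exact ⟨x1, z, by linear_combination -hz⟩
  set a2 := (a1 % n₀).toNat with ha2
  have ha2' : (a2 : ℤ) = a1 % n₀ := Int.toNat_of_nonneg (Int.emod_nonneg _ (by exact_mod_cast hn₀))
  obtain ⟨c, hc1, hc2⟩ := Nat.chineseRemainder hn2 a2 1
  have hc1' : (n₀ : ℤ) ∣ a1 - c := by
    have h1 : (n₀ : ℤ) ∣ a2 - c := (Nat.modEq_iff_dvd.1 hc1)
    rw [ha2'] at h1
    have h2 : (n₀ : ℤ) ∣ a1 - a1 % n₀ := Int.dvd_self_sub_emod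
    exact (dvd_add h1 h2).trans (dvd_of_eq (by ring))
  have hcn : c.Coprime n₀ := by
    rw [← Nat.isCoprime_iff_coprime]
    obtain ⟨k, hk⟩ := hc1'
    have : (c : ℤ) = a1 + n₀ * (-k) := by linear_combination -hk
    rw [this]
    exact IsCoprime.add_mul_left_left hna _
  have hc4 : c.Coprime 4 := by
    have := hc2.gcd_eq
    rw [Nat.gcd_one_left] at this
    exact this
  -- A prime `p ≡ a` modulo `b` with `p ≡ 1` modulo `4`, so that `-1` is a square modulo `p`.
  obtain ⟨p, -, hp, hpc⟩ := Nat.forall_exists_prime_gt_and_modEq 0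
    (q := n₀ * 4) (a := c) (by omega) (Nat.Coprime.mul_right hcn hc4)
  have hp1 : (n₀ : ℤ) ∣ p - a1 := by
    have h1 : ((n₀ * 4 : ℕ) : ℤ) ∣ c - p := Nat.modEq_iff_dvd.1 hpc
    have h2 : (n₀ : ℤ) ∣ c - p := (Dvd.intro _ (by push_cast; rfl)).trans h1
    exact (dvd_add h2 hc1').neg_right.trans (dvd_of_eq (by ring))
  have hp4 : p % 4 = 1 := by
    have h1 : p ≡ c [MOD 4] := hpc.of_mul_left _
    exact h1.trans hc2
  have hpn : p.Coprime n₀ := by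
    have := (hpc.of_mul_right 4).gcd_eq
    rw [Nat.Coprime, this]
    exact hcn
  have hpa : b ∣ (p : R) - a := by
    have h2 := (hn₀' _).2 hp1
    exact (dvd_sub h2 ha1).trans (dvd_of_eq (by push_cast; ring))
  rw [← sym_add_left hχ hb hpa]
  have hpb : IsCoprime (p : R) b := by
    obtain ⟨k, hk⟩ := hpa
    have : (p : R) = a + b * k := by linear_combination hk
    rw [this]
    exact hb.add_mul_left_left k
  have : Fact p.Prime := ⟨hp⟩
  obtain ⟨i, hi0, hi⟩ : ∃ i : ℕ, i ≠ 0 ∧ p ∣ i ^ 2 + 1 := by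
    obtain ⟨r, hr⟩ := ZMod.exists_sq_eq_neg_one_iff.2 (by omega : p % 4 ≠ 3)
    have : p ∣ r.val ^ 2 + 1 := by
      rw [← ZMod.natCast_eq_zero_iff]
      push_cast
      rw [ZMod.natCast_zmod_val, pow_two, ← hr]
      ring
    refine ⟨r.val, fun h => ?_, this⟩
    rw [h] at this
    exact hp.one_lt.ne' (by simpa using this)
  have hiR : (p : R) ∣ (i : R) ^ 2 + 1 := by
    have := (Nat.castRingHom R).map_dvd hi
    simpa using this
  rw [pow_mul, sym_sq K hω hχ hs0 (by exact_mod_cast hi0) hpb hiR]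
  set E : AddSubgroup ℤ := (zmultiplesHom (Additive C) (Additive.ofMul (sym χ (p : R) (b ^ 2)))).ker
    with hE
  have hmemE : ∀ e : ℕ, (e : ℤ) ∈ E ↔ sym χ (p : R) (b ^ 2) ^ e = 1 := by
    intro e
    rw [hE, AddMonoidHom.mem_ker, zmultiplesHom_apply, natCast_zsmul, ← ofMul_pow]
    exact Iff.rfl
  rw [← hmemE]
  -- That the order divides `m` is checked one prime at a time.
  refine mem_of_local E m fun ℓ hℓ => ?_
  obtain ⟨a', e, u, ha', he1, hu, heu, hexp⟩ := hm ℓ hℓ (n₀ ^ 2) (Nat.one_le_pow _ _ (by omega)) p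
    (Nat.Coprime.pow_right 2 hpn)
  refine ⟨e, u, (hmemE e).2 ?_, hu, heu⟩
  have hbn : b ∣ (n₀ : R) := by simpa using (hn₀' n₀).2 dvd_rfl
  have ha'' : b ^ 2 ∣ (a' : R) - p := by
    have h1 : ((n₀ ^ 2 : ℕ) : ℤ) ∣ (a' : ℤ) - p :=
      Nat.modEq_iff_dvd.1 ((ZMod.natCast_eq_natCast_iff _ _ _).1 ha').symm
    have h2 := (Int.castRingHom R).map_dvd h1
    have h4 : (n₀ : R) ^ 2 ∣ a' - p := by simpa using h2
    exact (pow_dvd_pow_of_dvd hbn 2).trans h4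
  have ha'b : IsCoprime (a' : R) b := by
    obtain ⟨k, hk⟩ := ha''
    have : (a' : R) = p + b * (b * k) := by linear_combination hk
    rw [this]
    exact hpb.add_mul_left_left _
  rw [← sym_add_left hχ hpb.pow_right ha'', sym_pow K hω hχ hs0 ha'b, ← sym_unit hχ (a' : R) isUnit_one]
  refine sym_add_right hχ isCoprime_one_right ((hexp b ha'b.symm).trans ⟨b ^ e + 1, by ring⟩)
end

end

/-! ### Projections in Hilbert spaces -/

section

open Filter Topology
open scoped ComplexOrder InnerProductSpace

section
variable {H : Type*} [NormedAddCommGroup H] [InnerProductSpace ℂ H] [CompleteSpace H]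

/-- The orthogonal projection onto the closure of `W`. -/
noncomputable def pr (W : Submodule ℂ H) : H →L[ℂ] H := W.topologicalClosure.starProjection

theorem pr_mem {W : Submodule ℂ H} (hW : IsClosed (W : Set H)) (x : H) : pr W x ∈ W := by
  have := Submodule.starProjection_apply_mem W.topologicalClosure x
  have h2 : W.topologicalClosure ≤ W := hW.submodule_topologicalClosure_eq.le
  exact h2 this

theorem pr_of_mem {W : Submodule ℂ H} {x : H} (hx : x ∈ W) : pr W x = x :=
  Submodule.starProjection_eq_self_iff.2 (W.le_topologicalClosure hx)

theorem pr_inner (W : Submodule ℂ H) (x y : H) : ⟪pr W x, y⟫_ℂ = ⟪x, pr W y⟫_ℂ :=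
  Submodule.inner_starProjection_left_eq_right _ x y

theorem pr_pr (W : Submodule ℂ H) (x : H) : pr W (pr W x) = pr W x :=
  Submodule.starProjection_eq_self_iff.2 (Submodule.starProjection_apply_mem _ x)

theorem pr_eq {W : Submodule ℂ H} {u v : H} (hu : u ∈ W.topologicalClosure)
    (h : ∀ w ∈ W, ⟪v - u, w⟫_ℂ = 0) : pr W v = u := by
  refine Submodule.eq_starProjection_of_mem_of_inner_eq_zero hu ?_
  intro w hw
  have h1 : W ≤ (ℂ ∙ (v - u))ᗮ := fun w hw => Submodule.mem_orthogonal_singleton_iff_inner_right.2 (h w hw)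
  have h2 := W.topologicalClosure_minimal h1 (Submodule.isClosed_orthogonal _)
  exact Submodule.mem_orthogonal_singleton_iff_inner_right.1 (h2 hw)

theorem pr_sub_inner (W : Submodule ℂ H) (v : H) {w : H} (hw : w ∈ W) :
    ⟪v - pr W v, w⟫_ℂ = 0 :=
  Submodule.starProjection_inner_eq_zero v w (W.le_topologicalClosure hw)

/-- A unitary preserving `W` in both directions commutes with the projection onto `W`. -/
theorem pr_comm (W : Submodule ℂ H) (U : H ≃ₗᵢ[ℂ] H) (h1 : ∀ x ∈ W, U x ∈ W)
    (h2 : ∀ x ∈ W, U.symm x ∈ W) (x : H) : pr W (U x) = U (pr W x) := by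
  apply pr_eq
  · have : W ≤ W.topologicalClosure.comap (U.toLinearEquiv : H →ₗ[ℂ] H) :=
      fun x hx => W.le_topologicalClosure (h1 x hx)
    refine W.topologicalClosure_minimal this ?_ (Submodule.starProjection_apply_mem _ x)
    exact W.isClosed_topologicalClosure.preimage U.continuous
  · intro w hw
    rw [← map_sub, ← U.symm.inner_map_map, U.symm_apply_apply]
    exact pr_sub_inner W x (h2 w hw)

theorem norm_sq_pr (W : Submodule ℂ H) (x : H) : ((‖pr W x‖ ^ 2 : ℝ) : ℂ) = ⟪x, pr W x⟫_ℂ := by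
  rw [← pr_pr W x, ← pr_inner, pr_pr]
  simp [inner_self_eq_norm_sq_to_K]

theorem pr_tendsto (W : ℕ → Submodule ℂ H) (hm : Monotone W) (hc : ∀ n, IsClosed (W n : Set H))
    (x : H) : Tendsto (fun n => pr (W n) x) atTop (𝓝 (pr (⨆ n, W n) x)) := by
  have := Submodule.starProjection_tendsto_closure_iSup (fun n => (W n).topologicalClosure)
    (fun a b h => Submodule.topologicalClosure_mono (hm h)) x
  have h2 : (⨆ n, (W n).topologicalClosure) = ⨆ n, W n := by
    simp only [(hc _).submodule_topologicalClosure_eq]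
  have h3 : ∀ V V' : Submodule ℂ H, V = V' → V.topologicalClosure.starProjection x = pr V' x := by
    rintro V _ rfl; rfl
  rw [h3 _ _ h2] at this
  exact this

theorem eq_zero_of_inner_self {x : H} (h : ⟪x, x⟫_ℂ = 0) : x = 0 := inner_self_eq_zero.1 h

/-- An orthogonal sequence of vectors of constant norm converges weakly to zero. -/
theorem bessel (u : ℕ → H) (c : ℝ) (hn : ∀ i, ‖u i‖ = c) (ho : ∀ i j, i < j → ⟪u i, u j⟫_ℂ = 0)
    (y : H) : Tendsto (fun i => ⟪u i, y⟫_ℂ) atTop (𝓝 0) := by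
  by_cases hc : c = 0
  · have : ∀ i, u i = 0 := fun i => by simpa [hc] using hn i
    simp [this]
  have hO : Orthonormal ℂ (fun i => ((c : ℂ)⁻¹) • u i) := by
    refine ⟨fun i => ?_, ?_⟩
    · have : 0 ≤ c := hn i ▸ norm_nonneg _
      simp only [norm_smul, hn, norm_inv, Complex.norm_real, Real.norm_eq_abs, abs_of_nonneg this]
      field_simp
    · intro i j hij
      simp only [inner_smul_left, inner_smul_right]
      rcases lt_or_gt_of_ne hij with h | h
      · simp [ho i j h]
      · rw [← inner_conj_symm, ho j i h]; simp
  have h1 := (hO.inner_products_summable (x := y)).tendsto_atTop_zero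
  have h2 : Tendsto (fun i => ‖⟪((c : ℂ)⁻¹) • u i, y⟫_ℂ‖) atTop (𝓝 0) := by
    have := h1.sqrt
    simp only [Real.sqrt_sq (norm_nonneg _), Real.sqrt_zero] at this
    exact this
  have h3 := (tendsto_zero_iff_norm_tendsto_zero.2 h2).const_mul (c : ℂ)
  simp only [mul_zero] at h3
  refine h3.congr fun i => ?_
  have : (c : ℂ) ≠ 0 := by exact_mod_cast hc
  simp only [inner_smul_left]
  simp
  field_simp

end

end

/-! ### Representations with a trace vector -/

section

open Filter Topology
open scoped ComplexOrder InnerProductSpace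

/-- GNS data of a character: commuting unitary representations `π` (the left action) and `ρ` (the
right action), and a unit vector `ξ` with `π g (ρ g ξ) = ξ`. The condition `total` says that the
`π`-orbit of `ξ` spans a dense subspace. -/
structure TRep (Γ H : Type*) [Group Γ] [NormedAddCommGroup H] [InnerProductSpace ℂ H] where
  π : Γ →* (H ≃ₗᵢ[ℂ] H)
  ρ : Γ →* (H ≃ₗᵢ[ℂ] H)
  comm : ∀ g h x, π g (ρ h x) = ρ h (π g x)
  ξ : H
  fix : ∀ g, π g (ρ g ξ) = ξ
  total : ∀ x, (∀ g, ⟪π g ξ, x⟫_ℂ = 0) → x = 0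
  norm_one : ‖ξ‖ = 1

namespace TRep
variable {Γ H : Type*} [Group Γ] [NormedAddCommGroup H] [InnerProductSpace ℂ H] [CompleteSpace H]
  (T : TRep Γ H)

/-- The character of a representation. -/
noncomputable def tr (g : Γ) : ℂ := ⟪T.ξ, T.π g T.ξ⟫_ℂ

theorem π_mul (g h : Γ) (x : H) : T.π (g * h) x = T.π g (T.π h x) := by rw [map_mul]; rfl
theorem ρ_mul (g h : Γ) (x : H) : T.ρ (g * h) x = T.ρ g (T.ρ h x) := by rw [map_mul]; rfl
@[simp] theorem π_one (x : H) : T.π 1 x = x := by rw [map_one]; rfl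
@[simp] theorem ρ_one (x : H) : T.ρ 1 x = x := by rw [map_one]; rfl
@[simp] theorem π_inv_self (g : Γ) (x : H) : T.π g⁻¹ (T.π g x) = x := by simp [← π_mul]
@[simp] theorem π_self_inv (g : Γ) (x : H) : T.π g (T.π g⁻¹ x) = x := by simp [← π_mul]
@[simp] theorem ρ_inv_self (g : Γ) (x : H) : T.ρ g⁻¹ (T.ρ g x) = x := by simp [← ρ_mul]
@[simp] theorem ρ_self_inv (g : Γ) (x : H) : T.ρ g (T.ρ g⁻¹ x) = x := by simp [← ρ_mul]

theorem π_symm (g : Γ) (x : H) : (T.π g).symm x = T.π g⁻¹ x := by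
  rw [LinearIsometryEquiv.symm_apply_eq]; simp
theorem ρ_symm (g : Γ) (x : H) : (T.ρ g).symm x = T.ρ g⁻¹ x := by
  rw [LinearIsometryEquiv.symm_apply_eq]; simp

theorem π_inner (g : Γ) (x y : H) : ⟪T.π g x, y⟫_ℂ = ⟪x, T.π g⁻¹ y⟫_ℂ := by
  rw [← (T.π g⁻¹).inner_map_map (T.π g x) y]; simp
theorem inner_π (g : Γ) (x y : H) : ⟪x, T.π g y⟫_ℂ = ⟪T.π g⁻¹ x, y⟫_ℂ := by
  rw [π_inner]; simp
theorem ρ_inner (g : Γ) (x y : H) : ⟪T.ρ g x, y⟫_ℂ = ⟪x, T.ρ g⁻¹ y⟫_ℂ := by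
  rw [← (T.ρ g⁻¹).inner_map_map (T.ρ g x) y]; simp

theorem ρ_ξ (g : Γ) : T.ρ g T.ξ = T.π g⁻¹ T.ξ := by
  conv_rhs => rw [← T.fix g]
  simp

theorem eq_of_total {x y : H} (h : ∀ g, ⟪T.π g T.ξ, x⟫_ℂ = ⟪T.π g T.ξ, y⟫_ℂ) : x = y := by
  rw [← sub_eq_zero]
  exact T.total _ fun g => by rw [inner_sub_right, h, sub_self]

theorem dense_span : (Submodule.span ℂ (Set.range fun g => T.π g T.ξ)).topologicalClosure = ⊤ := by
  rw [Submodule.topologicalClosure_eq_top_iff, Submodule.eq_bot_iff]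
  intro x hx
  exact T.total x fun g => hx _ (Submodule.subset_span ⟨g, rfl⟩)

/-- Operators commuting with the right action; they play the role of the von Neumann algebra
generated by `π`. -/
def InM (A : H →L[ℂ] H) : Prop := ∀ g x, A (T.ρ g x) = T.ρ g (A x)

variable {T}

theorem InM.comp {A B : H →L[ℂ] H} (hA : T.InM A) (hB : T.InM B) : T.InM (A * B) := fun g x => by
  simp only [mul_apply_eq_comp, hB g, hA g]

theorem InM.sub {A B : H →L[ℂ] H} (hA : T.InM A) (hB : T.InM B) : T.InM (A - B) := fun g x => by
  simp only [_root_.sub_apply, hB g, hA g, map_sub]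

theorem InM.add {A B : H →L[ℂ] H} (hA : T.InM A) (hB : T.InM B) : T.InM (A + B) := fun g x => by
  simp only [_root_.add_apply, hB g, hA g, map_add]

theorem InM.one : T.InM 1 := fun _ _ => rfl

theorem InM.π (g : Γ) : T.InM (T.π g : H →L[ℂ] H) := fun h x => T.comm g h x

theorem InM.pr {W : Submodule ℂ H} (hW : ∀ g, ∀ x ∈ W, T.ρ g x ∈ W) : T.InM (pr W) := fun g x =>
  pr_comm W (T.ρ g) (hW g) (fun x hx => by rw [ρ_symm]; exact hW _ x hx) x

theorem InM.smul {A : H →L[ℂ] H} (c : ℂ) (hA : T.InM A) : T.InM (c • A) := fun g x => by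
  simp [hA g]

/-- The vector `ξ` separates the operators commuting with the right action. -/
theorem InM.ext {A B : H →L[ℂ] H} (hA : T.InM A) (hB : T.InM B) (h : A T.ξ = B T.ξ) : A = B := by
  have h1 : ∀ g, A (T.π g T.ξ) = B (T.π g T.ξ) := fun g => by
    have := T.ρ_ξ g⁻¹
    rw [inv_inv] at this
    rw [← this, hA, hB, h]
  refine ContinuousLinearMap.ext_on (s := Set.range fun g => T.π g T.ξ) ?_ ?_
  · have := T.dense_span
    rw [← Submodule.dense_iff_topologicalClosure_eq_top] at this
    exact this
  · rintro _ ⟨g, rfl⟩; exact h1 g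

theorem tr_conj (g h : Γ) : T.tr (h * g * h⁻¹) = T.tr g := by
  unfold tr
  have h1 := T.ρ_ξ h
  rw [π_mul, π_mul, inner_π, ← h1]
  rw [T.comm, T.ρ_inner, T.ρ_inv_self]

theorem inner_ππ (g h : Γ) : ⟪T.π g T.ξ, T.π h T.ξ⟫_ℂ = T.tr (g⁻¹ * h) := by
  rw [tr, π_mul, π_inner]

/-- The conjugate linear map taking `∑ c_g π(g) ξ` to the sum of the conjugates of `c_g` times
`π(g⁻¹) ξ` is isometric, since the vector state of `ξ` is a trace. -/
theorem conj_isometry (c : Γ →₀ ℂ) :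
    ‖c.sum fun g a => (starRingEnd ℂ a) • T.π g⁻¹ T.ξ‖ = ‖c.sum fun g a => a • T.π g T.ξ‖ := by
  have key : ⟪c.sum fun g a => (starRingEnd ℂ a) • T.π g⁻¹ T.ξ,
      c.sum fun g a => (starRingEnd ℂ a) • T.π g⁻¹ T.ξ⟫_ℂ =
      ⟪c.sum fun g a => a • T.π g T.ξ, c.sum fun g a => a • T.π g T.ξ⟫_ℂ := by
    simp only [Finsupp.sum, sum_inner, inner_sum, inner_smul_left, inner_smul_right, inner_ππ,
      Finset.mul_sum]
    rw [Finset.sum_comm]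
    refine Finset.sum_congr rfl fun g _ => Finset.sum_congr rfl fun h _ => ?_
    have := T.tr_conj (h⁻¹ * g) h
    rw [show h * (h⁻¹ * g) * h⁻¹ = g * h⁻¹ by group] at this
    rw [inv_inv, this]
    simp; ring
  have h2 := congrArg Complex.re key
  have e : ∀ x : H, (⟪x, x⟫_ℂ).re = ‖x‖ ^ 2 := fun x => inner_self_eq_norm_sq (𝕜 := ℂ) x
  rw [e, e] at h2
  exact (sq_eq_sq₀ (norm_nonneg _) (norm_nonneg _)).1 h2

theorem norm_adj_le {X X' : H →L[ℂ] H} (hX : T.InM X)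
    (h : ∀ x y, ⟪X x, y⟫_ℂ = ⟪x, X' y⟫_ℂ) : ‖X' T.ξ‖ ≤ ‖X T.ξ‖ := by
  have h1 : ∀ g, ⟪X' T.ξ, T.π g T.ξ⟫_ℂ = ⟪T.π g⁻¹ T.ξ, X T.ξ⟫_ℂ := fun g => by
    rw [← inner_conj_symm, ← h, inner_conj_symm]
    have := T.ρ_ξ g⁻¹
    rw [inv_inv] at this
    rw [← this, hX, ← T.ρ_ξ g, T.ρ_inner]
  have h2 : ∀ c : Γ →₀ ℂ, ‖⟪X' T.ξ, c.sum fun g a => a • T.π g T.ξ⟫_ℂ‖ ≤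
      ‖X T.ξ‖ * ‖c.sum fun g a => a • T.π g T.ξ‖ := fun c => by
    have : ⟪X' T.ξ, c.sum fun g a => a • T.π g T.ξ⟫_ℂ =
        ⟪c.sum fun g a => (starRingEnd ℂ a) • T.π g⁻¹ T.ξ, X T.ξ⟫_ℂ := by
      simp only [Finsupp.sum, sum_inner, inner_sum, inner_smul_left, inner_smul_right, h1]
      simp
    rw [this, mul_comm, ← conj_isometry]
    exact norm_inner_le_norm _ _
  have h3 : ∀ y, ‖⟪X' T.ξ, y⟫_ℂ‖ ≤ ‖X T.ξ‖ * ‖y‖ := by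
    intro y
    have hy : y ∈ closure (Submodule.span ℂ (Set.range fun g => T.π g T.ξ) : Set H) := by
      rw [← Submodule.topologicalClosure_coe, T.dense_span]; trivial
    refine closure_minimal (t := {y | ‖⟪X' T.ξ, y⟫_ℂ‖ ≤ ‖X T.ξ‖ * ‖y‖}) ?_ ?_ hy
    · intro y hy
      obtain ⟨c, rfl⟩ := Finsupp.mem_span_range_iff_exists_finsupp.1 hy
      exact h2 c
    · exact isClosed_le (by fun_prop) (by fun_prop)
  have h4 := h3 (X' T.ξ)
  by_cases h0 : ‖X' T.ξ‖ = 0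
  · rw [h0]; exact norm_nonneg _
  have : ‖⟪X' T.ξ, X' T.ξ⟫_ℂ‖ = ‖X' T.ξ‖ * ‖X' T.ξ‖ := by
    rw [inner_self_eq_norm_sq_to_K]; simp [sq]
  rw [this] at h4
  exact le_of_mul_le_mul_right h4 (lt_of_le_of_ne (norm_nonneg _) (Ne.symm h0))

theorem adj_symm {X X' : H →L[ℂ] H} (h : ∀ x y, ⟪X x, y⟫_ℂ = ⟪x, X' y⟫_ℂ) (x y : H) :
    ⟪X' x, y⟫_ℂ = ⟪x, X y⟫_ℂ := by
  rw [← inner_conj_symm, ← h, inner_conj_symm]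

/-- The vector `ξ` does not distinguish the norms of an operator and of its adjoint `X'`; for
operators in `InM` this is the trace property. -/
theorem norm_adj {X X' : H →L[ℂ] H} (hX : T.InM X) (hX' : T.InM X')
    (h : ∀ x y, ⟪X x, y⟫_ℂ = ⟪x, X' y⟫_ℂ) : ‖X' T.ξ‖ = ‖X T.ξ‖ :=
  le_antisymm (norm_adj_le hX h) (norm_adj_le hX' (adj_symm h))

/-- The trace property of the vector state. -/
theorem re_trace {X X' Y Y' : H →L[ℂ] H} (hX : T.InM X) (hX' : T.InM X') (hY : T.InM Y)
    (hY' : T.InM Y') (h : ∀ x y, ⟪X x, y⟫_ℂ = ⟪x, X' y⟫_ℂ) (k : ∀ x y, ⟪Y x, y⟫_ℂ = ⟪x, Y' y⟫_ℂ) :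
    (⟪X T.ξ, Y T.ξ⟫_ℂ).re = (⟪X' T.ξ, Y' T.ξ⟫_ℂ).re := by
  have h1 := norm_adj hX hX' h
  have h2 := norm_adj hY hY' k
  have h3 := norm_adj (hX.add hY) (hX'.add hY') (fun x y => by
    simp [inner_add_left, inner_add_right, h, k])
  simp only [_root_.add_apply] at h3
  have e1 := norm_add_sq (𝕜 := ℂ) (X T.ξ) (Y T.ξ)
  have e2 := norm_add_sq (𝕜 := ℂ) (X' T.ξ) (Y' T.ξ)
  rw [h3, h1, h2] at e2
  have := e1.symm.trans e2
  simp only [RCLike.re_to_complex] at this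
  linarith

end TRep

end

/-! ### The Kaplansky inequality -/

section

open Filter Topology
open scoped ComplexOrder InnerProductSpace

section
variable {H : Type*} [NormedAddCommGroup H] [InnerProductSpace ℂ H] [CompleteSpace H]

/-- Von Neumann mean ergodic theorem for a contraction. -/
theorem ergodic (S : H →L[ℂ] H) (hS : ∀ x, ‖S x‖ ≤ ‖x‖) (W : Submodule ℂ H)
    (hW : ∀ x, x ∈ W ↔ S x = x) (x : H) :
    Tendsto (fun n : ℕ => (n : ℂ)⁻¹ • ∑ k ∈ Finset.range n, (S ^ k) x) atTop (𝓝 (pr W x)) := by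
  have h1 := ContinuousLinearMap.tendsto_birkhoffAverage_orthogonalProjection S
    (S.opNorm_le_bound zero_le_one (by simpa using hS)) x
  have h2 : ((S.eqLocus (1 : H →L[ℂ] H)).orthogonalProjectionOnto x : H) = pr W x := by
    symm
    apply pr_eq
    · apply W.le_topologicalClosure
      rw [hW]
      exact ((S.eqLocus (1 : H →L[ℂ] H)).orthogonalProjectionOnto x).2
    · intro w hw
      refine Submodule.starProjection_inner_eq_zero (K := S.eqLocus (1 : H →L[ℂ] H)) x w ?_
      exact (hW w).1 hw
  rw [h2] at h1
  refine h1.congr fun n => ?_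
  simp [birkhoffAverage, birkhoffSum, FunLike.coe_pow]

/-- The kernel of `X` is the space of fixed vectors of the contraction `1 - X'X`. -/
theorem ker_fixed {X X' : H →L[ℂ] H} (h : ∀ x y, ⟪X x, y⟫_ℂ = ⟪x, X' y⟫_ℂ) (x : H) :
    x ∈ X.ker ↔ (1 - X' * X) x = x := by
  simp only [LinearMap.mem_ker, ContinuousLinearMap.coe_coe, _root_.sub_apply, mul_apply_eq_comp,
    one_apply_eq_self, sub_eq_self]
  constructor
  · intro hx; simp [hx]
  · intro hx
    apply eq_zero_of_inner_self
    rw [h, hx, inner_zero_right]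

theorem contraction {X X' : H →L[ℂ] H} (h : ∀ x y, ⟪X x, y⟫_ℂ = ⟪x, X' y⟫_ℂ)
    (hX' : ∀ x, ‖X' x‖ ≤ ‖x‖) (x : H) : ‖(1 - X' * X) x‖ ≤ ‖x‖ := by
  simp only [_root_.sub_apply, mul_apply_eq_comp, one_apply_eq_self]
  have e := norm_sub_sq (𝕜 := ℂ) x (X' (X x))
  have : RCLike.re ⟪x, X' (X x)⟫_ℂ = ‖X x‖ ^ 2 := by
    rw [← h]; exact inner_self_eq_norm_sq (𝕜 := ℂ) _
  rw [this] at e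
  have h2 : ‖X' (X x)‖ ^ 2 ≤ ‖X x‖ ^ 2 := pow_le_pow_left₀ (norm_nonneg _) (hX' _) 2
  refine (sq_le_sq₀ (norm_nonneg _) (norm_nonneg _)).1 ?_
  nlinarith [sq_nonneg ‖X x‖]

theorem norm_proj_le {A : H →L[ℂ] H} (h : ∀ x y, ⟪A x, y⟫_ℂ = ⟪x, A y⟫_ℂ)
    (h2 : ∀ x, A (A x) = A x) (x : H) : ‖A x‖ ≤ ‖x‖ := by
  have e1 : ‖A x‖ ^ 2 = RCLike.re ⟪x, A x⟫_ℂ := by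
    rw [← h2 x, ← h, h2]; exact (inner_self_eq_norm_sq (𝕜 := ℂ) _).symm
  have e2 : RCLike.re ⟪x, A x⟫_ℂ ≤ ‖x‖ * ‖A x‖ := re_inner_le_norm _ _
  by_cases h0 : ‖A x‖ = 0
  · rw [h0]; exact norm_nonneg _
  refine le_of_mul_le_mul_right ?_ (lt_of_le_of_ne (norm_nonneg _) (Ne.symm h0))
  nlinarith

end

namespace TRep
variable {Γ H : Type*} [Group Γ] [NormedAddCommGroup H] [InnerProductSpace ℂ H] [CompleteSpace H]
  {T : TRep Γ H}

theorem InM.pow {A : H →L[ℂ] H} (hA : T.InM A) (k : ℕ) : T.InM (A ^ k) := by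
  induction k with
  | zero => exact InM.one
  | succ k ih => rw [pow_succ]; exact ih.comp hA

/-- Powers of `1 - X'X` and `1 - XX'` have the same trace, because `X'X` and `XX'` do so. -/
theorem trace_pow {X X' : H →L[ℂ] H} (hX : T.InM X) (hX' : T.InM X')
    (h : ∀ x y, ⟪X x, y⟫_ℂ = ⟪x, X' y⟫_ℂ) (k : ℕ) :
    (⟪T.ξ, ((1 - X' * X) ^ k) T.ξ⟫_ℂ).re = (⟪T.ξ, ((1 - X * X') ^ k) T.ξ⟫_ℂ).re := by
  have hS2 : T.InM (1 - X * X') := InM.one.sub (hX.comp hX')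
  have sa : ∀ (k : ℕ) (x y : H), ⟪((1 - X * X') ^ k) x, y⟫_ℂ = ⟪x, ((1 - X * X') ^ k) y⟫_ℂ := by
    intro k
    induction k with
    | zero => intro x y; simp
    | succ k ih =>
      intro x y
      rw [pow_succ, mul_apply_eq_comp, ih, ← pow_succ, pow_succ', mul_apply_eq_comp]
      simp [inner_sub_left, inner_sub_right, h, adj_symm h]
  induction k with
  | zero => simp
  | succ k ih =>
    have comm : X * (1 - X' * X) ^ k = (1 - X * X') ^ k * X := by
      clear ih
      induction k with
      | zero => simp
      | succ k ih =>
        rw [pow_succ, ← mul_assoc, ih, pow_succ]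
        noncomm_ring
    have e1 : (1 - X' * X) ^ (k + 1) = (1 - X' * X) ^ k - X' * ((1 - X * X') ^ k * X) := by
      rw [← comm, pow_succ']; noncomm_ring
    have e2 : (1 - X * X') ^ (k + 1) = (1 - X * X') ^ k - X * (X' * (1 - X * X') ^ k) := by
      rw [pow_succ']; noncomm_ring
    have key := re_trace hX hX' ((hS2.pow k).comp hX) (hX'.comp (hS2.pow k)) h (fun x y => by
      rw [mul_apply_eq_comp, sa, h, mul_apply_eq_comp])
    rw [e1, e2]
    simp only [_root_.sub_apply, inner_sub_right, Complex.sub_re, ih]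
    congr 1
    rw [mul_apply_eq_comp, ← h, key, adj_symm h]
    rfl

/-- Two projections below `r` whose traces add up to more than the trace of `r` have a common fixed
vector. With `D = r - A`, the projections onto the kernels of `D * B` and `B * D` have the same
trace, since by `ergodic` they are limits of means of operators with equal traces (`trace_pow`). -/
theorem kaplansky {A B r : H →L[ℂ] H} (hA : T.InM A) (hB : T.InM B) (hr : T.InM r)
    (sA : ∀ x y, ⟪A x, y⟫_ℂ = ⟪x, A y⟫_ℂ) (sB : ∀ x y, ⟪B x, y⟫_ℂ = ⟪x, B y⟫_ℂ)
    (sr : ∀ x y, ⟪r x, y⟫_ℂ = ⟪x, r y⟫_ℂ) (iA : ∀ x, A (A x) = A x) (iB : ∀ x, B (B x) = B x)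
    (ir : ∀ x, r (r x) = r x) (rA : ∀ x, r (A x) = A x) (rB : ∀ x, r (B x) = B x)
    (hlt : ‖r T.ξ‖ ^ 2 < ‖A T.ξ‖ ^ 2 + ‖B T.ξ‖ ^ 2) : ∃ x, x ≠ 0 ∧ A x = x ∧ B x = x := by
  by_contra hno
  push Not at hno
  have Ar : ∀ x, A (r x) = A x := fun x => by
    rw [← sub_eq_zero, ← map_sub]
    apply eq_zero_of_inner_self
    rw [sA, iA, ← rA, ← sr]
    simp [ir]
  obtain ⟨D, hD⟩ : ∃ D, D = r - A := ⟨_, rfl⟩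
  have sD : ∀ x y, ⟪D x, y⟫_ℂ = ⟪x, D y⟫_ℂ := fun x y => by
    simp [hD, inner_sub_left, inner_sub_right, sr, sA]
  have iD : ∀ x, D (D x) = D x := fun x => by simp [hD, ir, rA, Ar, iA]
  have MD : T.InM D := hD ▸ hr.sub hA
  have nsq : ∀ {P : H →L[ℂ] H}, (∀ x y, ⟪P x, y⟫_ℂ = ⟪x, P y⟫_ℂ) → (∀ x, P (P x) = P x) →
      ∀ x, (⟪x, P x⟫_ℂ).re = ‖P x‖ ^ 2 := fun {P} sP iP x => by
    rw [← iP x, ← sP, iP]; exact inner_self_eq_norm_sq (𝕜 := ℂ) _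
  have h : ∀ x y, ⟪(D * B) x, y⟫_ℂ = ⟪x, (B * D) y⟫_ℂ := fun x y => by
    simp only [mul_apply_eq_comp, sD, sB]
  have MX : T.InM (D * B) := MD.comp hB
  have MX' : T.InM (B * D) := hB.comp MD
  have cX : ∀ x, ‖(D * B) x‖ ≤ ‖x‖ := fun x =>
    (norm_proj_le sD iD _).trans (norm_proj_le sB iB x)
  have cX' : ∀ x, ‖(B * D) x‖ ≤ ‖x‖ := fun x =>
    (norm_proj_le sB iB _).trans (norm_proj_le sD iD x)
  have t1 := ergodic _ (contraction h cX') _ (ker_fixed h) T.ξ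
  have t2 := ergodic _ (contraction (adj_symm h) cX) _ (ker_fixed (adj_symm h)) T.ξ
  have lim : (⟪T.ξ, pr (D * B).ker T.ξ⟫_ℂ).re = (⟪T.ξ, pr (B * D).ker T.ξ⟫_ℂ).re := by
    have c : Continuous fun x : H => (⟪T.ξ, x⟫_ℂ).re := by fun_prop
    have u1 := (c.tendsto _).comp t1
    have u2 := (c.tendsto _).comp t2
    refine tendsto_nhds_unique u1 (u2.congr fun n => ?_)
    have cast : ((n : ℂ))⁻¹ = (((n : ℝ)⁻¹ : ℝ) : ℂ) := by push_cast; rfl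
    simp only [Function.comp, inner_smul_right, inner_sum, cast, Complex.re_ofReal_mul,
      Complex.re_sum, trace_pow MX MX' h]
  have kB : pr (D * B).ker T.ξ = T.ξ - B T.ξ := by
    apply pr_eq
    · apply Submodule.le_topologicalClosure
      simp [iB]
    · intro w hw
      have hw' : D (B w) = 0 := hw
      have : B w = 0 := by
        by_contra hne
        refine hno (B w) hne ?_ (iB w)
        have := hw'
        simp only [hD, _root_.sub_apply, rB, sub_eq_zero] at this
        exact this.symm
      rw [sub_sub_cancel, sB, this, inner_zero_right]
  have e1 : (⟪T.ξ, T.ξ - B T.ξ⟫_ℂ).re = 1 - ‖B T.ξ‖ ^ 2 := by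
    rw [inner_sub_right, Complex.sub_re, nsq sB iB]
    have : (⟪T.ξ, T.ξ⟫_ℂ).re = ‖T.ξ‖ ^ 2 := inner_self_eq_norm_sq (𝕜 := ℂ) _
    rw [this, T.norm_one]; norm_num
  have e2 : (⟪T.ξ, T.ξ - D T.ξ⟫_ℂ).re = 1 - ‖D T.ξ‖ ^ 2 := by
    rw [inner_sub_right, Complex.sub_re, nsq sD iD]
    have : (⟪T.ξ, T.ξ⟫_ℂ).re = ‖T.ξ‖ ^ 2 := inner_self_eq_norm_sq (𝕜 := ℂ) _
    rw [this, T.norm_one]; norm_num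
  have e3 : ‖D T.ξ‖ ^ 2 = ‖r T.ξ‖ ^ 2 - ‖A T.ξ‖ ^ 2 := by
    rw [← nsq sD iD, ← nsq sr ir, ← nsq sA iA, hD, _root_.sub_apply, inner_sub_right,
      Complex.sub_re]
  -- the projection onto `ker D` is dominated by the projection onto `ker (B * D)`
  have e4 : (⟪T.ξ, T.ξ - D T.ξ⟫_ℂ).re ≤ (⟪T.ξ, pr (B * D).ker T.ξ⟫_ℂ).re := by
    have hz : T.ξ - D T.ξ ∈ (B * D).ker := by simp [iD]
    have f1 : (⟪T.ξ, pr (B * D).ker T.ξ⟫_ℂ).re = ‖pr (B * D).ker T.ξ‖ ^ 2 :=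
      nsq (pr_inner _) (pr_pr _) _
    have f2 : (⟪T.ξ, T.ξ - D T.ξ⟫_ℂ).re = ‖T.ξ - D T.ξ‖ ^ 2 :=
      nsq (P := 1 - D) (fun x y => by simp [inner_sub_left, inner_sub_right, sD])
        (fun x => by simp [iD]) T.ξ
    have f3 : ⟪T.ξ, T.ξ - D T.ξ⟫_ℂ = ⟪pr (B * D).ker T.ξ, T.ξ - D T.ξ⟫_ℂ := by
      rw [pr_inner, pr_of_mem hz]
    have f4 : (⟪pr (B * D).ker T.ξ, T.ξ - D T.ξ⟫_ℂ).re ≤ ‖pr (B * D).ker T.ξ‖ * ‖T.ξ - D T.ξ‖ :=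
      re_inner_le_norm (𝕜 := ℂ) _ _
    rw [← f3, f2] at f4
    rw [f1, f2]
    nlinarith [norm_nonneg (pr (B * D).ker T.ξ), norm_nonneg (T.ξ - D T.ξ),
      sq_nonneg (‖T.ξ - D T.ξ‖ - ‖pr (B * D).ker T.ξ‖)]
  rw [← lim, kB, e1, e2, e3] at e4
  linarith

end TRep

end

/-! ### The Gelfand-Naimark-Segal construction -/

section

open Filter Topology
open scoped ComplexOrder InnerProductSpace

universe u

section
variable {Γ : Type u} [Group Γ] {τ : Γ → ℂ}

theorem IsCharacter.inv (h : IsCharacter τ) (x : Γ) : τ x⁻¹ = starRingEnd ℂ (τ x) := by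
  have key : ∀ c : ℂ, 0 ≤ 1 + starRingEnd ℂ c * τ x⁻¹ + (c * τ x + c * starRingEnd ℂ c) := by
    intro c
    have := h.1 2 ![1, c] ![1, x]
    simpa [Fin.sum_univ_two, h.2.2] using this
  have h1 := (Complex.le_def.1 (key 1)).2
  have h2 := (Complex.le_def.1 (key Complex.I)).2
  simp at h1 h2
  apply Complex.ext <;> simp <;> linarith

/-- Positive definiteness in terms of finitely supported functions on the group. -/
theorem IsCharacter.finsupp_nonneg (h : IsCharacter τ) (f : Γ →₀ ℂ) :
    0 ≤ f.sum fun x z => f.sum fun y w => starRingEnd ℂ z * w * τ (x⁻¹ * y) := by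
  have key := h.1 f.support.card (fun i => f (f.support.equivFin.symm i))
    (fun i => (f.support.equivFin.symm i : Γ))
  have e : ∀ G : Γ → ℂ, ∑ i, G (f.support.equivFin.symm i : Γ) = ∑ x ∈ f.support, G x := by
    intro G
    rw [Equiv.sum_comp f.support.equivFin.symm (fun x => G (x : Γ))]
    exact Finset.sum_coe_sort f.support G
  refine key.trans_eq ?_
  rw [Finset.sum_comm]
  rw [e fun x => ∑ i, f (f.support.equivFin.symm i) * starRingEnd ℂ (f x) *
    τ (x⁻¹ * f.support.equivFin.symm i)]
  refine Finset.sum_congr rfl fun x _ => ?_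
  rw [e fun y => f y * starRingEnd ℂ (f x) * τ (x⁻¹ * y)]
  exact Finset.sum_congr rfl fun y _ => by ring

/-- The semi-inner product on finitely supported functions attached to a character. -/
noncomputable abbrev gnsCore (h : IsCharacter τ) : PreInnerProductSpace.Core ℂ (Γ →₀ ℂ) where
  inner f g := f.sum fun x z => g.sum fun y w => starRingEnd ℂ z * w * τ (x⁻¹ * y)
  conj_inner_symm f g := by
    rw [Finsupp.sum_comm]
    simp only [map_finsuppSum]
    congr! 6 with x z y w
    simp only [map_mul, ← h.inv]
    simp [mul_comm]
  add_left _ _ _ := by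
    rw [Finsupp.sum_add_index'] <;> simp [← Finsupp.sum_add, add_mul]
  smul_left _ _ _ := by
    rw [Finsupp.sum_smul_index] <;> simp [Finsupp.mul_sum, ← mul_assoc]
  re_inner_nonneg f := (Complex.le_def.1 (h.finsupp_nonneg f)).1

/-- The Hilbert space of a character, with its total family of vectors `k g` indexed by the group.
-/
theorem exists_gns_vectors (h : IsCharacter τ) :
    ∃ (H : Type u) (_ : NormedAddCommGroup H) (_ : InnerProductSpace ℂ H) (_ : CompleteSpace H)
      (k : Γ → H), (∀ g h, ⟪k g, k h⟫_ℂ = τ (g⁻¹ * h)) ∧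
        DenseRange (Finsupp.linearCombination ℂ k) := by
  let _ := InnerProductSpace.Core.toSeminormedAddCommGroup (𝕜 := ℂ) (c := gnsCore h)
  let _ : InnerProductSpace ℂ (Γ →₀ ℂ) := .ofCore (gnsCore h)
  refine ⟨UniformSpace.Completion (Γ →₀ ℂ), inferInstance, inferInstance, inferInstance,
    fun g => ((Finsupp.single g 1 : Γ →₀ ℂ) : UniformSpace.Completion (Γ →₀ ℂ)), ?_, ?_⟩
  · intro x y
    rw [UniformSpace.Completion.inner_coe]
    change (Finsupp.single x (1 : ℂ)).sum (fun x z => (Finsupp.single y (1 : ℂ)).sum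
      fun y w => starRingEnd ℂ z * w * τ (x⁻¹ * y)) = _
    simp
  · have : ⇑(Finsupp.linearCombination ℂ fun g =>
        ((Finsupp.single g 1 : Γ →₀ ℂ) : UniformSpace.Completion (Γ →₀ ℂ))) =
        ((↑) : (Γ →₀ ℂ) → UniformSpace.Completion (Γ →₀ ℂ)) := by
      have : Finsupp.linearCombination ℂ (fun g =>
        ((Finsupp.single g 1 : Γ →₀ ℂ) : UniformSpace.Completion (Γ →₀ ℂ))) =
          ((UniformSpace.Completion.toComplL : (Γ →₀ ℂ) →L[ℂ] _) :
            (Γ →₀ ℂ) →ₗ[ℂ] UniformSpace.Completion (Γ →₀ ℂ)) := by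
        apply Finsupp.lhom_ext
        intro a b
        rw [Finsupp.linearCombination_single]
        simp [← UniformSpace.Completion.coe_smul]
      rw [this]; rfl
    rw [this]
    exact UniformSpace.Completion.denseRange_coe

theorem IsCharacter.comm (h : IsCharacter τ) (x y : Γ) : τ (x * y) = τ (y * x) := by
  rw [← h.2.1 (x * y) y]
  congr 1; group

/-- A permutation preserving the Gram matrix of a total family is implemented by a unitary. -/
theorem exists_unitary {H : Type*} [NormedAddCommGroup H] [InnerProductSpace ℂ H] [CompleteSpace H]
    {k : Γ → H} (hk : DenseRange (Finsupp.linearCombination ℂ k)) (σ : Equiv.Perm Γ)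
    (hσ : ∀ g h, ⟪k (σ g), k (σ h)⟫_ℂ = ⟪k g, k h⟫_ℂ) :
    ∃ U : H ≃ₗᵢ[ℂ] H, ∀ g, U (k g) = k (σ g) := by
  have hn : ∀ x, ‖Finsupp.linearCombination ℂ k (Finsupp.domLCongr (R := ℂ) σ x)‖ =
      ‖Finsupp.linearCombination ℂ k x‖ := by
    intro x
    have : ⟪Finsupp.linearCombination ℂ k (Finsupp.domLCongr (R := ℂ) σ x),
        Finsupp.linearCombination ℂ k (Finsupp.domLCongr (R := ℂ) σ x)⟫_ℂ =
        ⟪Finsupp.linearCombination ℂ k x, Finsupp.linearCombination ℂ k x⟫_ℂ := by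
      have e : Finsupp.linearCombination ℂ k (Finsupp.domLCongr (R := ℂ) σ x) =
          x.sum fun g a => a • k (σ g) := by
        rw [Finsupp.linearCombination_apply, Finsupp.domLCongr_apply]
        exact Finsupp.sum_equivMapDomain _ _ _
      rw [e, Finsupp.linearCombination_apply]
      simp only [Finsupp.sum, sum_inner, inner_sum, inner_smul_left, inner_smul_right, hσ]
    have h2 := congrArg Complex.re this
    have e : ∀ x : H, (⟪x, x⟫_ℂ).re = ‖x‖ ^ 2 := fun x => inner_self_eq_norm_sq (𝕜 := ℂ) x
    rw [e, e] at h2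
    exact (sq_eq_sq₀ (norm_nonneg _) (norm_nonneg _)).1 h2
  have hs : ∀ g, Finsupp.domLCongr (R := ℂ) σ (Finsupp.single g (1 : ℂ)) = Finsupp.single (σ g) 1 :=
    fun g => Finsupp.domLCongr_single σ g 1
  have hc : ∀ g, Finsupp.linearCombination ℂ k (Finsupp.single g 1) = k g := fun g => by simp
  generalize (Finsupp.domLCongr (R := ℂ) σ : (Γ →₀ ℂ) ≃ₗ[ℂ] (Γ →₀ ℂ)) = L at hn hs
  generalize Finsupp.linearCombination ℂ k = e at hn hk hc
  refine ⟨L.extendOfIsometry e e hk hk hn, fun g => ?_⟩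
  have h2 := LinearEquiv.extendOfIsometry_eq L e e hk hk hn (Finsupp.single g 1)
  rw [hs, hc, hc] at h2
  exact h2

theorem unitary_ext {H : Type*} [NormedAddCommGroup H] [InnerProductSpace ℂ H] [CompleteSpace H]
    {k : Γ → H} (hk : DenseRange (Finsupp.linearCombination ℂ k)) {U V : H ≃ₗᵢ[ℂ] H}
    (h : ∀ g, U (k g) = V (k g)) : U = V := by
  have : (U : H → H) = V := by
    refine hk.equalizer U.continuous V.continuous ?_
    funext c
    simp [Finsupp.linearCombination_apply, Finsupp.sum, map_sum, h]
  exact DFunLike.coe_injective this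

/-- The Gelfand-Naimark-Segal construction for a character. -/
theorem exists_TRep (h : IsCharacter τ) :
    ∃ (H : Type u) (_ : NormedAddCommGroup H) (_ : InnerProductSpace ℂ H) (_ : CompleteSpace H)
      (T : TRep Γ H), T.tr = τ := by
  obtain ⟨H, i1, i2, i3, k, hk, hd⟩ := exists_gns_vectors h
  refine ⟨H, i1, i2, i3, ?_⟩
  have ex1 : ∀ g : Γ, ∃ U : H ≃ₗᵢ[ℂ] H, ∀ x, U (k x) = k (g * x) := fun g =>
    exists_unitary hd (Equiv.mulLeft g) fun x y => by
      simp only [hk, Equiv.coe_mulLeft]; congr 1; group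
  have ex2 : ∀ g : Γ, ∃ U : H ≃ₗᵢ[ℂ] H, ∀ x, U (k x) = k (x * g⁻¹) := fun g =>
    exists_unitary hd (Equiv.mulRight g⁻¹) fun x y => by
      simp only [hk, Equiv.coe_mulRight]
      rw [← h.2.1 (x⁻¹ * y) g]; congr 1; group
  choose P hP using ex1
  choose Q hQ using ex2
  refine ⟨{ π := MonoidHom.mk' P fun a b => unitary_ext hd fun x => ?_
            ρ := MonoidHom.mk' Q fun a b => unitary_ext hd fun x => ?_
            comm := fun a b x => ?_
            ξ := k 1
            fix := fun g => ?_
            total := fun x hx => ?_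
            norm_one := ?_ }, ?_⟩
  · change _ = P a (P b (k x)); simp [hP, mul_assoc]
  · change _ = Q a (Q b (k x)); simp [hQ, mul_assoc]
  · have : (Q b).trans (P a) = (P a).trans (Q b) := unitary_ext hd fun x => by
      simp [hP, hQ, mul_assoc]
    exact congrArg (fun U : H ≃ₗᵢ[ℂ] H => U x) this
  · change P g (Q g (k 1)) = k 1; simp [hP, hQ]
  · have hx' : ∀ g, ⟪k g, x⟫_ℂ = 0 := fun g => by
      have := hx g
      change ⟪P g (k 1), x⟫_ℂ = 0 at this
      simpa [hP] using this
    refine hd.eq_zero_of_inner_right ℂ fun c => ?_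
    simp [Finsupp.linearCombination_apply, Finsupp.sum, sum_inner, inner_smul_left, hx']
  · have : ‖k 1‖ ^ 2 = 1 := by
      rw [← inner_self_eq_norm_sq (𝕜 := ℂ), hk]; simp [h.2.2]
    nlinarith [norm_nonneg (k 1)]
  · funext g
    change ⟪k 1, P g (k 1)⟫_ℂ = _
    rw [hP, hk]; simp

end

end

/-! ### Extremality -/

section

open Filter Topology
open scoped ComplexOrder InnerProductSpace

theorem extremal_eq {Γ : Type*} [Group Γ] {τ φ₁ φ₂ : Γ → ℂ} (hτ : IsExtremalCharacter τ)
    (h1 : IsCharacter φ₁) (h2 : IsCharacter φ₂) {c : ℝ} (hc0 : 0 < c) (hc1 : c < 1)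
    (h : ∀ g, τ g = c * φ₁ g + (1 - c : ℝ) * φ₂ g) (g : Γ) : φ₁ g = τ g := by
  have hs : τ ∈ openSegment ℝ φ₁ φ₂ := by
    refine ⟨c, 1 - c, hc0, sub_pos.2 hc1, by ring, ?_⟩
    funext g
    simp only [Pi.add_apply, Pi.smul_apply, Complex.real_smul]
    rw [h g]
  exact congrFun ((mem_extremePoints.1 hτ).2 φ₁ h1 φ₂ h2 hs).1 g

namespace TRep
variable {Γ H : Type*} [Group Γ] [NormedAddCommGroup H] [InnerProductSpace ℂ H] [CompleteSpace H]
  {T : TRep Γ H}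

/-- A positive operator commuting with both actions defines, after normalization, a character. -/
theorem isCharacter_of_pos {A : H →L[ℂ] H} (hM : T.InM A) (hπ : ∀ g x, A (T.π g x) = T.π g (A x))
    (hpos : ∀ x, 0 ≤ ⟪x, A x⟫_ℂ) {c : ℝ} (hc : 0 < c) (hAc : ⟪T.ξ, A T.ξ⟫_ℂ = c) :
    IsCharacter fun g => (c : ℂ)⁻¹ * ⟪T.ξ, A (T.π g T.ξ)⟫_ℂ := by
  have hc' : (c : ℂ) ≠ 0 := by exact_mod_cast hc.ne'
  refine ⟨fun n lam g => ?_, fun g h => ?_, ?_⟩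
  · have : ∑ i, ∑ j, lam i * (starRingEnd ℂ) (lam j) *
        ((c : ℂ)⁻¹ * ⟪T.ξ, A (T.π ((g j)⁻¹ * g i) T.ξ)⟫_ℂ) =
        (c : ℂ)⁻¹ * ⟪∑ i, lam i • T.π (g i) T.ξ, A (∑ i, lam i • T.π (g i) T.ξ)⟫_ℂ := by
      simp only [map_sum, map_smul, sum_inner, inner_sum, inner_smul_left, inner_smul_right,
        Finset.mul_sum]
      refine Finset.sum_congr rfl fun i _ => Finset.sum_congr rfl fun j _ => ?_
      rw [T.π_inner (g j), ← hπ, ← T.π_mul]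
      ring
    rw [this]
    refine mul_nonneg ?_ (hpos _)
    rw [← Complex.ofReal_inv]
    exact_mod_cast (inv_pos.2 hc).le
  · have h1 := T.ρ_ξ h
    have : T.π h⁻¹ T.ξ = T.ρ h T.ξ := h1.symm
    simp only
    rw [T.π_mul, T.π_mul, this, T.comm, T.comm, hM, hπ, ← T.comm, T.inner_π, this, T.ρ_inner, T.ρ_inv_self]
  · simp [hAc, hc']

/-- An operator between `0` and `1` commuting with both actions splits the character into a convex
combination, so for an extremal character it acts on `ξ` as a scalar. -/
theorem ext_aux (hτ : IsExtremalCharacter T.tr) {A : H →L[ℂ] H} (hM : T.InM A)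
    (hπ : ∀ g x, A (T.π g x) = T.π g (A x)) (hpos : ∀ x, 0 ≤ ⟪x, A x⟫_ℂ)
    (hpos' : ∀ x, 0 ≤ ⟪x, x - A x⟫_ℂ) {c : ℝ} (hc0 : 0 < c) (hc1 : c < 1)
    (hAc : ⟪T.ξ, A T.ξ⟫_ℂ = c) : A T.ξ = (c : ℂ) • T.ξ := by
  have hξ : ⟪T.ξ, T.ξ⟫_ℂ = 1 := by simp [inner_self_eq_norm_sq_to_K, T.norm_one]
  have k1 := isCharacter_of_pos hM hπ hpos hc0 hAc
  have k2 := isCharacter_of_pos (A := 1 - A) (InM.one.sub hM) (fun g x => by simp [hπ])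
    (by simpa using hpos') (c := 1 - c) (by linarith) (by simp [inner_sub_right, hAc, T.norm_one])
  have hc' : (c : ℂ) ≠ 0 := by exact_mod_cast hc0.ne'
  have hc'' : ((1 - c : ℝ) : ℂ) ≠ 0 := by exact_mod_cast (sub_pos.2 hc1).ne'
  have e := extremal_eq hτ k1 k2 hc0 hc1 fun g => by
    rw [mul_inv_cancel_left₀ hc', mul_inv_cancel_left₀ hc'', ← inner_add_right]
    simp [tr]
  refine T.eq_of_total fun g => ?_
  have := e g⁻¹
  simp only [tr] at this
  rw [inv_mul_eq_iff_eq_mul₀ hc', hπ, T.inner_π, T.inner_π, inv_inv] at this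
  rw [this, inner_smul_right]

/-- If the character is extremal, operators between `0` and `1` commuting with both actions
act on `ξ` by a scalar. -/
theorem ext_scalar (hτ : IsExtremalCharacter T.tr) {A : H →L[ℂ] H} (hM : T.InM A)
    (hπ : ∀ g x, A (T.π g x) = T.π g (A x)) (hpos : ∀ x, 0 ≤ ⟪x, A x⟫_ℂ)
    (hpos' : ∀ x, 0 ≤ ⟪x, x - A x⟫_ℂ) : ∃ c : ℂ, A T.ξ = c • T.ξ := by
  have hξ : ⟪T.ξ, T.ξ⟫_ℂ = 1 := by simp [inner_self_eq_norm_sq_to_K, T.norm_one]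
  have h0 := hpos T.ξ
  have h1 := hpos' T.ξ
  obtain ⟨c, hc⟩ : ∃ c : ℝ, ⟪T.ξ, A T.ξ⟫_ℂ = c :=
    ⟨_, Complex.ext rfl (by simpa using (Complex.le_def.1 h0).2.symm)⟩
  rw [inner_sub_right, hc, hξ] at h1
  rw [hc] at h0
  have h0' : 0 ≤ c := by exact_mod_cast h0
  have h1' : 0 ≤ 1 - c := by exact_mod_cast h1
  -- the affine change of `A` moves the value of the state into the open unit interval
  have hs : ∀ x : H, 0 ≤ ⟪x, x⟫_ℂ := fun x => by
    have : ⟪x, x⟫_ℂ = ((‖x‖ ^ 2 : ℝ) : ℂ) := by rw [inner_self_eq_norm_sq_to_K]; simp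
    rw [this]; exact Complex.zero_le_real.2 (sq_nonneg _)
  have q4 : (0 : ℂ) ≤ 1 / 4 := by
    simp
  have q2 : (0 : ℂ) ≤ 1 / 2 := by
    simp
  have := ext_aux hτ (A := (1 / 4 : ℂ) • 1 + (1 / 2 : ℂ) • A)
    ((InM.one.smul _).add (hM.smul _)) (fun g x => by simp [hπ])
    (fun x => by
      have := add_nonneg (mul_nonneg q4 (hs x)) (mul_nonneg q2 (hpos x))
      simpa [inner_add_right, inner_smul_right] using this)
    (fun x => by
      have := add_nonneg (mul_nonneg q4 (hs x)) (mul_nonneg q2 (hpos' x))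
      convert this using 1
      simp only [inner_sub_right, inner_add_right, inner_smul_right, _root_.add_apply,
        _root_.smul_apply, one_apply_eq_self]
      ring)
    (c := 1 / 4 + 1 / 2 * c) (by linarith) (by linarith)
    (by simp [inner_add_right, inner_smul_right, T.norm_one, hc])
  refine ⟨c, ?_⟩
  simp only [_root_.add_apply, _root_.smul_apply, one_apply_eq_self] at this
  have h2 : A T.ξ = (2 : ℂ) • ((1 / 4 : ℂ) • T.ξ + (1 / 2 : ℂ) • A T.ξ - (1 / 4 : ℂ) • T.ξ) := by
    rw [add_sub_cancel_left, smul_smul]; norm_num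
  rw [h2, this, ← sub_smul, smul_smul]
  congr 1
  push_cast; ring

/-- If the character is extremal, unitaries commuting with both actions are scalar. -/
theorem unitary_scalar (hτ : IsExtremalCharacter T.tr) (U : H ≃ₗᵢ[ℂ] H)
    (hM : ∀ g x, U (T.ρ g x) = T.ρ g (U x)) (hπ : ∀ g x, U (T.π g x) = T.π g (U x)) :
    ∃ c : ℂ, U T.ξ = c • T.ξ := by
  have sM : ∀ g x, U.symm (T.ρ g x) = T.ρ g (U.symm x) := fun g x => by
    rw [LinearIsometryEquiv.symm_apply_eq, hM, U.apply_symm_apply]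
  have sπ : ∀ g x, U.symm (T.π g x) = T.π g (U.symm x) := fun g x => by
    rw [LinearIsometryEquiv.symm_apply_eq, hπ, U.apply_symm_apply]
  have hUM : T.InM (U : H →L[ℂ] H) := fun g x => hM g x
  have hVM : T.InM (U.symm : H →L[ℂ] H) := fun g x => sM g x
  have key : ∀ d : ℂ, ‖d‖ = 1 →
      ∃ c : ℂ, d • U T.ξ + (starRingEnd ℂ d) • U.symm T.ξ = c • T.ξ := by
    intro d hd
    have bound : ∀ x, ∃ r : ℝ, d * ⟪x, U x⟫_ℂ + starRingEnd ℂ d * ⟪x, U.symm x⟫_ℂ = r ∧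
        |r| ≤ 2 * ‖x‖ ^ 2 := by
      intro x
      have e : starRingEnd ℂ d * ⟪x, U.symm x⟫_ℂ = starRingEnd ℂ (d * ⟪x, U x⟫_ℂ) := by
        rw [map_mul, inner_conj_symm, ← U.symm.inner_map_map (U x) x, U.symm_apply_apply]
      refine ⟨2 * (d * ⟪x, U x⟫_ℂ).re, ?_, ?_⟩
      · rw [e, Complex.add_conj]
      · have h1 := Complex.abs_re_le_norm (d * ⟪x, U x⟫_ℂ)
        have h2 : ‖d * ⟪x, U x⟫_ℂ‖ ≤ ‖x‖ ^ 2 := by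
          rw [norm_mul, hd, one_mul, sq]
          simpa using norm_inner_le_norm (𝕜 := ℂ) x (U x)
        rw [abs_mul, abs_two]; linarith
    have ns : ∀ x : H, ⟪x, x⟫_ℂ = ((‖x‖ ^ 2 : ℝ) : ℂ) := fun x => by
      rw [inner_self_eq_norm_sq_to_K]; simp
    obtain ⟨c, hc⟩ := ext_scalar hτ (A := (1 / 2 : ℂ) • 1 +
        (1 / 4 : ℂ) • (d • (U : H →L[ℂ] H) + (starRingEnd ℂ d) • (U.symm : H →L[ℂ] H)))
      ((InM.one.smul _).add (((hUM.smul _).add (hVM.smul _)).smul _))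
      (fun g x => by simp [hπ, sπ])
      (fun x => by
        obtain ⟨r, hr, hb⟩ := bound x
        have : (0 : ℝ) ≤ 1 / 2 * ‖x‖ ^ 2 + 1 / 4 * r := by linarith [(abs_le.1 hb).1]
        have h2 : (0 : ℂ) ≤ ((1 / 2 * ‖x‖ ^ 2 + 1 / 4 * r : ℝ) : ℂ) := by exact_mod_cast this
        convert h2 using 1
        simp only [inner_add_right, inner_smul_right, _root_.add_apply,
          _root_.smul_apply, one_apply_eq_self]
        rw [Complex.ofReal_add, Complex.ofReal_mul, Complex.ofReal_mul, ← ns, ← hr]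
        push_cast; rfl)
      (fun x => by
        obtain ⟨r, hr, hb⟩ := bound x
        have : (0 : ℝ) ≤ 1 / 2 * ‖x‖ ^ 2 - 1 / 4 * r := by linarith [(abs_le.1 hb).2]
        have h2 : (0 : ℂ) ≤ ((1 / 2 * ‖x‖ ^ 2 - 1 / 4 * r : ℝ) : ℂ) := by exact_mod_cast this
        convert h2 using 1
        simp only [inner_sub_right, inner_add_right, inner_smul_right, _root_.add_apply,
          _root_.smul_apply, one_apply_eq_self]
        rw [Complex.ofReal_sub, Complex.ofReal_mul, Complex.ofReal_mul, ← ns, ← hr]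
        push_cast
        change _ - (_ + 1 / 4 * (d * ⟪x, U x⟫_ℂ + starRingEnd ℂ d * ⟪x, U.symm x⟫_ℂ)) = _
        ring)
    refine ⟨4 * c - 2, ?_⟩
    simp only [_root_.add_apply, _root_.smul_apply, one_apply_eq_self] at hc
    change (1 / 2 : ℂ) • T.ξ + (1 / 4 : ℂ) • (d • U T.ξ + (starRingEnd ℂ d) • U.symm T.ξ) = _ at hc
    rw [sub_smul, mul_smul, ← hc]
    module
  obtain ⟨a, ha⟩ := key 1 (by simp)
  obtain ⟨b, hb⟩ := key Complex.I (by simp)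
  refine ⟨1 / 2 * (a - Complex.I * b), ?_⟩
  rw [mul_smul, sub_smul, mul_smul, ← ha, ← hb]
  simp only [map_one, one_smul, smul_add, smul_smul, Complex.conj_I]
  simp only [mul_neg, Complex.I_mul_I]
  module

end TRep

end

/-! ### Projections attached to a unipotent group -/

section

open Filter Topology
open scoped ComplexOrder InnerProductSpace

namespace TRep
variable {Γ H : Type*} [Group Γ] [NormedAddCommGroup H] [InnerProductSpace ℂ H] [CompleteSpace H]
  {T : TRep Γ H}

/-- On `A ξ` the left action of `c` can be exchanged for the right action of `c⁻¹`. -/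
theorem InM.swap {A : H →L[ℂ] H} (hA : T.InM A) {c : Γ} (hc : ∀ x, A (T.π c x) = T.π c (A x)) :
    T.π c (A T.ξ) = T.ρ c⁻¹ (A T.ξ) := by
  rw [← hc, ← hA, T.ρ_ξ, inv_inv]

variable {R : Type*} [CommRing R] {a : R → Γ}

variable (T a) in
/-- The vectors fixed by the image under `a` of the ideal `n! R`. -/
def Fx (n : ℕ) : Submodule ℂ H where
  carrier := {x | ∀ r : R, T.π (a ((n.factorial : R) * r)) x = x}
  zero_mem' := fun r => by simp
  add_mem' := fun {x y} hx hy r => by rw [map_add, hx r, hy r]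
  smul_mem' := fun c x hx r => by rw [map_smul, hx r]

theorem mem_Fx {n : ℕ} {x : H} : x ∈ T.Fx a n ↔ ∀ r : R, T.π (a ((n.factorial : R) * r)) x = x :=
  Iff.rfl

theorem Fx_mono : Monotone (T.Fx a) := by
  intro m n h x hx r
  obtain ⟨d, hd⟩ := Nat.factorial_dvd_factorial h
  have := hx (d * r)
  rwa [← mul_assoc, ← Nat.cast_mul, ← hd] at this

theorem Fx_closed (n : ℕ) : IsClosed (T.Fx a n : Set H) := by
  have : (T.Fx a n : Set H) = ⋂ r : R, {x | T.π (a ((n.factorial : R) * r)) x = x} := by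
    ext x; simp [mem_Fx]
  rw [this]
  exact isClosed_iInter fun r => isClosed_eq (T.π _).continuous continuous_id

theorem Fx_ρ (n : ℕ) (g : Γ) (x : H) (hx : x ∈ T.Fx a n) : T.ρ g x ∈ T.Fx a n := fun r => by
  rw [T.comm, hx r]

variable (T a) in
/-- The projection onto the closure of the union of all `Fx n`. -/
noncomputable def pA : H →L[ℂ] H := pr (⨆ n, T.Fx a n)

theorem pA_tendsto (x : H) : Tendsto (fun n => pr (T.Fx a n) x) atTop (𝓝 (T.pA a x)) :=
  pr_tendsto _ Fx_mono Fx_closed x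

theorem Fx_inM (n : ℕ) : T.InM (pr (T.Fx a n)) := InM.pr (Fx_ρ n)

theorem pA_inM : T.InM (T.pA a) := fun g x => by
  refine tendsto_nhds_unique (pA_tendsto _) ?_
  simp only [Fx_inM _ g]
  exact (T.ρ g).continuous.continuousAt.tendsto.comp (pA_tendsto x)

theorem e_pA (n : ℕ) (x : H) : pr (T.Fx a n) (T.pA a x) = pr (T.Fx a n) x := by
  symm
  rw [← sub_eq_zero, ← map_sub]
  apply eq_zero_of_inner_self
  rw [pr_inner, pr_pr]
  exact pr_sub_inner _ x (le_iSup (T.Fx a) n (pr_mem (Fx_closed n) _))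

theorem pA_e (n : ℕ) (x : H) : T.pA a (pr (T.Fx a n) x) = pr (T.Fx a n) x :=
  pr_of_mem (le_iSup (T.Fx a) n (pr_mem (Fx_closed n) _))

theorem a_zero (ha : ∀ x y, a (x + y) = a x * a y) : a 0 = 1 := by
  have := ha 0 0
  rw [add_zero] at this
  exact left_eq_mul.1 this

theorem a_neg (ha : ∀ x y, a (x + y) = a x * a y) (x : R) : a (-x) = (a x)⁻¹ := by
  rw [eq_inv_iff_mul_eq_one, ← ha, neg_add_cancel, a_zero ha]

/-- If a matrix coefficient of `y` is constant along the group `a(n! R)`, then it does not change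
when `y` is projected to the vectors fixed by that group. -/
theorem fixed_lemma (ha : ∀ x y, a (x + y) = a x * a y) (n : ℕ) {η y : H}
    (h : ∀ r : R, ⟪η, T.π (a ((n.factorial : R) * r)) y⟫_ℂ = ⟪η, y⟫_ℂ) :
    ⟪η, pr (T.Fx a n) y⟫_ℂ = ⟪η, y⟫_ℂ := by
  let f : R → H := fun r => T.π (a ((n.factorial : R) * r)) y - y
  let W := Submodule.span ℂ (Set.range f)
  have orth : ∀ w : H, (∀ r, ⟪w, f r⟫_ℂ = 0) → pr W w = 0 := by
    intro w hw
    refine pr_eq (zero_mem _) fun x hx => ?_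
    rw [sub_zero]
    induction hx using Submodule.span_induction with
    | mem x hx => obtain ⟨r, rfl⟩ := hx; exact hw r
    | zero => simp
    | add x y _ _ hx hy => rw [inner_add_right, hx, hy, add_zero]
    | smul c x _ hx => rw [inner_smul_right, hx, mul_zero]
  have hst : ∀ (s : R), ∀ x ∈ W, T.π (a ((n.factorial : R) * s)) x ∈ W := by
    intro s x hx
    induction hx using Submodule.span_induction with
    | mem x hx =>
      obtain ⟨r, rfl⟩ := hx
      have : T.π (a ((n.factorial : R) * s)) (f r) = f (s + r) - f s := by
        simp only [f, map_sub]
        rw [← T.π_mul, ← ha, mul_add]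
        abel
      rw [this]
      exact sub_mem (Submodule.subset_span ⟨_, rfl⟩) (Submodule.subset_span ⟨_, rfl⟩)
    | zero => simp
    | add x y _ _ hx hy => rw [map_add]; exact add_mem hx hy
    | smul c x _ hx => rw [map_smul]; exact W.smul_mem c hx
  have hη : pr W η = 0 := orth η fun r => by simp only [f]; rw [inner_sub_right, h r, sub_self]
  have hm : y - pr W y ∈ T.Fx a n := by
    intro s
    have h1 := pr_comm W (T.π (a ((n.factorial : R) * s))) (hst s) (fun x hx => by
      rw [T.π_symm, ← a_neg ha, ← mul_neg]; exact hst (-s) x hx) y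
    have h2 : pr W (f s) = f s := pr_of_mem (Submodule.subset_span ⟨s, rfl⟩)
    rw [map_sub, ← h1]
    simp only [f, map_sub] at h2
    rw [sub_eq_iff_eq_add.1 h2]
    abel
  have : pr (T.Fx a n) y = y - pr W y := by
    refine pr_eq ((T.Fx a n).le_topologicalClosure hm) fun w hw => ?_
    rw [sub_sub_cancel, pr_inner, orth w, inner_zero_right]
    intro r
    simp only [f]
    rw [inner_sub_right, T.inner_π, ← a_neg ha, ← mul_neg, hw, sub_self]
  rw [this, inner_sub_right, ← pr_inner, hη, inner_zero_left, sub_zero]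

section
variable {b : Γ} {w : Rˣ}

theorem conj_symm (hb : ∀ x, b * a x * b⁻¹ = a (w * x)) (x : R) : b⁻¹ * a x * b = a ((w⁻¹ : Rˣ) * x) := by
  have := hb ((w⁻¹ : Rˣ) * x)
  rw [← mul_assoc (w : R), Units.mul_inv, one_mul] at this
  rw [← this]; group

/-- The projection to `Fx` commutes with elements which normalize the unipotent group and act on it
by a unit. -/
theorem e_conj (hb : ∀ x, b * a x * b⁻¹ = a (w * x)) (n : ℕ) (x : H) : pr (T.Fx a n) (T.π b x) = T.π b (pr (T.Fx a n) x) := by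
  apply pr_comm
  · intro x hx r
    have := conj_symm hb ((n.factorial : R) * r)
    rw [mul_left_comm] at this
    have h2 : a ((n.factorial : R) * r) * b = b * a ((n.factorial : R) * ((w⁻¹ : Rˣ) * r)) := by
      rw [← this]; group
    rw [← T.π_mul, h2, T.π_mul, hx]
  · intro x hx r
    have := hb ((n.factorial : R) * r)
    rw [mul_left_comm] at this
    have h2 : a ((n.factorial : R) * r) * b⁻¹ = b⁻¹ * a ((n.factorial : R) * (w * r)) := by
      rw [← this]; group
    rw [T.π_symm, ← T.π_mul, h2, T.π_mul, hx]

theorem pA_conj (hb : ∀ x, b * a x * b⁻¹ = a (w * x)) (x : H) : T.pA a (T.π b x) = T.π b (T.pA a x) := by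
  refine tendsto_nhds_unique (pA_tendsto _) ?_
  simp only [e_conj hb]
  exact (T.π b).continuous.continuousAt.tendsto.comp (pA_tendsto x)

end

variable [IsDomain R] [OrderLoc R]

theorem exists_factorial_dvd {x : R} (hx : x ≠ 0) (m : ℕ) :
    ∃ n, m ≤ n ∧ x ∣ (n.factorial : R) := by
  obtain ⟨N, hN, h⟩ := OrderLoc.exists_nat_dvd hx
  refine ⟨max m N, le_max_left _ _, h.trans ?_⟩
  exact_mod_cast Nat.cast_dvd_cast (Nat.dvd_factorial (Nat.pos_of_ne_zero hN) (le_max_right m N))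

/-- An element acting on the unipotent group `a` by a nontrivial unit moves the part of `ξ` with
no invariance under `a` to an orthogonal vector. -/
theorem orth_q (ha : ∀ x y, a (x + y) = a x * a y) {b : Γ} {w : Rˣ} (hw : w ≠ 1)
    (hb : ∀ x, b * a x * b⁻¹ = a (w * x)) :
    ⟪T.ξ - T.pA a T.ξ, T.π b (T.ξ - T.pA a T.ξ)⟫_ℂ = 0 := by
  have hw' : (1 - w : R) ≠ 0 := fun h => hw (Units.ext (sub_eq_zero.1 h).symm)
  obtain ⟨n, -, z, hz⟩ := exists_factorial_dvd hw' 0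
  have hq : T.InM (1 - T.pA a) := InM.one.sub pA_inM
  have hc : ∀ c x, (1 - T.pA a) (T.π (a c) x) = T.π (a c) ((1 - T.pA a) x) := fun c x => by
    have := pA_conj (T := T) (a := a) (b := a c) (w := 1) (fun x => by
      rw [← ha, add_comm, ha]; simp) x
    simp [this]
  have hqξ : T.ξ - T.pA a T.ξ = (1 - T.pA a) T.ξ := by simp
  have h0 : pr (T.Fx a n) (T.π b (T.ξ - T.pA a T.ξ)) = 0 := by
    rw [e_conj hb, map_sub, e_pA, sub_self, map_zero]
  rw [← fixed_lemma ha n, h0, inner_zero_right]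
  intro r
  have e1 : a ((n.factorial : R) * r) * b = a (z * r) * b * a (-(z * r)) := by
    have h1 : (n.factorial : R) * r = z * r + w * (-(z * r)) := by rw [hz]; ring
    rw [h1, ha, ← hb]; group
  rw [← T.π_mul, e1, T.π_mul, T.π_mul, T.inner_π, ← a_neg ha, hqξ, hq.swap (hc _),
    T.comm, LinearIsometryEquiv.inner_map_map]

end TRep

end

/-! ### Two opposite unipotent groups -/

section

open Filter Topology
open scoped ComplexOrder InnerProductSpace

/-- Two opposite unipotent groups `a` and `v` and a torus element `t`, which acts on `a` by the
unit `w` of infinite order and on `v` by `w⁻¹`. The field `rel` is the identity in `SL₂` which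
writes `v s * a z` as a product of elements of `a`, of `v` and of the torus when
`κ s z = w ^ i - 1`. -/
structure Datum (Γ R : Type*) [Group Γ] [CommRing R] where
  a : R → Γ
  v : R → Γ
  t : Γ
  w : Rˣ
  κ : R
  a_add : ∀ x y, a (x + y) = a x * a y
  v_add : ∀ x y, v (x + y) = v x * v y
  ta : ∀ x, t * a x * t⁻¹ = a (w * x)
  tv : ∀ x, t * v x * t⁻¹ = v ((w⁻¹ : Rˣ) * x)
  κ_ne : κ ≠ 0
  w_pow : ∀ n : ℕ, 1 ≤ n → w ^ n ≠ 1
  rel : ∀ (i : ℕ) (s z : R), κ * s * z = ((w ^ i : Rˣ) : R) - 1 →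
    v s * a z * t ^ (2 * i) = a (((w ^ i)⁻¹ : Rˣ) * z) * v ((w ^ i : Rˣ) * s)

namespace Datum
variable {Γ R : Type*} [Group Γ] [CommRing R]

/-- The datum with the roles of the unipotent groups exchanged. -/
def swap (D : Datum Γ R) : Datum Γ R where
  a := D.v
  v := D.a
  t := D.t⁻¹
  w := D.w
  κ := D.κ
  a_add := D.v_add
  v_add := D.a_add
  ta x := by
    have := TRep.conj_symm D.tv x
    simpa using this
  tv x := by
    have := TRep.conj_symm D.ta x
    simpa using this
  κ_ne := D.κ_ne
  w_pow := D.w_pow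
  rel i s z h := by
    have h1 := D.rel i (((D.w ^ i)⁻¹ : Rˣ) * z) ((D.w ^ i : Rˣ) * s) (by
      rw [← h]
      have : (((D.w ^ i)⁻¹ : Rˣ) : R) * ((D.w ^ i : Rˣ) : R) = 1 := Units.inv_mul _
      linear_combination (D.κ * s * z) * this)
    rw [Units.inv_mul_cancel_left, Units.mul_inv_cancel_left] at h1
    rw [← h1]; group

theorem ta_pow (D : Datum Γ R) (i : ℕ) (x : R) :
    D.t ^ i * D.a x * (D.t ^ i)⁻¹ = D.a ((D.w ^ i : Rˣ) * x) := by
  induction i with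
  | zero => simp
  | succ i ih =>
    have : D.t ^ (i + 1) * D.a x * (D.t ^ (i + 1))⁻¹ =
        D.t * (D.t ^ i * D.a x * (D.t ^ i)⁻¹) * D.t⁻¹ := by
      rw [pow_succ']; group
    rw [this, ih, D.ta, pow_succ', ← mul_assoc, Units.val_mul]

theorem tv_pow (D : Datum Γ R) (i : ℕ) (x : R) :
    D.t ^ i * D.v x * (D.t ^ i)⁻¹ = D.v (((D.w ^ i)⁻¹ : Rˣ) * x) := by
  have h := TRep.conj_symm (D.swap.ta_pow i) (((D.w ^ i)⁻¹ : Rˣ) * x)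
  have h2 := D.swap.ta_pow i (((D.w ^ i)⁻¹ : Rˣ) * x)
  change (D.t⁻¹) ^ i * D.v _ * ((D.t⁻¹) ^ i)⁻¹ = D.v ((D.w ^ i : Rˣ) * _) at h2
  rw [Units.mul_inv_cancel_left] at h2
  rw [← h2]; group

end Datum

namespace TRep
variable {Γ H : Type*} [Group Γ] [NormedAddCommGroup H] [InnerProductSpace ℂ H] [CompleteSpace H]
  {T : TRep Γ H} {R : Type*} [CommRing R]

/-- An operator commuting with both actions of `c` gives matrix coefficients invariant under
conjugation by `c`. -/
theorem conj_coeff {A B : H →L[ℂ] H} (hA : T.InM A) (hB : T.InM B) {c : Γ}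
    (cA : ∀ x, A (T.π c x) = T.π c (A x)) (cB : ∀ x, B (T.π c x) = T.π c (B x)) (g : Γ) :
    ⟪A T.ξ, T.π (c⁻¹ * g * c) (B T.ξ)⟫_ℂ = ⟪A T.ξ, T.π g (B T.ξ)⟫_ℂ := by
  rw [T.π_mul, T.π_mul, T.inner_π, inv_inv, hA.swap cA, hB.swap cB, T.comm,
    LinearIsometryEquiv.inner_map_map]

variable [IsDomain R] [OrderLoc R] (D : Datum Γ R)

/-- The part of `ξ` orthogonal to the image of `pA` is killed by projecting to vectors fixed under
a congruence subgroup of `v` and then under one of `a`. Translates of this part by suitable powers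
of the torus element are orthogonal by `orth_q`, while their coefficients are all equal by `rel`
and `conj_coeff`; by Bessel's inequality the coefficients vanish. -/
theorem e_f_q (n m : ℕ) :
    pr (T.Fx D.a n) (pr (T.Fx D.v m) (T.ξ - T.pA D.a T.ξ)) = 0 := by
  set η := T.ξ - T.pA D.a T.ξ with hη
  set y := pr (T.Fx D.a n) (pr (T.Fx D.v m) η) with hy
  have hq : T.InM (1 - T.pA D.a) := InM.one.sub pA_inM
  have hqξ : η = (1 - T.pA D.a) T.ξ := by simp [hη]
  have hY : T.InM (pr (T.Fx D.a n) * (pr (T.Fx D.v m) * (1 - T.pA D.a))) :=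
    (Fx_inM n).comp ((Fx_inM m).comp hq)
  have hyξ : y = (pr (T.Fx D.a n) * (pr (T.Fx D.v m) * (1 - T.pA D.a))) T.ξ := by
    simp [hy, hη]
  have yE : y ∈ T.Fx D.a n := pr_mem (Fx_closed n) _
  have cq : ∀ i : ℕ, ∀ x, (1 - T.pA D.a) (T.π (D.t ^ i) x) = T.π (D.t ^ i) ((1 - T.pA D.a) x) :=
    fun i x => by
      simp only [_root_.sub_apply, one_apply_eq_self, pA_conj (D.ta_pow i), map_sub]
  have cY : ∀ i : ℕ, ∀ x, (pr (T.Fx D.a n) * (pr (T.Fx D.v m) * (1 - T.pA D.a))) (T.π (D.t ^ i) x)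
      = T.π (D.t ^ i) ((pr (T.Fx D.a n) * (pr (T.Fx D.v m) * (1 - T.pA D.a))) x) := fun i x => by
    simp only [mul_apply_eq_comp]
    rw [cq, e_conj (D.tv_pow i), e_conj (D.ta_pow i)]
  have h0 : ⟪y, η⟫_ℂ = 0 := by
    have h1 : pr (T.Fx D.a n) y = y := pr_of_mem yE
    rw [← h1, pr_inner, hη, map_sub, e_pA, sub_self, inner_zero_right]
  have hs : ∀ r : R, ⟪y, T.π (D.v ((m.factorial : R) * r)) η⟫_ℂ = 0 := by
    intro r
    set s := (m.factorial : R) * r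
    by_cases s0 : s = 0
    · rw [s0, a_zero D.v_add, T.π_one, h0]
    by_cases hn0 : (n.factorial : R) = 0
    · have := hη
      have h1 : ∀ z, z ∈ T.Fx D.a n := fun z r => by rw [hn0, zero_mul, a_zero D.a_add, T.π_one]
      have h2 : η = 0 := by
        rw [hη, ← pr_of_mem (h1 T.ξ), pA_e, sub_self]
      rw [h2, map_zero, inner_zero_right]
    obtain ⟨N, hN, hdvd⟩ := OrderLoc.exists_nat_dvd (mul_ne_zero (mul_ne_zero D.κ_ne s0) hn0)
    obtain ⟨k, hk, hkl⟩ := OrderLoc.exists_unit_pow D.w hN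
    choose z hz using fun l => hdvd.trans (hkl l)
    let d : ℕ → Γ := fun l => D.a ((n.factorial : R) * z l) * D.t ^ (2 * (k * l))
    have hd : ∀ l x, d l * D.a x * (d l)⁻¹ = D.a ((D.w ^ (2 * (k * l)) : Rˣ) * x) := by
      intro l x
      have : d l * D.a x * (d l)⁻¹ = D.a ((n.factorial : R) * z l) *
          (D.t ^ (2 * (k * l)) * D.a x * (D.t ^ (2 * (k * l)))⁻¹) *
            (D.a ((n.factorial : R) * z l))⁻¹ := by
        simp only [d]; group
      rw [this, D.ta_pow, ← D.a_add, add_comm, D.a_add, mul_inv_cancel_right]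
    have hdd : ∀ i j, i < j → ⟪T.π (d i) η, T.π (d j) η⟫_ℂ = 0 := by
      intro i j hij
      rw [T.π_inner, ← T.π_mul]
      refine orth_q D.a_add (w := D.w ^ (2 * (k * (j - i)))) (D.w_pow _ ?_) ?_
      · have : 0 < j - i := by omega
        have := Nat.mul_pos hk this
        omega
      · intro x
        have h1 : (d i)⁻¹ * d j * D.a x * ((d i)⁻¹ * d j)⁻¹ =
            (d i)⁻¹ * (d j * D.a x * (d j)⁻¹) * d i := by group
        rw [h1, hd, conj_symm (hd i), ← mul_assoc, ← Units.val_mul]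
        congr 3
        rw [inv_mul_eq_iff_eq_mul, ← pow_add]
        congr 1
        obtain ⟨e, rfl⟩ := Nat.exists_eq_add_of_lt hij
        rw [show i + e + 1 - i = e + 1 by omega]; ring
    -- The vectors are orthogonal, but the coefficients are all equal.
    have lim := bessel (fun l => T.π (d l) η) ‖η‖ (fun l => by simp) hdd (T.π (D.v s)⁻¹ y)
    have const : ∀ l, ⟪T.π (d l) η, T.π (D.v s)⁻¹ y⟫_ℂ = ⟪T.π (D.v s) η, y⟫_ℂ := by
      intro l
      have e1 := D.rel (k * l) s ((n.factorial : R) * z l) (by rw [hz]; ring)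
      have e2 : D.v ((D.w ^ (k * l) : Rˣ) * s) = (D.t ^ (k * l))⁻¹ * D.v s * D.t ^ (k * l) := by
        have := conj_symm (D.tv_pow (k * l)) s
        rw [inv_inv] at this
        rw [this]
      rw [e2] at e1
      have e3 : D.v s * d l = D.a ((n.factorial : R) * (((D.w ^ (k * l))⁻¹ : Rˣ) * z l)) *
          ((D.t ^ (k * l))⁻¹ * D.v s * D.t ^ (k * l)) := by
        rw [mul_left_comm, ← e1]; simp only [d]; group
      rw [T.inner_π, inv_inv, ← T.π_mul, e3, T.π_mul, T.π_inner, ← a_neg D.a_add, ← mul_neg, yE,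
        ← inner_conj_symm, hqξ, hyξ, conj_coeff hY hq (cY _) (cq _), inner_conj_symm]
    simp only [const] at lim
    rw [← inner_conj_symm, tendsto_const_nhds_iff.1 lim, map_zero]
  have h1 := fixed_lemma (a := D.v) D.v_add m (η := y) (y := η) (fun r => by rw [hs, h0])
  rw [h0] at h1
  apply eq_zero_of_inner_self
  conv_lhs => rw [hy]
  rw [pr_inner, pr_of_mem yE, ← inner_conj_symm, h1, map_zero]

theorem e_f (n m : ℕ) (x : H) : pr (T.Fx D.a n) (pr (T.Fx D.v m) (T.pA D.a x)) =
    pr (T.Fx D.a n) (pr (T.Fx D.v m) x) := by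
  have h1 : T.InM (pr (T.Fx D.a n) * pr (T.Fx D.v m)) := (Fx_inM n).comp (Fx_inM m)
  have h2 : pr (T.Fx D.a n) * pr (T.Fx D.v m) * T.pA D.a = pr (T.Fx D.a n) * pr (T.Fx D.v m) := by
    refine (h1.comp pA_inM).ext h1 ?_
    have := T.e_f_q D n m
    rw [map_sub, map_sub, sub_eq_zero] at this
    simp [this]
  exact congrArg (fun A : H →L[ℂ] H => A x) h2

theorem pA_inner (a : R → Γ) (x y : H) : ⟪T.pA a x, y⟫_ℂ = ⟪x, T.pA a y⟫_ℂ := pr_inner _ x y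

theorem pA_pA (a : R → Γ) (x : H) : T.pA a (T.pA a x) = T.pA a x := pr_pr _ x

theorem pA_comm_f (m : ℕ) (x : H) :
    T.pA D.a (pr (T.Fx D.v m) x) = pr (T.Fx D.v m) (T.pA D.a x) := by
  have h1 : ∀ x, T.pA D.a (pr (T.Fx D.v m) (T.pA D.a x)) = T.pA D.a (pr (T.Fx D.v m) x) := by
    intro x
    refine tendsto_nhds_unique (pA_tendsto _) ?_
    simp only [e_f]
    exact pA_tendsto _
  rw [← h1]
  refine ext_inner_right ℂ fun y => ?_
  rw [pA_inner, pr_inner, pA_inner, h1, ← pA_inner, ← pr_inner]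

/-- The projections attached to two opposite unipotent groups commute. -/
theorem pA_comm_pA (x : H) : T.pA D.a (T.pA D.v x) = T.pA D.v (T.pA D.a x) := by
  refine tendsto_nhds_unique ?_ (pA_tendsto (a := D.v) (T.pA D.a x))
  simp only [← pA_comm_f]
  exact (T.pA D.a).continuous.continuousAt.tendsto.comp (pA_tendsto (a := D.v) x)

/-- If the two projections have nonzero product then some nonzero vector is fixed by congruence
subgroups of both unipotent groups. -/
theorem exists_fixed (h : T.pA D.a (T.pA D.v T.ξ) ≠ 0) : ∃ (n : ℕ) (x : H), x ≠ 0 ∧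
    x ∈ T.Fx D.a n ∧ x ∈ T.Fx D.v n := by
  have ce : ∀ n x, pr (T.Fx D.a n) (T.pA D.v x) = T.pA D.v (pr (T.Fx D.a n) x) :=
    fun n x => (pA_comm_f D.swap n x).symm
  have cf : ∀ n x, pr (T.Fx D.v n) (T.pA D.a x) = T.pA D.a (pr (T.Fx D.v n) x) :=
    fun n x => (pA_comm_f D n x).symm
  have cp := pA_comm_pA (T := T) D
  have lim : Tendsto (fun n => ‖pr (T.Fx D.a n) (T.pA D.v T.ξ)‖ ^ 2 +
      ‖pr (T.Fx D.v n) (T.pA D.a T.ξ)‖ ^ 2) atTop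
      (𝓝 (‖T.pA D.a (T.pA D.v T.ξ)‖ ^ 2 + ‖T.pA D.a (T.pA D.v T.ξ)‖ ^ 2)) := by
    refine ((pA_tendsto _).norm.pow 2).add ?_
    rw [cp]
    exact (pA_tendsto _).norm.pow 2
  have pos : 0 < ‖T.pA D.a (T.pA D.v T.ξ)‖ ^ 2 := by
    have := norm_pos_iff.2 h
    positivity
  obtain ⟨n, hn⟩ := (lim.eventually (lt_mem_nhds (lt_add_of_pos_right _ pos))).exists
  obtain ⟨x, x0, hA, hB⟩ := kaplansky (T := T) (A := pr (T.Fx D.a n) * T.pA D.v)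
    (B := pr (T.Fx D.v n) * T.pA D.a) (r := T.pA D.a * T.pA D.v)
    ((Fx_inM n).comp pA_inM) ((Fx_inM n).comp pA_inM) (pA_inM.comp pA_inM)
    (fun x y => by simp only [mul_apply_eq_comp]; rw [pr_inner, pA_inner, ce])
    (fun x y => by simp only [mul_apply_eq_comp]; rw [pr_inner, pA_inner, cf])
    (fun x y => by simp only [mul_apply_eq_comp]; rw [pA_inner, pA_inner, cp])
    (fun x => by simp only [mul_apply_eq_comp]; rw [← ce, pA_pA, pr_pr])
    (fun x => by simp only [mul_apply_eq_comp]; rw [← cf, pA_pA, pr_pr])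
    (fun x => by simp only [mul_apply_eq_comp]; rw [← cp, pA_pA, pA_pA])
    (fun x => by simp only [mul_apply_eq_comp]; rw [← ce, pA_pA, pA_e])
    (fun x => by simp only [mul_apply_eq_comp]; rw [pA_e, ← cf, pA_pA])
    (by simpa using hn)
  simp only [mul_apply_eq_comp] at hA hB
  refine ⟨n, x, x0, ?_, ?_⟩
  · rw [← hA]; exact pr_mem (Fx_closed n) _
  · rw [← hB]; exact pr_mem (Fx_closed n) _

end TRep

end

/-! ### Vanishing off the center -/

section

open Matrix Filter Topology
open scoped ComplexOrder InnerProductSpace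

namespace TRep
variable {R H : Type*} [CommRing R] [IsDomain R] [OrderLoc R] [CharZero R]
  [NormedAddCommGroup H] [InnerProductSpace ℂ H] [CompleteSpace H]
  {T : TRep (SpecialLinearGroup (Fin 2) R) H}

/-- Upper triangular matrices that act on the upper unipotent group by a unit different from `1`
have trace zero, by `orth_q`. -/
theorem tr_upper (hp : T.pA e12 T.ξ = 0) {b : SpecialLinearGroup (Fin 2) R} (h10 : b 1 0 = 0)
    (h00 : b 0 0 ^ 2 ≠ 1) : T.tr b = 0 := by
  have hdet := sl2_det b
  rw [h10, mul_zero, sub_zero] at hdet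
  let u : Rˣ := Units.mkOfMulEqOne (b 0 0) (b 1 1) hdet
  have hu : (u : R) = b 0 0 := rfl
  have h := orth_q (T := T) (a := e12) (w := u ^ 2) (b := b) e12_add
    (fun h => h00 (by rw [← hu, ← Units.val_pow_eq_pow_val, h, Units.val_one])) (fun x => by
      rw [Units.val_pow_eq_pow_val, hu]
      apply sl2_ext <;> simp [h10]
      · linear_combination hdet
      · ring
      · linear_combination hdet)
  rwa [hp, sub_zero] at h

/-- Choose `t` upper triangular having the first column of `g` as an eigenvector. The vectors
`π(tⁱ g t⁻ⁱ) ξ` are pairwise orthogonal by `tr_upper`, and their inner products with `ξ` are all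
equal to `τ(g)`, so Bessel's inequality gives `τ(g) = 0`. -/
theorem tr_eq_zero_of_10 (hp : T.pA e12 T.ξ = 0) {ω : Rˣ} (hω : ∀ n : ℕ, 1 ≤ n → ω ^ n ≠ 1)
    {g : SpecialLinearGroup (Fin 2) R} (hg : g 1 0 ≠ 0) : T.tr g = 0 := by
  obtain ⟨N, hN, hdvd⟩ := OrderLoc.exists_nat_dvd hg
  obtain ⟨k, hk, hkl⟩ := OrderLoc.exists_unit_pow ω hN
  set α := ω ^ k with hα
  obtain ⟨c, hc⟩ := hdvd.trans (hkl 2)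
  rw [pow_mul, ← hα, Units.val_pow_eq_pow_val] at hc
  have hαi : (α : R) * ((α⁻¹ : Rˣ) : R) = 1 := Units.mul_inv α
  let t : SpecialLinearGroup (Fin 2) R := ⟨!![((α⁻¹ : Rˣ) : R), g 0 0 * (((α⁻¹ : Rˣ) : R) * c); 0, α],
    by rw [det_fin_two_of]; linear_combination hαi⟩
  have q00 : t 0 0 = ((α⁻¹ : Rˣ) : R) := rfl
  have q01 : t 0 1 = g 0 0 * (((α⁻¹ : Rˣ) : R) * c) := rfl
  have q10 : t 1 0 = 0 := rfl
  have q11 : t 1 1 = α := rfl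
  -- the first column of `g` is an eigenvector of `t`
  have tp : ∀ m : ℕ, (t ^ m) 1 0 = 0 ∧ (t ^ m) 1 1 = (α : R) ^ m ∧
      (t ^ m) 0 0 * g 0 0 + (t ^ m) 0 1 * g 1 0 = (α : R) ^ m * g 0 0 := by
    intro m
    induction m with
    | zero => simp
    | succ m ih =>
      obtain ⟨h1, h2, h3⟩ := ih
      refine ⟨?_, ?_, ?_⟩
      · rw [pow_succ, sl2_mul_apply, h1, q10]; ring
      · rw [pow_succ, sl2_mul_apply, h1, h2, q11]; ring
      · rw [pow_succ, sl2_mul_apply, sl2_mul_apply, q00, q01, q10, q11]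
        linear_combination (α : R) * h3 - (t ^ m) 0 0 * g 0 0 * ((α⁻¹ : Rˣ) : R) * hc +
          (t ^ m) 0 0 * g 0 0 * α * hαi
  -- The commutator `g⁻¹ t^m g t⁻ᵐ` is upper triangular with diagonal entry `α^(2m)`.
  have comm : ∀ m : ℕ, 1 ≤ m → T.tr (g⁻¹ * (t ^ m * g) * (t ^ m)⁻¹) = 0 := by
    intro m hm
    obtain ⟨h1, h2, h3⟩ := tp m
    have hdet := sl2_det g
    have a00 : (g⁻¹ * (t ^ m * g)) 0 0 = (α : R) ^ m := by
      rw [sl2_mul_apply, sl2_mul_apply, sl2_mul_apply, sl2_inv_00, sl2_inv_01, h1, h2]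
      linear_combination g 1 1 * h3 + (α : R) ^ m * hdet
    have a10 : (g⁻¹ * (t ^ m * g)) 1 0 = 0 := by
      rw [sl2_mul_apply, sl2_mul_apply, sl2_mul_apply, sl2_inv_10, sl2_inv_11, h1, h2]
      linear_combination (-g 1 0) * h3
    refine tr_upper hp ?_ ?_
    · rw [sl2_mul_apply, a10, sl2_inv_10, h1]; ring
    · rw [sl2_mul_apply, a00, sl2_inv_10, sl2_inv_00, h1, h2]
      intro h
      refine hω (k * m * 4) (by have := Nat.mul_pos hk hm; omega) (Units.ext ?_)
      rw [pow_mul, pow_mul, ← hα, Units.val_one]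
      push_cast
      linear_combination h
  have orth : ∀ i j, i < j → ⟪T.π (t ^ i * g * (t ^ i)⁻¹) T.ξ, T.π (t ^ j * g * (t ^ j)⁻¹) T.ξ⟫_ℂ = 0 := by
    intro i j hij
    obtain ⟨e, rfl⟩ := Nat.exists_eq_add_of_lt hij
    rw [inner_ππ, ← comm (e + 1) (by omega), ← T.tr_conj (g⁻¹ * (t ^ (e + 1) * g) * (t ^ (e + 1))⁻¹) (t ^ i),
      add_assoc, pow_add]
    congr 1
    group
  have lim := bessel (fun i => T.π (t ^ i * g * (t ^ i)⁻¹) T.ξ) 1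
    (fun i => by simp [T.norm_one]) orth T.ξ
  have const : ∀ i, ⟪T.π (t ^ i * g * (t ^ i)⁻¹) T.ξ, T.ξ⟫_ℂ = starRingEnd ℂ (T.tr g) := fun i => by
    rw [← inner_conj_symm, ← T.tr_conj g (t ^ i)]; rfl
  simp only [const] at lim
  exact (map_eq_zero _).1 (tendsto_const_nhds_iff.1 lim)

/-- If no part of `ξ` is almost invariant under the unipotent group then the character vanishes
off the center. -/
theorem tr_eq_zero (hp : T.pA e12 T.ξ = 0) {ω : Rˣ} (hω : ∀ n : ℕ, 1 ≤ n → ω ^ n ≠ 1)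
    {g : SpecialLinearGroup (Fin 2) R} (hg : g ∉ Subgroup.center (SpecialLinearGroup (Fin 2) R)) :
    T.tr g = 0 := by
  have hs : ∃ s : R, (e21 s * g * (e21 s)⁻¹) 1 0 ≠ 0 := by
    by_contra! h
    have h0 := h 0
    have h1 := h 1
    have h2 := h (-1)
    simp at h0 h1 h2
    have hb : g 0 1 = 0 := by
      have : (2 : R) * g 0 1 = 0 := by linear_combination -h1 - h2 + 2 * h0
      simpa using this
    have had : g 0 0 = g 1 1 := by linear_combination h1 - h0 + hb
    refine hg (Subgroup.mem_center_iff.2 fun x => ?_)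
    apply sl2_ext <;> simp [h0, hb, had, mul_comm]
  obtain ⟨s, hs⟩ := hs
  rw [← T.tr_conj g (e21 s)]
  exact tr_eq_zero_of_10 hp hω hs

end TRep

end

/-! ### Unipotent groups opposite to the standard one -/

section

open Matrix Filter Topology
open scoped ComplexOrder InnerProductSpace

section
variable {R : Type*} [CommRing R] [IsDomain R]

/-- The unipotent group fixing the column vector `(1, y)`, obtained by conjugating the upper
unipotent group by `e21 y`. -/
def vy (y z : R) : SpecialLinearGroup (Fin 2) R := e21 y * e12 (-z) * (e21 y)⁻¹

theorem vy_00 (y z : R) : vy y z 0 0 = 1 + z * y := by simp [vy]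
theorem vy_01 (y z : R) : vy y z 0 1 = -z := by simp [vy]
theorem vy_10 (y z : R) : vy y z 1 0 = y ^ 2 * z := by simp [vy]; ring
theorem vy_11 (y z : R) : vy y z 1 1 = 1 - y * z := by simp [vy]; ring

theorem vy_add (y s z : R) : vy y (s + z) = vy y s * vy y z := by
  rw [vy, neg_add, e12_add, vy, vy]; group

/-- The torus element is an upper triangular matrix with eigenvectors `(1, 0)` and `(1, y)`; its
entries lie in `R` if its eigenvalues are a suitable power of `ω` and its inverse. -/
theorem exists_datum [OrderLoc R] {ω : Rˣ} (hω : ∀ n : ℕ, 1 ≤ n → ω ^ n ≠ 1) {y : R} (hy : y ≠ 0) :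
    ∃ D : Datum (SpecialLinearGroup (Fin 2) R) R, D.a = e12 ∧ D.v = vy y := by
  obtain ⟨N, hN, hdvd⟩ := OrderLoc.exists_nat_dvd hy
  obtain ⟨k, hk, hkl⟩ := OrderLoc.exists_unit_pow ω hN
  set u := ω ^ k with hu
  obtain ⟨c, hc⟩ := hdvd.trans (hkl 2)
  rw [pow_mul, ← hu, Units.val_pow_eq_pow_val] at hc
  have hui : (u : R) * ((u⁻¹ : Rˣ) : R) = 1 := Units.mul_inv u
  let t : SpecialLinearGroup (Fin 2) R := ⟨!![(u : R), -(((u⁻¹ : Rˣ) : R) * c); 0, ((u⁻¹ : Rˣ) : R)],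
    by rw [det_fin_two_of]; linear_combination hui⟩
  have q00 : t 0 0 = u := rfl
  have q01 : t 0 1 = -(((u⁻¹ : Rˣ) : R) * c) := rfl
  have q10 : t 1 0 = 0 := rfl
  have q11 : t 1 1 = ((u⁻¹ : Rˣ) : R) := rfl
  have hyc : y * -(((u⁻¹ : Rˣ) : R) * c) = ((u⁻¹ : Rˣ) : R) - u := by
    linear_combination ((u⁻¹ : Rˣ) : R) * hc - u * hui
  have tp : ∀ m : ℕ, (t ^ m) 1 0 = 0 ∧ (t ^ m) 1 1 = ((u⁻¹ : Rˣ) : R) ^ m ∧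
      (t ^ m) 0 0 = (u : R) ^ m ∧ y * (t ^ m) 0 1 = ((u⁻¹ : Rˣ) : R) ^ m - (u : R) ^ m := by
    intro m
    induction m with
    | zero => simp
    | succ m ih =>
      obtain ⟨h1, h2, h3, h4⟩ := ih
      refine ⟨?_, ?_, ?_, ?_⟩
      · rw [pow_succ, sl2_mul_apply, h1, q10]; ring
      · rw [pow_succ, sl2_mul_apply, h1, h2, q11]; ring
      · rw [pow_succ, sl2_mul_apply, h3, q10, q00]; ring
      · rw [pow_succ, sl2_mul_apply, h3, q01, q11]
        linear_combination (u : R) ^ m * hyc + ((u⁻¹ : Rˣ) : R) * h4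
  refine ⟨{ a := e12, v := vy y, t := t, w := u ^ 2, κ := y ^ 2, a_add := e12_add, v_add := vy_add y,
            ta := ?_, tv := ?_, κ_ne := pow_ne_zero 2 hy, w_pow := ?_, rel := ?_ }, rfl, rfl⟩
  · intro x
    apply sl2_ext <;> simp [q00, q01, q10, q11]
    linear_combination (-c) * hui
  · intro x
    rw [mul_inv_eq_iff_eq_mul]
    rw [← inv_pow, Units.val_pow_eq_pow_val]
    apply sl2_ext <;> simp only [sl2_mul_apply, vy_00, vy_01, vy_10, vy_11, q00, q01, q10, q11]
    · linear_combination (x * y) * hyc - (x * y * ((u⁻¹ : Rˣ) : R)) * hui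
    · linear_combination (-x * (1 + ((u⁻¹ : Rˣ) : R) ^ 2)) * hyc + x * ((u⁻¹ : Rˣ) : R) * hui
    · linear_combination (-(y ^ 2 * x * ((u⁻¹ : Rˣ) : R))) * hui
    · linear_combination (-y * ((u⁻¹ : Rˣ) : R) ^ 2 * x) * hyc + y * x * ((u⁻¹ : Rˣ) : R) * hui
  · intro n hn h
    refine hω (k * 2 * n) (by have := Nat.mul_pos hk hn; nlinarith) ?_
    rw [pow_mul, pow_mul, ← hu, h]
  · intro i s z h
    obtain ⟨h1, h2, h3, h4⟩ := tp (2 * i)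
    have hU : ((u ^ 2) ^ i : Rˣ) = u ^ (2 * i) := (pow_mul _ _ _).symm
    have hUV : (u : R) ^ (2 * i) * ((u⁻¹ : Rˣ) : R) ^ (2 * i) = 1 := by rw [← mul_pow, hui, one_pow]
    rw [hU, Units.val_pow_eq_pow_val] at h ⊢
    rw [← inv_pow, Units.val_pow_eq_pow_val]
    generalize ((u⁻¹ : Rˣ) : R) ^ (2 * i) = V at *
    generalize (u : R) ^ (2 * i) = U at *
    apply sl2_ext <;> simp only [sl2_mul_apply, vy_00, vy_01, vy_10, vy_11, e12_00, e12_01, e12_10,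
      e12_11, h1, h2, h3]
    · linear_combination (-1 : R) * h + (-z * y ^ 2 * s) * hUV
    · apply mul_left_cancel₀ hy
      linear_combination (1 + s * y) * h4 + (V + 1) * h + (1 + s * y ^ 2 * z) * hUV
    · ring
    · linear_combination (y * s) * h4 + V * h + hUV

end

end

/-! ### Vectors fixed by a normal subgroup -/

section

open Matrix Filter Topology
open scoped ComplexOrder InnerProductSpace

namespace TRep
variable {R H : Type*} [CommRing R] [IsDomain R]
  [NormedAddCommGroup H] [InnerProductSpace ℂ H] [CompleteSpace H]
  {T : TRep (SpecialLinearGroup (Fin 2) R) H}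

theorem mem_Fx_vy {y : R} {n : ℕ} {x : H} :
    x ∈ T.Fx (vy y) n ↔ T.π (e21 y)⁻¹ x ∈ T.Fx e12 n := by
  rw [mem_Fx, mem_Fx]
  have key : ∀ r : R, T.π (vy y (n.factorial * r)) x = x ↔
      T.π (e12 (n.factorial * -r)) (T.π (e21 y)⁻¹ x) = T.π (e21 y)⁻¹ x := fun r => by
    rw [vy, π_mul, π_mul, mul_neg]
    constructor
    · intro h
      have := congrArg (T.π (e21 y)⁻¹) h
      rwa [π_inv_self] at this
    · intro h
      rw [h, π_self_inv]
  constructor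
  · intro h r
    have := (key (-r)).1 (h (-r))
    rwa [neg_neg] at this
  · intro h r
    exact (key r).2 (h (-r))

theorem pr_Fx_vy (y : R) (n : ℕ) (x : H) :
    pr (T.Fx (vy y) n) x = T.π (e21 y) (pr (T.Fx e12 n) (T.π (e21 y)⁻¹ x)) := by
  apply pr_eq
  · refine Submodule.le_topologicalClosure _ (mem_Fx_vy.2 ?_)
    rw [π_inv_self]
    exact pr_mem (Fx_closed n) _
  · intro w hw
    have := pr_sub_inner (T.Fx e12 n) (T.π (e21 y)⁻¹ x) (mem_Fx_vy.1 hw)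
    rw [inner_π, inv_inv, map_sub, π_self_inv] at this
    exact this

theorem pA_vy (y : R) (x : H) :
    T.pA (vy y) x = T.π (e21 y) (T.pA e12 (T.π (e21 y)⁻¹ x)) := by
  refine tendsto_nhds_unique (pA_tendsto _) ?_
  simp only [pr_Fx_vy]
  exact (T.π (e21 y)).continuous.continuousAt.tendsto.comp (pA_tendsto _)

/-- The projection of `ξ` for `vy y` is obtained from that for `e12` by the conjugation action of
`e21 y` on the Hilbert space, which combines both actions. -/
theorem pA_vy_ξ (y : R) : T.pA (vy y) T.ξ = T.π (e21 y) (T.ρ (e21 y) (T.pA e12 T.ξ)) := by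
  rw [pA_vy, ← T.ρ_ξ, pA_inM]

/-- Some conjugate of the unipotent projection is not orthogonal to it: otherwise infinitely many
conjugates would be pairwise orthogonal, with the same nonzero value at the trace. -/
theorem exists_pA_vy_ne [OrderLoc R] [CharZero R] (hp : T.pA e12 T.ξ ≠ 0) :
    ∃ y : R, y ≠ 0 ∧ T.pA e12 (T.pA (vy y) T.ξ) ≠ 0 := by
  by_contra! hcon
  let u : ℕ → H := fun n => T.pA (vy ((n : ℕ) : R)) T.ξ
  have hu : ∀ n, u n = T.π (e21 (n : R)) (T.ρ (e21 (n : R)) (T.pA e12 T.ξ)) := fun n => pA_vy_ξ _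
  have key := bessel u ‖T.pA e12 T.ξ‖ (fun i => by
    rw [hu, LinearIsometryEquiv.norm_map, LinearIsometryEquiv.norm_map]) (fun i j hij => by
    obtain ⟨k, rfl⟩ := Nat.exists_eq_add_of_lt hij
    have e : (e21 ((i + k + 1 : ℕ) : R)) = e21 (i : R) * e21 ((k + 1 : ℕ) : R) := by
      rw [← e21_add]; push_cast; ring_nf
    rw [hu, hu, e, π_mul, ρ_mul, T.comm (e21 ((k + 1 : ℕ) : R)), LinearIsometryEquiv.inner_map_map,
      LinearIsometryEquiv.inner_map_map, ← pA_vy_ξ, pA_inner, hcon _ (by exact_mod_cast k.succ_ne_zero),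
      inner_zero_right]) T.ξ
  have c : ∀ i, ⟪u i, T.ξ⟫_ℂ = ⟪T.pA e12 T.ξ, T.pA e12 T.ξ⟫_ℂ := fun i => by
    rw [hu, T.π_inner, T.ρ_inner]
    have := T.fix (e21 (i : R))⁻¹
    rw [T.comm] at this
    rw [this]
    conv_rhs => rw [← pA_inner, pA_pA]
  simp only [c] at key
  exact hp (eq_zero_of_inner_self (tendsto_nhds_unique tendsto_const_nhds key))

/-- If the character is extremal, a normal subgroup fixing a nonzero vector acts trivially: the
projection onto its fixed vectors commutes with both actions, hence is scalar. -/
theorem normal_trivial (hτ : IsExtremalCharacter T.tr)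
    (N : Subgroup (SpecialLinearGroup (Fin 2) R)) [hN : N.Normal] {x : H} (hx : x ≠ 0)
    (h : ∀ g ∈ N, T.π g x = x) : ∀ g ∈ N, ∀ y, T.π g y = y := by
  let F : Submodule ℂ H :=
    { carrier := {y | ∀ g ∈ N, T.π g y = y}
      zero_mem' := fun g _ => by simp
      add_mem' := fun {a b} ha hb g hg => by rw [map_add, ha g hg, hb g hg]
      smul_mem' := fun c a ha g hg => by rw [map_smul, ha g hg] }
  have hF : ∀ y, y ∈ F ↔ ∀ g ∈ N, T.π g y = y := fun y => Iff.rfl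
  have hFc : IsClosed (F : Set H) := by
    have : (F : Set H) = ⋂ g : N, {y | T.π (g : SpecialLinearGroup (Fin 2) R) y = y} := by
      ext y; simp [hF]
    rw [this]
    exact isClosed_iInter fun g => isClosed_eq (T.π _).continuous continuous_id
  have hρ : ∀ g, ∀ y ∈ F, T.ρ g y ∈ F := fun g y hy n hn => by rw [T.comm, hy n hn]
  have hπ : ∀ g, ∀ y ∈ F, T.π g y ∈ F := fun g y hy n hn => by
    have h1 := hy _ (hN.conj_mem n hn g⁻¹)
    have h2 := congrArg (T.π g) h1
    rw [← π_mul] at h2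
    rwa [show g * (g⁻¹ * n * g⁻¹⁻¹) = n * g by group, π_mul] at h2
  have hM : T.InM (pr F) := InM.pr hρ
  obtain ⟨c, hc⟩ := ext_scalar hτ hM
    (fun g y => pr_comm F (T.π g) (hπ g) (fun z hz => by rw [π_symm]; exact hπ _ z hz) y)
    (fun y => by rw [← norm_sq_pr]; exact Complex.zero_le_real.2 (by positivity))
    (fun y => by
      have h1 : ⟪y, y - pr F y⟫_ℂ = ⟪y - pr F y, y - pr F y⟫_ℂ := by
        rw [inner_sub_left y, inner_sub_right (pr F y), pr_inner, pr_inner, pr_pr, sub_self, sub_zero]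
      have h2 : ⟪y - pr F y, y - pr F y⟫_ℂ = ((‖y - pr F y‖ ^ 2 : ℝ) : ℂ) := by
        simp [inner_self_eq_norm_sq_to_K]
      rw [h1, h2]
      exact Complex.zero_le_real.2 (by positivity))
  have hP : pr F = c • (1 : H →L[ℂ] H) := InM.ext hM (InM.one.smul c) (by simpa using hc)
  have hc1 : c = 1 := by
    have h1 : pr F x = x := pr_of_mem h
    rw [hP] at h1
    have h2 : (c - 1) • x = 0 := by
      rw [sub_smul, one_smul, sub_eq_zero]; simpa using h1
    rcases smul_eq_zero.1 h2 with h3 | h3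
    · exact sub_eq_zero.1 h3
    · exact absurd h3 hx
  intro g hg y
  have : pr F y ∈ F := pr_mem hFc y
  rw [hP, hc1, one_smul] at this
  exact this g hg

end TRep

end

/-! ### Finite quotients -/

section

open Matrix Filter Topology
open scoped ComplexOrder InnerProductSpace

section
variable {R : Type*} [CommRing R]

theorem e12_nat_mul (j : ℕ) (r : R) : e12 ((j : R) * r) = e12 r ^ j := by
  induction j with
  | zero => simp [e12_zero]
  | succ j ih => rw [pow_succ, ← ih, ← e12_add]; push_cast; ring_nf

theorem e21_nat_mul (j : ℕ) (r : R) : e21 ((j : R) * r) = e21 r ^ j := by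
  induction j with
  | zero => simp [e21_zero]
  | succ j ih => rw [pow_succ, ← ih, ← e21_add]; push_cast; ring_nf

theorem Cg_finiteIndex [OrderLoc R] [CharZero R] {j : ℕ} (hj : 1 ≤ j) : (Cg R j).FiniteIndex := by
  have := OrderLoc.finite_quot_nat (R := R) (N := j) (by omega)
  have h2 : Finite (Matrix (Fin 2) (Fin 2) (R ⧸ Ideal.span {(j : R)})) :=
    inferInstanceAs (Finite (Fin 2 → Fin 2 → _))
  have h3 : Finite (SpecialLinearGroup (Fin 2) (R ⧸ Ideal.span {(j : R)})) :=
    Finite.of_injective _ (Subtype.coe_injective (p := fun A : Matrix (Fin 2) (Fin 2)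
      (R ⧸ Ideal.span {(j : R)}) => A.det = 1))
  unfold Cg
  infer_instance

end

universe v

namespace TRep
variable {R H : Type*} [CommRing R] [IsDomain R] [OrderLoc R] [CharZero R]
  [NormedAddCommGroup H] [InnerProductSpace ℂ H] [CompleteSpace H]
  {T : TRep (SpecialLinearGroup (Fin 2) R) H}

/-- Once a normal subgroup containing `El R j` acts trivially, the congruence subgroup of level
`j ^ 2` acts by scalars. -/
theorem Cg_scalar (K : Type*) [Field K] [NumberField K] [Algebra R K] [IsFractionRing R K]
    {ω : Rˣ} (hω : ∀ n : ℕ, 1 ≤ n → ω ^ n ≠ 1) (hτ : IsExtremalCharacter T.tr)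
    {j : ℕ} (hj : 1 ≤ j) (N : Subgroup (SpecialLinearGroup (Fin 2) R)) [N.Normal]
    (hN : El R j ≤ N) (hT : ∀ g ∈ N, ∀ y, T.π g y = y)
    {z : SpecialLinearGroup (Fin 2) R} (hz : z ∈ Cg R (j ^ 2)) :
    (∀ g, Commute (T.π z) (T.π g)) ∧ ∃ c : ℂ, ∀ x, T.π z x = c • x := by
  have hcomm : ∀ g x, T.π z (T.π g x) = T.π g (T.π z x) := fun g x => by
    have h := hT _ (comm_mem K hω hj N hN hz g) (T.π z (T.π g x))
    rw [← π_mul, ← π_mul, show g * z * g⁻¹ * z⁻¹ * z * g = g * z by group, π_mul] at h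
    exact h.symm
  refine ⟨fun g => LinearIsometryEquiv.ext fun x => hcomm g x, ?_⟩
  obtain ⟨c, hc⟩ := unitary_scalar hτ (T.π z) (fun g x => T.comm z g x) hcomm
  have := InM.ext (InM.π (T := T) z) (InM.one.smul c) (by simpa using hc)
  refine ⟨c, fun x => ?_⟩
  have := congrArg (fun A : H →L[ℂ] H => A x) this
  simpa using this

/-- If the `j`-th powers of `V` are trivial on elementary matrices, the torsion bound applies to
the `j`-th power of `V`. -/
theorem pow_eq_one_of_pow_killsEl (K : Type*) [Field K] [NumberField K] [Algebra R K]
    [IsFractionRing R K] {ω : Rˣ} (hω : ∀ n : ℕ, 1 ≤ n → ω ^ n ≠ 1) (j : ℕ) :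
    ∃ M, 1 ≤ M ∧ ∀ (C : Type v) [CommGroup C] (V : SpecialLinearGroup (Fin 2) R →* C),
      (∀ r, V (e12 r) ^ j = 1) → (∀ r, V (e21 r) ^ j = 1) → ∀ g, (V g ^ j) ^ M = 1 := by
  obtain ⟨M, hM, h⟩ := pow_eq_one_of_killsEl K hω
  exact ⟨M, hM, fun C _ V h1 h2 => h C ((powMonoidHom j).comp V) ⟨h1, h2⟩⟩

/-- If `El R j` acts trivially and `Cg R (j ^ 2)` acts centrally, then the image of the
representation has finite exponent: the transfer into the center of the image is a power map, and
the torsion bound for homomorphisms trivial on elementary matrices applies to it. -/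
theorem exists_exponent (K : Type*) [Field K] [NumberField K] [Algebra R K] [IsFractionRing R K]
    {ω : Rˣ} (hω : ∀ n : ℕ, 1 ≤ n → ω ^ n ≠ 1)
    {j : ℕ} (hj : 1 ≤ j) (hT : ∀ g ∈ El R j, T.π g = 1)
    (hC : ∀ z ∈ Cg R (j ^ 2), ∀ g, Commute (T.π z) (T.π g)) :
    ∃ k : ℕ, 1 ≤ k ∧ ∀ g, T.π g ^ k = 1 := by
  let f := T.π.rangeRestrict
  have hf : Function.Surjective f := T.π.rangeRestrict_surjective
  have hle : Cg R (j ^ 2) ≤ (Subgroup.center T.π.range).comap f := by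
    intro z hz
    rw [Subgroup.mem_comap, Subgroup.mem_center_iff]
    rintro ⟨_, g, rfl⟩
    exact Subtype.ext (hC z hz g).symm.eq
  have h1 := Cg_finiteIndex (R := R) (j := j ^ 2) (Nat.one_le_pow _ _ hj)
  have h2 := Subgroup.finiteIndex_of_le hle
  have h3 : (Subgroup.center T.π.range).FiniteIndex := by
    refine ⟨?_⟩
    rw [← Subgroup.index_comap_of_surjective _ hf]
    exact h2.index_ne_zero
  let V : SpecialLinearGroup (Fin 2) R →* Subgroup.center T.π.range :=
    (MonoidHom.transferCenterPow T.π.range).comp f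
  obtain ⟨M, hM, h⟩ := pow_eq_one_of_pow_killsEl K hω j
  have hV : ∀ g, ∀ e ∈ El R j, e = g ^ j → V g ^ j = 1 := fun g e he hge => by
    rw [← map_pow, ← hge]
    have : f e = 1 := Subtype.ext (hT e he)
    simp only [V, MonoidHom.comp_apply, this, map_one]
  let _ : CommGroup (Subgroup.center T.π.range) :=
    { (inferInstance : Group (Subgroup.center T.π.range)) with
      mul_comm := fun a b => Subtype.ext (b.2.comm a).symm }
  have hk := h (Subgroup.center T.π.range) V
    (fun r => hV _ _ (e12_mem_El j r) (e12_nat_mul j r))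
    (fun r => hV _ _ (e21_mem_El j r) (e21_nat_mul j r))
  refine ⟨(Subgroup.center T.π.range).index * j * M, ?_, fun g => ?_⟩
  · exact Nat.mul_pos (Nat.mul_pos (Nat.pos_of_ne_zero h3.index_ne_zero) hj) hM
  · have h4 := congrArg (fun x : Subgroup.center T.π.range => ((x : T.π.range) : H ≃ₗᵢ[ℂ] H)) (hk g)
    rw [pow_mul, pow_mul]
    exact h4

/-- A representation of finite exponent in which a subgroup of finite index acts by scalars has
kernel of finite index: only finitely many scalars occur. -/
theorem ker_finiteIndex {C : Subgroup (SpecialLinearGroup (Fin 2) R)} [hC : C.FiniteIndex]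
    (hs : ∀ z ∈ C, ∃ c : ℂ, ∀ x, T.π z x = c • x) {k : ℕ} (hk : 1 ≤ k)
    (h : ∀ g, T.π g ^ k = 1) : T.π.ker.FiniteIndex := by
  have hξ : T.ξ ≠ 0 := fun h0 => by simpa [h0] using T.norm_one
  have hpow : ∀ z ∈ C, ∀ c : ℂ, (∀ x, T.π z x = c • x) → c ^ k = 1 := fun z _ c hc => by
    have h1 : ∀ n : ℕ, (T.π z ^ n) T.ξ = c ^ n • T.ξ := fun n => by
      induction n with
      | zero => simp
      | succ n ih =>
        rw [pow_succ']
        change T.π z ((T.π z ^ n) T.ξ) = _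
        rw [ih, map_smul, hc, smul_smul, ← pow_succ]
    have h2 := h1 k
    rw [h z] at h2
    have h3 : (c ^ k - 1) • T.ξ = 0 := by
      rw [sub_smul, one_smul, ← h2]; exact sub_self _
    rcases smul_eq_zero.1 h3 with h4 | h4
    · exact sub_eq_zero.1 h4
    · exact absurd h4 hξ
  let g : C →* (H ≃ₗᵢ[ℂ] H) := T.π.comp C.subtype
  have hfin : Finite g.range := by
    have hF : Set.Finite {c : ℂ | c ^ k = 1} := by
      have := (Polynomial.nthRoots k (1 : ℂ)).toFinset.finite_toSet
      refine this.subset fun c hc => ?_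
      simpa [Polynomial.mem_nthRoots hk] using hc
    choose! c hc using hs
    have : (g.range : Set (H ≃ₗᵢ[ℂ] H)).Finite := by
      have hR : (g.range : Set (H ≃ₗᵢ[ℂ] H)) = Set.range g := MonoidHom.coe_range g
      rw [hR]
      have hFs : Finite {c : ℂ | c ^ k = 1} := hF
      let φ : C → {c : ℂ | c ^ k = 1} := fun z => ⟨c z, hpow z z.2 _ (hc z z.2)⟩
      have hg : ∀ z z', φ z = φ z' → g z = g z' := fun z z' hzz => by
        have e : c z = c z' := congrArg Subtype.val hzz
        refine LinearIsometryEquiv.ext fun x => ?_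
        change T.π z x = T.π z' x
        rw [hc z z.2, hc z' z'.2, e]
      have : Set.range g ⊆ Set.range (fun s : Set.range φ => g s.2.choose) := by
        rintro _ ⟨z, rfl⟩
        refine ⟨⟨φ z, z, rfl⟩, hg _ _ ?_⟩
        exact (⟨φ z, z, rfl⟩ : Set.range φ).2.choose_spec
      exact (Set.finite_range _).subset this
    exact this
  have hker : g.ker.FiniteIndex := inferInstance
  have hsub : g.ker = T.π.ker.subgroupOf C := by
    ext z; rfl
  have hrel : T.π.ker.relIndex C ≠ 0 := by
    rw [Subgroup.relIndex, ← hsub]; exact hker.index_ne_zero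
  refine ⟨?_⟩
  rw [← Subgroup.relIndex_top_right]
  exact Subgroup.relIndex_ne_zero_trans hrel (by rw [Subgroup.relIndex_top_right]; exact hC.index_ne_zero)

/-- If the unipotent projection does not kill the trace vector, the character factors through a
finite quotient. -/
theorem factors (K : Type*) [Field K] [NumberField K] [Algebra R K] [IsFractionRing R K]
    {ω : Rˣ} (hω : ∀ n : ℕ, 1 ≤ n → ω ^ n ≠ 1) (hτ : IsExtremalCharacter T.tr)
    (hp : T.pA e12 T.ξ ≠ 0) : FactorsThroughFiniteQuotient T.tr := by
  obtain ⟨y, hy, hpy⟩ := exists_pA_vy_ne hp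
  obtain ⟨D, hDa, hDv⟩ := exists_datum hω hy
  obtain ⟨n, x, hx, h1, h2⟩ := exists_fixed (T := T) D (by rw [hDa, hDv]; exact hpy)
  rw [hDa, mem_Fx] at h1
  rw [hDv, mem_Fx] at h2
  let W : Subgroup (SpecialLinearGroup (Fin 2) R) :=
    { carrier := {g | T.π g x = x}
      one_mem' := by simp
      mul_mem' := fun {a b} ha hb => by
        rw [Set.mem_ofPred_eq] at *
        rw [π_mul, hb, ha]
      inv_mem' := fun {a} ha => by
        rw [Set.mem_ofPred_eq] at *
        conv_lhs => rw [← ha]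
        rw [π_inv_self] }
  obtain ⟨j, hj, hW⟩ := conj_El_le K hω (j₀ := n.factorial) (Nat.factorial_pos n) hy W h1
    (fun r => by
      have := h2 (-r)
      rw [mul_neg, vy, neg_neg] at this
      exact this)
  let N := Subgroup.normalClosure (El R j : Set (SpecialLinearGroup (Fin 2) R))
  have hEN : El R j ≤ N := Subgroup.subset_normalClosure
  have hNW : N ≤ W := by
    rw [show N = Subgroup.closure _ from rfl, Subgroup.closure_le]
    intro g hg
    obtain ⟨e, he, hc⟩ := Group.mem_conjugatesOfSet_iff.1 hg
    obtain ⟨γ, rfl⟩ := isConj_iff.1 hc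
    exact hW γ e he
  -- By extremality a single fixed vector makes all of `N` act trivially.
  have hT := normal_trivial hτ N hx fun g hg => hNW hg
  have hsc := fun z (hz : z ∈ Cg R (j ^ 2)) => Cg_scalar K hω hτ hj N hEN hT hz
  obtain ⟨k, hk, hexp⟩ := exists_exponent (T := T) K hω hj
    (fun g hg => LinearIsometryEquiv.ext fun y => hT g (hEN hg) y) (fun z hz => (hsc z hz).1)
  have hC := Cg_finiteIndex (R := R) (j := j ^ 2) (Nat.one_le_pow _ _ hj)
  refine ⟨T.π.ker, inferInstance, ker_finiteIndex (fun z hz => (hsc z hz).2) hk hexp, ?_⟩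
  intro g h hgh
  have : T.π g = T.π h := by
    rw [MonoidHom.mem_ker, map_mul, map_inv, inv_mul_eq_one] at hgh
    exact hgh
  rw [tr, tr, this]

end TRep

end

/-! ### Number fields and the conclusion -/

section

open Matrix
open scoped ComplexOrder

/-- A ring in a number field with infinitely many units has a unit of infinite order, since a number
field contains only finitely many roots of unity. -/
theorem exists_unit_infinite_order (K : Type*) [Field K] [NumberField K] {R : Type*} [CommRing R]
    (f : R →+* K) (hf : Function.Injective f) [hu : Infinite Rˣ] :
    ∃ ω : Rˣ, ∀ n : ℕ, 1 ≤ n → ω ^ n ≠ 1 := by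
  by_contra! h
  have hfin := NumberField.Embeddings.finite_of_norm_le K ℂ 1
  refine Set.infinite_range_of_injective (f := fun ω : Rˣ => f ω)
    (fun a b hab => Units.ext (hf hab)) (hfin.subset ?_)
  rintro _ ⟨ω, rfl⟩
  obtain ⟨n, hn, hω⟩ := h ω
  have h1 : f ω ^ n = 1 := by
    rw [← map_pow, ← Units.val_pow_eq_pow_val, hω, Units.val_one, map_one]
  refine ⟨IsIntegral.of_pow hn (by rw [h1]; exact isIntegral_one), fun φ => ?_⟩
  have h2 : φ (f ω) ^ n = 1 := by rw [← map_pow, h1, map_one]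
  have h3 : ‖φ (f ω)‖ ^ n = 1 := by rw [← norm_pow, h2, norm_one]
  exact ((pow_eq_one_iff_of_nonneg (norm_nonneg _) (by omega)).1 h3).le

/-- The image of the order `B` in the localization is a finitely generated subring, and the
elements of `S` supply the denominators. -/
theorem orderLoc_of_isLocalization {K : Type*} [Field K] (B : Subalgebra ℤ K)
    (hB : (Subalgebra.toSubmodule B).FG) (S : Submonoid B) (R : Type*) [CommRing R] [Algebra B R]
    [IsLocalization S R] : OrderLoc R := by
  have hBf : Module.Finite ℤ B := Module.Finite.of_fg hB
  refine ⟨⟨((algebraMap B R).toIntAlgHom).range, ?_, fun x => ?_⟩⟩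
  · have := (Module.Finite.fg_top (R := ℤ) (M := B)).map (algebraMap B R).toIntAlgHom.toLinearMap
    convert this using 1
    ext x
    simp
  · obtain ⟨⟨b, s⟩, h⟩ := IsLocalization.surj S x
    refine ⟨algebraMap B R s, ⟨s, rfl⟩, IsLocalization.map_units R s, ⟨b, ?_⟩⟩
    rw [mul_comm]
    exact h.symm

end

theorem character_rigidity_SL2_localization
    (K : Type*) [Field K] [NumberField K]
    (B : Subalgebra ℤ K) (hB : (Subalgebra.toSubmodule B).FG)
    [IsFractionRing B K]
    (S : Submonoid B) (hS : (0 : B) ∉ S)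
    (R : Type*) [CommRing R] [IsDomain R] [Algebra B R] [IsLocalization S R]
    (hu : Infinite Rˣ)
    (τ : Matrix.SpecialLinearGroup (Fin 2) R → ℂ)
    (hτ : IsExtremalCharacter τ) :
    FactorsThroughFiniteQuotient τ ∨
    ∀ g : Matrix.SpecialLinearGroup (Fin 2) R,
      g ∉ Subgroup.center (Matrix.SpecialLinearGroup (Fin 2) R) → τ g = 0 := by
  have hS' : S ≤ nonZeroDivisors B := le_nonZeroDivisors_of_noZeroDivisors hS
  have hunit : ∀ s : S, IsUnit (algebraMap B K s) := fun s =>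
    IsLocalization.map_units K (⟨s, hS' s.2⟩ : nonZeroDivisors B)
  let f : R →+* K := IsLocalization.lift (M := S) hunit
  let _ : Algebra R K := f.toAlgebra
  have : IsScalarTower B R K := IsScalarTower.of_algebraMap_eq fun b =>
    (IsLocalization.lift_eq hunit b).symm
  have hfrac : IsFractionRing R K :=
    IsFractionRing.isFractionRing_of_isDomain_of_isLocalization S R K
  have hinj : Function.Injective f := IsFractionRing.injective R K
  have hchar : CharZero R := ⟨fun m n h => by
    have := congrArg f h
    simpa using this⟩
  have hord : OrderLoc R := orderLoc_of_isLocalization B hB S R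
  obtain ⟨ω, hω⟩ := exists_unit_infinite_order K f hinj
  obtain ⟨H, i1, i2, i3, T, rfl⟩ := exists_TRep hτ.1
  -- The dichotomy: does `ξ` have a component that can be approximated by vectors
  -- fixed under congruence subgroups of the upper unipotent group?
  by_cases hp : T.pA e12 T.ξ = 0
  · exact Or.inr fun g hg => TRep.tr_eq_zero hp hω hg
  · exact Or.inl (TRep.factors K hω hτ hp)
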